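/- arXiv:cs/0510044 — 3 statements merged into one kernel-verified Lean document; each statement's English description precedes it below -/
import Mathlib

section
/- Fix σ > 0, α > 0, and a > 0. Then there exists a constant C > 0 such that for every N ≥ 1, setting K = ⌈αN⌉ and letting the entries s_{ia} (i ∈ [K], a ∈ [N]) be i.i.d. uniform on {+1, −1}, with probability at least 1 − C·N^{−a} the signature matrix s has the following property: for every y ∈ ℝ^N and every i ∈ [K], the limits L_i^{(∞)} = lim_{t→∞} L_i^{(t)} and G_i^{(∞)} = lim_{t→∞} G_i^{(t)} of the BP outputs exist, and G_i^{(∞)}/L_i^{(∞)} equals the i-th coordinate of the MMSE estimate x̂(y) = (σ²·I_K + S̃ᵀS̃)⁻¹·S̃ᵀ·y. -/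
open Finset Matrix

namespace BP

variable {K N : ℕ}

/-- Chip-to-user variance message λ̂_{a→i} computed from user-to-chip messages `lam`. -/
noncomputable def lamHat (σ : ℝ) (s : Fin K → Fin N → ℝ)
    (lam : Fin K → Fin N → ℝ) (a : Fin N) (i : Fin K) : ℝ :=
  σ ^ 2 + (1 / (N : ℝ)) * ∑ k ∈ Finset.univ.erase i, s k a ^ 2 / lam k a

/-- User-to-chip variance messages λ^{(t)}_{i→a}. -/
noncomputable def lam (σ : ℝ) (s : Fin K → Fin N → ℝ) : ℕ → Fin K → Fin N → ℝ
  | 0 => fun _ _ => 1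
  | t + 1 => fun i a =>
      1 + (1 / (N : ℝ)) * ∑ b ∈ Finset.univ.erase a,
        s i b ^ 2 / lamHat σ s (lam σ s t) b i

/-- Chip-to-user mean message γ̂_{a→i} computed from time-`t` messages. -/
noncomputable def gamHat (s : Fin K → Fin N → ℝ) (y : Fin N → ℝ)
    (lamt gamt : Fin K → Fin N → ℝ) (a : Fin N) (i : Fin K) : ℝ :=
  y a - (1 / Real.sqrt N) * ∑ k ∈ Finset.univ.erase i, (s k a / lamt k a) * gamt k a

/-- User-to-chip mean messages γ^{(t)}_{i→a}. -/
noncomputable def gam (σ : ℝ) (s : Fin K → Fin N → ℝ) (y : Fin N → ℝ) :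
    ℕ → Fin K → Fin N → ℝ
  | 0 => fun _ _ => 0
  | t + 1 => fun i a =>
      (1 / Real.sqrt N) * ∑ b ∈ Finset.univ.erase a,
        (s i b / lamHat σ s (lam σ s t) b i) *
          gamHat s y (lam σ s t) (gam σ s y t) b i

/-- BP output G_i^{(t)} (with the convention G_i^{(0)} = 0). -/
noncomputable def Gout (σ : ℝ) (s : Fin K → Fin N → ℝ) (y : Fin N → ℝ) :
    ℕ → Fin K → ℝ
  | 0 => fun _ => 0
  | t + 1 => fun i =>
      (1 / Real.sqrt N) * ∑ b : Fin N,
        (s i b / lamHat σ s (lam σ s t) b i) *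
          gamHat s y (lam σ s t) (gam σ s y t) b i

/-- BP output L_i^{(t)} (with the convention L_i^{(0)} = 1). -/
noncomputable def Lout (σ : ℝ) (s : Fin K → Fin N → ℝ) : ℕ → Fin K → ℝ
  | 0 => fun _ => 1
  | t + 1 => fun i =>
      1 + (1 / (N : ℝ)) * ∑ b : Fin N, s i b ^ 2 / lamHat σ s (lam σ s t) b i

end BP
/-- Convert a Boolean matrix into a ±1 signature matrix. -/
def toSign {K N : ℕ} (s : Fin K → Fin N → Bool) : Fin K → Fin N → ℝ :=
  fun i a => if s i a then 1 else -1

/-- The N×K matrix S̃ with entries S̃_{ai} = s_{ia}/√N. -/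
noncomputable def Stilde {K N : ℕ} (s : Fin K → Fin N → ℝ) : Matrix (Fin N) (Fin K) ℝ :=
  Matrix.of fun a i => s i a / Real.sqrt N

/-- The MMSE estimate x̂(y) = (σ²·I + S̃ᵀS̃)⁻¹ S̃ᵀ y. -/
noncomputable def mmseEstimate {K N : ℕ} (σ : ℝ) (s : Fin K → Fin N → ℝ)
    (y : Fin N → ℝ) : Fin K → ℝ :=
  ((σ ^ 2 • (1 : Matrix (Fin K) (Fin K) ℝ) + (Stilde s)ᵀ * Stilde s)⁻¹).mulVec
    ((Stilde s)ᵀ.mulVec y)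

namespace BPP
section poly
variable {ι : Type*} [Fintype ι] [DecidableEq ι]

noncomputable def sg (b : Bool) : ℝ := if b then 1 else -1

noncomputable def ev (s : ι → Bool) : MvPolynomial ι ℕ →+* ℝ :=
  MvPolynomial.eval₂Hom (Nat.castRingHom ℝ) (fun e => sg (s e))

noncomputable def ex (F : MvPolynomial ι ℕ) : ℝ :=
  (∑ s : ι → Bool, ev s F) / 2 ^ (Fintype.card ι)

lemma ex_add (F G : MvPolynomial ι ℕ) : ex (F + G) = ex F + ex G := by
  simp [ex, Finset.sum_add_distrib, add_div]

lemma ex_zero : ex (0 : MvPolynomial ι ℕ) = 0 := by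
  simp [ex]

lemma ex_sum {κ : Type*} (t : Finset κ) (F : κ → MvPolynomial ι ℕ) :
    ex (∑ k ∈ t, F k) = ∑ k ∈ t, ex (F k) := by
  classical
  induction t using Finset.induction_on with
  | empty => simp [ex_zero]
  | insert a t h ih => rw [Finset.sum_insert h, Finset.sum_insert h, ex_add, ih]

lemma ex_natmul (n : ℕ) (F : MvPolynomial ι ℕ) : ex ((n : MvPolynomial ι ℕ) * F) = n * ex F := by
  simp [ex, ← Finset.mul_sum, mul_div_assoc]

lemma ex_monomial (d : ι →₀ ℕ) (c : ℕ) :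
    ex (MvPolynomial.monomial d c) = c * (if ∀ e, Even (d e) then 1 else 0) := by
  have h1 : ∀ s : ι → Bool, ev s (MvPolynomial.monomial d c) = c * ∏ e, sg (s e) ^ d e := by
    intro s
    simp only [ev, MvPolynomial.coe_eval₂Hom, MvPolynomial.eval₂_monomial]
    rw [Finsupp.prod_fintype _ _ (by simp)]
    simp
  unfold ex
  simp only [h1]
  rw [← Finset.mul_sum]
  have h2 : ∑ s : ι → Bool, ∏ e, sg (s e) ^ d e = ∏ e, ∑ b : Bool, sg b ^ d e := by
    rw [Finset.prod_univ_sum, Fintype.piFinset_univ]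
  rw [h2, mul_div_assoc]
  congr 1
  split_ifs with h
  · have : ∀ e, ∑ b : Bool, sg b ^ d e = 2 := by
      intro e
      rw [Fintype.sum_bool]; simp only [sg, (h e).neg_one_pow]; norm_num [(h e).neg_one_pow]
    simp only [this]; simp
  · push Not at h
    obtain ⟨e, he⟩ := h
    rw [Finset.prod_eq_zero (Finset.mem_univ e)]
    · simp
    · rw [Nat.not_even_iff_odd] at he
      simp [sg, he.neg_one_pow]

lemma ex_nonneg (F : MvPolynomial ι ℕ) : 0 ≤ ex F := by
  induction F using MvPolynomial.induction_on' with
  | monomial d c => rw [ex_monomial]; positivity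
  | add p q hp hq => rw [ex_add]; positivity

lemma ex_X_mul (e : ι) (F : MvPolynomial ι ℕ) :
    ex (MvPolynomial.X e * F) ≤ ex (MvPolynomial.pderiv e F) := by
  induction F using MvPolynomial.induction_on' with
  | monomial d c =>
    rw [MvPolynomial.pderiv_monomial, MvPolynomial.X, MvPolynomial.monomial_mul, ex_monomial,
      ex_monomial]
    split_ifs with h1 h2 h2
    · have := h1 e
      simp only [Finsupp.add_apply, Finsupp.single_eq_same] at this
      have h3 : 1 ≤ d e := by
        rcases Nat.eq_zero_or_pos (d e) with h | h
        · rw [h] at this; simp at this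
        · exact h
      push_cast
      have h4 : (1:ℝ) ≤ d e := by exact_mod_cast h3
      have h5 : (0:ℝ) ≤ c := by positivity
      nlinarith
    · exfalso
      apply h2
      intro f
      have := h1 f
      simp only [Finsupp.add_apply, Finsupp.tsub_apply] at this ⊢
      by_cases hf : f = e
      · subst hf
        simp only [Finsupp.single_eq_same] at this ⊢
        grind
      · rw [Finsupp.single_eq_of_ne hf] at this ⊢
        simpa using this
    · simp; positivity
    · simp
  | add p q hp hq => rw [mul_add, ex_add, map_add, ex_add]; linarith

lemma ex_mul_monomial (d d' : ι →₀ ℕ) (c c' : ℕ) (F G : MvPolynomial ι ℕ)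
    (hF : F = MvPolynomial.monomial d c) (hG : G = MvPolynomial.monomial d' c') :
    ex (F * G) ≤ ex F * ex G +
      ∑ e, ex (MvPolynomial.pderiv e F * MvPolynomial.pderiv e G) := by
  have hnn : 0 ≤ ∑ e, ex (MvPolynomial.pderiv e F * MvPolynomial.pderiv e G) :=
    Finset.sum_nonneg (fun _ _ => ex_nonneg _)
  have hFG : 0 ≤ ex F * ex G := mul_nonneg (ex_nonneg _) (ex_nonneg _)
  have e0 : ex (F * G) = (c * c' : ℕ) * (if ∀ e, Even ((d + d') e) then 1 else 0) := by
    rw [hF, hG, MvPolynomial.monomial_mul, ex_monomial]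
  by_cases hdd : ∀ e, Even ((d + d') e)
  swap
  · rw [if_neg hdd, mul_zero] at e0
    linarith
  rw [if_pos hdd, mul_one] at e0
  push_cast at e0
  rw [e0]
  by_cases hd : ∀ e, Even (d e)
  · have hd' : ∀ e, Even (d' e) := by
      intro e
      have h1 := hdd e
      have h2 := hd e
      simp only [Finsupp.add_apply] at h1
      exact (Nat.even_add.mp h1).mp h2
    have : ex F * ex G = c * c' := by
      rw [hF, hG, ex_monomial, ex_monomial, if_pos hd, if_pos hd', mul_one, mul_one]
    linarith
  · push Not at hd
    obtain ⟨e, he⟩ := hd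
    have h0 := hdd e
    simp only [Finsupp.add_apply] at h0
    have hde : Odd (d e) := Nat.not_even_iff_odd.mp he
    have hde' : Odd (d' e) := by
      rw [← Nat.not_even_iff_odd]
      intro h
      exact he ((Nat.even_add.mp h0).mpr h)
    have hp1 : (1:ℝ) ≤ d e := by exact_mod_cast hde.pos
    have hp2 : (1:ℝ) ≤ d' e := by exact_mod_cast hde'.pos
    have key : ex (MvPolynomial.pderiv e F * MvPolynomial.pderiv e G)
        = (c * d e) * (c' * d' e) := by
      rw [hF, hG, MvPolynomial.pderiv_monomial, MvPolynomial.pderiv_monomial,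
        MvPolynomial.monomial_mul, ex_monomial, if_pos]
      · push_cast; ring
      · intro f
        have := hdd f
        simp only [Finsupp.add_apply, Finsupp.tsub_apply] at this ⊢
        by_cases hf : f = e
        · subst hf
          simp only [Finsupp.single_eq_same]
          obtain ⟨u, hu⟩ := hde
          obtain ⟨v, hv⟩ := hde'
          rw [hu, hv]
          exact ⟨u + v, by omega⟩
        · rw [Finsupp.single_eq_of_ne hf]
          simpa using this
    have h1 : (c:ℝ) * c' ≤ (c * d e) * (c' * d' e) := by
      have hc : (c:ℝ) ≤ c * d e := le_mul_of_one_le_right (by positivity) hp1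
      have hc' : (c':ℝ) ≤ c' * d' e := le_mul_of_one_le_right (by positivity) hp2
      exact mul_le_mul hc hc' (by positivity) (by positivity)
    have h2 := Finset.single_le_sum (f := fun e => ex (MvPolynomial.pderiv e F *
      MvPolynomial.pderiv e G)) (fun _ _ => ex_nonneg _) (Finset.mem_univ e)
    simp only [key] at h2
    linarith

lemma ex_mul (F G : MvPolynomial ι ℕ) :
    ex (F * G) ≤ ex F * ex G +
      ∑ e, ex (MvPolynomial.pderiv e F * MvPolynomial.pderiv e G) := by
  induction F using MvPolynomial.induction_on' with
  | monomial d c =>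
    induction G using MvPolynomial.induction_on' with
    | monomial d' c' => exact ex_mul_monomial d d' c c' _ _ rfl rfl
    | add p q hp hq =>
      simp only [mul_add, ex_add, map_add, Finset.sum_add_distrib]
      linarith
  | add p q hp hq =>
    simp only [add_mul, ex_add, map_add, Finset.sum_add_distrib]
    linarith
end poly
end BPP

namespace BPP
section mat
set_option linter.unusedSectionVars false
variable {I J : Type*} [Fintype I] [DecidableEq I] [Fintype J] [DecidableEq J]

noncomputable def Sm (I J : Type*) : Matrix I J (MvPolynomial (I × J) ℕ) :=
  Matrix.of fun i a => MvPolynomial.X (i, a)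

noncomputable def Wm (I J : Type*) [Fintype J] : Matrix I I (MvPolynomial (I × J) ℕ) :=
  Sm I J * (Sm I J)ᵀ

noncomputable def pd (e : I × J) {m n : Type*} (A : Matrix m n (MvPolynomial (I × J) ℕ)) :
    Matrix m n (MvPolynomial (I × J) ℕ) := Matrix.of fun x y => MvPolynomial.pderiv e (A x y)

lemma pd_mul (e : I × J) {l m n : Type*} [Fintype m]
    (A : Matrix l m (MvPolynomial (I × J) ℕ)) (B : Matrix m n (MvPolynomial (I × J) ℕ)) :
    pd e (A * B) = pd e A * B + A * pd e B := by
  ext1 x y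
  simp only [pd, Matrix.of_apply, Matrix.mul_apply, Matrix.add_apply, map_sum, Derivation.leibniz,
    smul_eq_mul, Finset.sum_add_distrib]
  rw [add_comm]
  congr 1
  exact Finset.sum_congr rfl (fun _ _ => mul_comm _ _)

lemma pd_one (e : I × J) {m : Type*} [DecidableEq m] :
    pd e (1 : Matrix m m (MvPolynomial (I × J) ℕ)) = 0 := by
  ext1 x y
  simp only [pd, Matrix.of_apply, Matrix.one_apply, Matrix.zero_apply]
  split_ifs <;> simp

lemma pd_pow (e : I × J) {m : Type*} [Fintype m] [DecidableEq m]
    (A : Matrix m m (MvPolynomial (I × J) ℕ)) (q : ℕ) :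
    pd e (A ^ q) = ∑ p ∈ range q, A ^ p * pd e A * A ^ (q - 1 - p) := by
  induction q with
  | zero => simp [pd_one]
  | succ q ih =>
    rw [pow_succ, pd_mul, ih, Finset.sum_range_succ, Finset.sum_mul]
    have : ∀ p ∈ range q, A ^ p * pd e A * A ^ (q - 1 - p) * A
        = A ^ p * pd e A * A ^ (q + 1 - 1 - p) := by
      intro p hp
      rw [Finset.mem_range] at hp
      rw [mul_assoc, ← pow_succ, show q - 1 - p + 1 = q + 1 - 1 - p by omega]
    rw [Finset.sum_congr rfl this, show q + 1 - 1 - q = 0 by omega, pow_zero, mul_one]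

lemma pd_S (i : I) (a : J) : pd (i, a) (Sm I J) = Matrix.single i a (1 : MvPolynomial (I × J) ℕ) := by
  ext1 x y
  simp only [pd, Sm, Matrix.of_apply, MvPolynomial.pderiv_X, Matrix.single_apply, Pi.single_apply,
    Prod.mk.injEq]
  congr 1
  simp [eq_comm]

lemma pd_St (i : I) (a : J) : pd (i, a) (Sm I J)ᵀ = Matrix.single a i (1 : MvPolynomial (I × J) ℕ) := by
  have : pd (i, a) (Sm I J)ᵀ = (pd (i, a) (Sm I J))ᵀ := rfl
  rw [this, pd_S, Matrix.transpose_single]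

lemma pd_W (i : I) (a : J) : pd (i, a) (Wm I J) =
    Matrix.single i a (1 : MvPolynomial (I × J) ℕ) * (Sm I J)ᵀ
      + Sm I J * Matrix.single a i (1 : MvPolynomial (I × J) ℕ) := by
  rw [Wm, pd_mul, pd_S, pd_St]

lemma W_symm : (Wm I J)ᵀ = Wm I J := by
  simp [Wm, Matrix.transpose_mul]

lemma Wpow_symm (q : ℕ) : ((Wm I J) ^ q)ᵀ = (Wm I J) ^ q := by
  rw [Matrix.transpose_pow, W_symm]

lemma pd_trace (e : I × J) {m : Type*} [Fintype m] (A : Matrix m m (MvPolynomial (I × J) ℕ)) :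
    MvPolynomial.pderiv e A.trace = (pd e A).trace := by
  simp [Matrix.trace, pd]

lemma trace_mul_single {m n : Type*} [Fintype m] [DecidableEq m] [Fintype n] [DecidableEq n]
   {R : Type*} [CommSemiring R]
   (A : Matrix m n R) (x : n) (y : m) :
    (A * Matrix.single x y (1 : R)).trace = A y x := by
  simp [Matrix.trace, Matrix.mul_apply, Matrix.single_apply, ite_and]

lemma pd_trace_pow (i : I) (a : J) (q : ℕ) :
    MvPolynomial.pderiv (i, a) ((Wm I J) ^ q).trace
      = ((2 * q : ℕ) : MvPolynomial (I × J) ℕ) * ((Wm I J) ^ (q - 1) * Sm I J) i a := by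
  rw [pd_trace, pd_pow, Matrix.trace_sum]
  have : ∀ p ∈ range q, ((Wm I J) ^ p * pd (i,a) (Wm I J) * (Wm I J) ^ (q - 1 - p)).trace
      = 2 * ((Wm I J) ^ (q - 1) * Sm I J) i a := by
    intro p hp
    rw [Finset.mem_range] at hp
    rw [Matrix.trace_mul_comm, ← mul_assoc, ← pow_add, pd_W, mul_add, Matrix.trace_add,
      show q - 1 - p + p = q - 1 by omega, two_mul]
    congr 1
    · rw [← Matrix.mul_assoc, Matrix.trace_mul_comm, ← Matrix.mul_assoc, trace_mul_single]
      rw [← Matrix.transpose_apply (_ * _), Matrix.transpose_mul, Matrix.transpose_transpose,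
        Wpow_symm]
    · rw [← Matrix.mul_assoc, trace_mul_single]
  rw [Finset.sum_congr rfl this]
  simp
  ring

lemma sum_sq_eq (p r : ℕ) : ∑ i : I, ∑ a : J,
    ((Wm I J) ^ p * Sm I J) i a * ((Wm I J) ^ r * Sm I J) i a = ((Wm I J) ^ (p + r + 1)).trace := by
  have : (Wm I J) ^ (p + r + 1) = (Wm I J) ^ p * Sm I J * ((Wm I J) ^ r * Sm I J)ᵀ := by
    rw [Matrix.transpose_mul, Wpow_symm, Matrix.mul_assoc, ← Matrix.mul_assoc (Sm I J),
      show Sm I J * (Sm I J)ᵀ = Wm I J from rfl, ← pow_succ', ← pow_add]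
    rfl
  rw [this]
  simp only [Matrix.trace, Matrix.diag, Matrix.mul_apply (M := Wm I J ^ p * Sm I J),
    Matrix.transpose_apply]

noncomputable def mo (I J : Type*) [Fintype I] [DecidableEq I] [Fintype J] [DecidableEq J]
  (q : ℕ) : ℝ := ex ((Wm I J) ^ q).trace

lemma mo_nonneg (q : ℕ) : 0 ≤ mo I J q := ex_nonneg _

lemma ex_one : ex (1 : MvPolynomial (I × J) ℕ) = 1 := by
  simp [ex]

lemma mo_zero : mo I J 0 = Fintype.card I := by
  have := ex_natmul (ι := I × J) (Fintype.card I) 1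
  rw [ex_one] at this
  simpa [mo, Matrix.trace_one] using this

lemma mo_two (j l : ℕ) : ex (((Wm I J) ^ j).trace * ((Wm I J) ^ l).trace) ≤
    mo I J j * mo I J l + 4 * j * l * mo I J (j + l - 1) := by
  refine (ex_mul _ _).trans ?_
  refine add_le_add le_rfl (le_of_eq ?_)
  rw [← ex_sum, Fintype.sum_prod_type]
  rcases Nat.eq_zero_or_pos j with rfl | hj
  · simp [pd_trace_pow, ex_zero]
  rcases Nat.eq_zero_or_pos l with rfl | hl
  · simp [pd_trace_pow, ex_zero]
  have : ∑ i : I, ∑ a : J, MvPolynomial.pderiv (i, a) ((Wm I J) ^ j).trace *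
      MvPolynomial.pderiv (i, a) ((Wm I J) ^ l).trace =
      ((4 * j * l : ℕ) : MvPolynomial (I × J) ℕ) * ((Wm I J) ^ (j + l - 1)).trace := by
    rw [show j + l - 1 = (j - 1) + (l - 1) + 1 by omega, ← sum_sq_eq, Finset.mul_sum]
    refine Finset.sum_congr rfl fun i _ => ?_
    rw [Finset.mul_sum]
    refine Finset.sum_congr rfl fun a _ => ?_
    rw [pd_trace_pow, pd_trace_pow]
    push_cast
    ring
  rw [this, ex_natmul]
  push_cast
  rfl

lemma mul_single_mul_apply {l m n k : Type*} [Fintype m] [DecidableEq m] [Fintype n] [DecidableEq n]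
   {R : Type*} [CommSemiring R]
   (A : Matrix l m R) (x : m) (y : n) (B : Matrix n k R) (u : l) (v : k) :
    (A * Matrix.single x y (1 : R) * B) u v = A u x * B y v := by
  simp [Matrix.mul_apply, Matrix.single_apply, ite_and]

lemma mo_rec (q : ℕ) : mo I J (q + 1) ≤ (Fintype.card J + q) * mo I J q
    + ∑ p ∈ range q, (mo I J p * mo I J (q - p) + 4 * p * (q - p : ℕ) * mo I J (q - 1)) := by
  have h1 : ((Wm I J) ^ (q + 1)).trace = ∑ i : I, ∑ a : J,
      MvPolynomial.X (i, a) * ((Wm I J) ^ q * Sm I J) i a := by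
    have := sum_sq_eq (I := I) (J := J) 0 q
    rw [zero_add] at this
    rw [← this]
    simp [Sm]
  have h2 : ∀ i a, MvPolynomial.pderiv (i, a) (((Wm I J) ^ q * Sm I J) i a) =
      ((Wm I J) ^ q) i i + ∑ p ∈ range q, (((Wm I J) ^ p) i i *
         ((Sm I J)ᵀ * (Wm I J) ^ (q - 1 - p) * Sm I J) a a
        + ((Wm I J) ^ p * Sm I J) i a * ((Wm I J) ^ (q - 1 - p) * Sm I J) i a) := by
    intro i a
    have : MvPolynomial.pderiv (i, a) (((Wm I J) ^ q * Sm I J) i a) =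
      pd (i, a) ((Wm I J) ^ q * Sm I J) i a := rfl
    rw [this, pd_mul, pd_pow, pd_S, add_comm, Matrix.add_apply]
    congr 1
    · have := mul_single_mul_apply ((Wm I J) ^ q) i a (1 : Matrix J J _) i a
      simpa using this
    · rw [Matrix.sum_mul, Matrix.sum_apply]
      refine Finset.sum_congr rfl fun p _ => ?_
      rw [pd_W, Matrix.mul_add, Matrix.add_mul, Matrix.add_mul, Matrix.add_apply]
      congr 1
      · rw [← mul_single_mul_apply ((Wm I J) ^ p)]
        simp only [Matrix.mul_assoc]
      · rw [← mul_single_mul_apply ((Wm I J) ^ p * Sm I J)]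
        simp only [Matrix.mul_assoc]
  have h3 : ∑ i : I, ∑ a : J, MvPolynomial.pderiv (i, a) (((Wm I J) ^ q * Sm I J) i a) =
      ((Fintype.card J : ℕ) : MvPolynomial (I × J) ℕ) * ((Wm I J) ^ q).trace
      + ∑ p ∈ range q, (((Wm I J) ^ p).trace * ((Wm I J) ^ (q - p)).trace +
         ((Wm I J) ^ q).trace) := by
    simp only [h2, Finset.sum_add_distrib]
    congr 1
    · simp [Matrix.trace, Finset.mul_sum]
    · congr 1
      · rw [Finset.sum_congr rfl (fun i _ => Finset.sum_comm), Finset.sum_comm]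
        refine Finset.sum_congr rfl fun p hp => ?_
        rw [Finset.mem_range] at hp
        have : ((Wm I J) ^ (q - p)).trace =
            ((Sm I J)ᵀ * (Wm I J) ^ (q - 1 - p) * Sm I J).trace := by
          rw [Matrix.trace_mul_comm, ← Matrix.mul_assoc, show Sm I J * (Sm I J)ᵀ = Wm I J from rfl,
            ← pow_succ']
          congr 2
          omega
        rw [this]
        simp only [Matrix.trace, Matrix.diag, Finset.sum_mul_sum]
      · rw [Finset.sum_congr rfl (fun i _ => Finset.sum_comm), Finset.sum_comm]
        refine Finset.sum_congr rfl fun p hp => ?_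
        rw [Finset.mem_range] at hp
        rw [sum_sq_eq]
        congr 2
        omega
  have h4 : mo I J (q + 1) ≤ ex (∑ i : I, ∑ a : J,
      MvPolynomial.pderiv (i, a) (((Wm I J) ^ q * Sm I J) i a)) := by
    rw [mo, h1]
    simp only [ex_sum]
    exact Finset.sum_le_sum fun i _ => Finset.sum_le_sum fun a _ => ex_X_mul _ _
  refine h4.trans ?_
  rw [h3, ex_add, ex_natmul, ex_sum]
  have h5 : ∑ p ∈ range q, ex (((Wm I J) ^ p).trace * ((Wm I J) ^ (q - p)).trace +
         ((Wm I J) ^ q).trace) ≤ ∑ p ∈ range q, ((mo I J p * mo I J (q - p)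
          + 4 * p * (q - p : ℕ) * mo I J (q - 1)) + mo I J q) := by
    refine Finset.sum_le_sum fun p hp => ?_
    rw [Finset.mem_range] at hp
    rw [ex_add]
    refine add_le_add ?_ le_rfl
    have := mo_two (I := I) (J := J) p (q - p)
    rwa [show p + (q - p) - 1 = q - 1 by omega] at this
  rw [Finset.sum_add_distrib (g := fun _ => mo I J q)] at h5
  simp only [Finset.sum_const, Finset.card_range, nsmul_eq_mul] at h5
  have : ex ((Wm I J) ^ q).trace = mo I J q := rfl
  rw [this]
  linarith
end mat

/-- solution of the recursion -/
lemma rec_bound (m : ℕ → ℝ) (n k : ℝ) (Q : ℕ) (hn : 1 ≤ n) (hk : 1 ≤ k)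
    (hm : ∀ q, 0 ≤ m q) (h0 : m 0 = k)
    (hrec : ∀ q, m (q + 1) ≤ (n + q) * m q
    + ∑ p ∈ range q, (m p * m (q - p) + 4 * p * (q - p : ℕ) * m (q - 1)))
    (A : ℝ) (hA : A = n + Q + 4 * Q ^ 3) (q : ℕ) (hq : q ≤ Q) :
    m q ≤ (A + 3 * k) / 2 * (2 * (A + k)) ^ q := by
  have hA1 : 1 ≤ A := by
    have : (0:ℝ) ≤ Q + 4 * Q ^ 3 := by positivity
    linarith
  set ρ : ℝ := 2 * (A + k) with hρ
  have hρ1 : 1 ≤ ρ := by linarith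
  have hρ0 : 0 < ρ := by linarith
  set u : ℕ → ℝ := fun q => m q / ρ ^ q with hu
  have hu0 : ∀ q, 0 ≤ u q := fun q => div_nonneg (hm q) (by positivity)
  have hmu : ∀ q, m q = u q * ρ ^ q := fun q => by
    simp only [hu]; field_simp
  have huk : u 0 = k := by simp [hu, h0]
  -- one step
  have step : ∀ q, q + 1 ≤ Q → ρ * u (q + 1) ≤ (n + Q) * u q + ∑ p ∈ range q, u p * u (q - p)
      + 4 * Q ^ 3 * (if q = 0 then 0 else u (q - 1)) := by
    intro q hq
    have h := hrec q
    rw [hmu (q + 1)] at h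
    have hpow : 0 < ρ ^ q := by positivity
    have hqQ : (q : ℝ) ≤ Q := by exact_mod_cast (by omega : q ≤ Q)
    have e1 : (n + q) * m q ≤ (n + Q) * u q * ρ ^ q := by
      rw [hmu q, ← mul_assoc]
      gcongr
      exact hu0 q
    have e2 : ∑ p ∈ range q, (m p * m (q - p) + 4 * p * (q - p : ℕ) * m (q - 1)) ≤
       (∑ p ∈ range q, u p * u (q - p)) * ρ ^ q +
        4 * Q ^ 3 * (if q = 0 then 0 else u (q - 1)) * ρ ^ q := by
      rw [Finset.sum_add_distrib]
      refine add_le_add (le_of_eq ?_) ?_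
      · rw [Finset.sum_mul]
        refine Finset.sum_congr rfl fun p hp => ?_
        rw [Finset.mem_range] at hp
        rw [hmu p, hmu (q - p), show ρ ^ q = ρ ^ p * ρ ^ (q - p) by rw [← pow_add]; congr 1; omega]
        ring
      · rcases Nat.eq_zero_or_pos q with rfl | hq0
        · simp
        rw [if_neg (by omega)]
        have : ∀ p ∈ range q, (4 * p * (q - p : ℕ) * m (q - 1) : ℝ) ≤ 4 * Q * Q * (u (q-1) * ρ ^ q) := by
          intro p hp
          rw [Finset.mem_range] at hp
          have a1 : (p : ℝ) ≤ Q := by exact_mod_cast (by omega : p ≤ Q)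
          have a2 : ((q - p : ℕ) : ℝ) ≤ Q := by exact_mod_cast (by omega : q - p ≤ Q)
          have a3 : m (q - 1) ≤ u (q - 1) * ρ ^ q := by
            rw [hmu (q - 1)]
            have := hu0 (q - 1)
            gcongr
            omega
          have := hm (q - 1)
          gcongr
        refine (Finset.sum_le_sum this).trans ?_
        rw [Finset.sum_const, Finset.card_range, nsmul_eq_mul]
        have : 0 ≤ u (q-1) * ρ ^ q := mul_nonneg (hu0 _) hpow.le
        calc (q:ℝ) * (4 * Q * Q * (u (q-1) * ρ ^ q)) ≤ Q * (4 * Q * Q * (u (q-1) * ρ ^ q)) := by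
              gcongr
          _ = _ := by ring
    have e3 : (ρ * u (q + 1)) * ρ ^ q ≤ ((n + Q) * u q + ∑ p ∈ range q, u p * u (q - p)
      + 4 * Q ^ 3 * (if q = 0 then 0 else u (q - 1))) * ρ ^ q := by
      rw [pow_succ] at h
      nlinarith
    exact le_of_mul_le_mul_right e3 hpow
  -- partial sums
  set F : ℕ → ℝ := fun q => ∑ p ∈ range (q + 1), u p with hF
  have hFk : ∀ q, k ≤ F q := by
    intro q
    rw [← huk]
    exact Finset.single_le_sum (f := u) (fun p _ => hu0 p) (Finset.mem_range.mpr (by omega))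
  have main : ∀ q, q ≤ Q → F q ≤ (A + 3 * k) / 2 := by
    intro q
    induction q with
    | zero => intro _; simp only [hF]; simp [huk]; linarith
    | succ q ih =>
      intro hq
      have ihq := ih (by omega)
      have hs : F (q + 1) = k + ∑ p ∈ range (q + 1), u (p + 1) := by
        simp only [hF]
        rw [Finset.sum_range_succ', huk, add_comm]
      have hstep : ρ * ∑ p ∈ range (q + 1), u (p + 1) ≤ ∑ x ∈ range (q + 1), ((n + Q) * u x
          + ∑ p ∈ range x, u p * u (x - p) + 4 * Q ^ 3 * (if x = 0 then 0 else u (x - 1))) := by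
        rw [Finset.mul_sum]
        refine Finset.sum_le_sum fun x hx => ?_
        rw [Finset.mem_range] at hx
        exact step x (by omega)
      rw [Finset.sum_add_distrib, Finset.sum_add_distrib, ← Finset.mul_sum, ← Finset.mul_sum] at hstep
      have c3 : ∑ x ∈ range (q + 1), (if x = 0 then 0 else u (x - 1)) ≤ F q := by
        rw [Finset.sum_range_succ']
        simp only [hF, Finset.sum_range_succ _ q]
        simp
        exact hu0 q
      have c2 : ∑ x ∈ range (q + 1), ∑ p ∈ range x, u p * u (x - p) ≤ F q * (F q - k) := by
        have d1 : F q - k = ∑ l ∈ range q, u (l + 1) := by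
          simp only [hF]
          rw [Finset.sum_range_succ', huk]; ring
        rw [d1]
        have d2 : F q * ∑ l ∈ range q, u (l + 1) =
            ∑ y ∈ range (q + 1) ×ˢ range q, u y.1 * u (y.2 + 1) := by
          rw [Finset.sum_product]
          simp only [hF, Finset.sum_mul_sum]
        rw [d2, Finset.sum_sigma']
        set g : (_ : ℕ) × ℕ → ℕ × ℕ := fun y => (y.2, y.1 - y.2 - 1) with hg
        set T := (range (q + 1)).sigma (fun x => range x) with hT
        have i1 : ∑ y ∈ T.image g, u y.1 * u (y.2 + 1) = ∑ y ∈ T, u y.2 * u (y.1 - y.2) := by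
          rw [Finset.sum_image]
          · refine Finset.sum_congr rfl fun y hy => ?_
            simp only [hT, Finset.mem_sigma, Finset.mem_range] at hy
            simp only [hg]
            rw [show y.1 - y.2 - 1 + 1 = y.1 - y.2 by omega]
          · rintro ⟨x, p⟩ hx ⟨x', p'⟩ hx' h
            simp only [hT, Finset.coe_sigma, Set.mem_sigma_iff, Finset.mem_coe,
              Finset.mem_range] at hx hx'
            simp only [hg, Prod.mk.injEq] at h
            obtain ⟨rfl, h⟩ := h
            have : x = x' := by omega
            rw [this]
        rw [← i1]
        refine Finset.sum_le_sum_of_subset_of_nonneg ?_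
          (fun y _ _ => mul_nonneg (hu0 _) (hu0 _))
        intro y hy
        simp only [hT, Finset.mem_image, Finset.mem_sigma, Finset.mem_range] at hy
        obtain ⟨z, hz, rfl⟩ := hy
        simp only [hg, Finset.mem_product, Finset.mem_range]
        omega
      have hFnn : 0 ≤ F q := by linarith [hFk q]
      have c4 : ρ * ∑ p ∈ range (q + 1), u (p + 1) ≤ F q * (A + F q - k) := by
        have : 4 * (Q:ℝ) ^ 3 * ∑ x ∈ range (q + 1), (if x = 0 then 0 else u (x - 1)) ≤
          4 * (Q:ℝ) ^ 3 * F q := by gcongr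
        have e : ∑ p ∈ range (q + 1), u p = F q := rfl
        rw [e] at hstep
        rw [hA]
        nlinarith
      have hk' := hFk q
      have c5 : F q * (A + F q - k) ≤ (A + 3 * k) / 2 * (A + (A + 3 * k) / 2 - k) := by
        apply mul_le_mul ihq _ _ _ <;> linarith
      have c6 : ρ * F (q + 1) ≤ ρ * ((A + 3 * k) / 2) := by
        rw [hs, mul_add]
        rw [hρ] at c4 ⊢
        nlinarith [sq_nonneg (A - k)]
      exact le_of_mul_le_mul_left c6 hρ0
  have := main q hq
  have h7 : u q ≤ F q := Finset.single_le_sum (f := u) (fun p _ => hu0 p) (Finset.mem_range.mpr (by omega))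
  rw [hmu q]
  have : u q ≤ (A + 3 * k) / 2 := h7.trans this
  gcongr
end BPP

namespace BPP

lemma seq_contr (a ε : ℕ → ℝ) (κ : ℝ) (hκ : κ < 1) (hκ0 : 0 ≤ κ) (ha : ∀ t, 0 ≤ a t)
    (hε : Filter.Tendsto ε Filter.atTop (nhds 0))
    (hrec : ∀ t, a (t + 1) ≤ (κ + ε t) * a t + ε t) :
    Filter.Tendsto a Filter.atTop (nhds 0) := by
  rw [Metric.tendsto_atTop]
  intro η hη
  set κ' := (1 + κ) / 2 with hκ'
  have h1 : κ' < 1 := by linarith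
  have h2 : 0 ≤ κ' := by linarith
  have hm : 0 < min ((1 - κ) / 2) ((1 - κ') * (η / 2)) := by
    apply lt_min
    · linarith
    · apply mul_pos <;> linarith
  obtain ⟨T, hT⟩ := (Metric.tendsto_atTop.mp hε) _ hm
  have step : ∀ t ≥ T, a (t + 1) - η / 2 ≤ κ' * (a t - η / 2) := by
    intro t ht
    have := hT t ht
    rw [Real.dist_eq, sub_zero] at this
    have h3 := lt_of_le_of_lt (le_abs_self _) this
    have h4 : ε t < (1 - κ) / 2 := lt_of_lt_of_le h3 (min_le_left _ _)
    have h5 : ε t < (1 - κ') * (η / 2) := lt_of_lt_of_le h3 (min_le_right _ _)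
    have h6 : (κ + ε t) * a t ≤ κ' * a t := by
      apply mul_le_mul_of_nonneg_right _ (ha t)
      linarith
    have := hrec t
    linarith
  have it : ∀ m, a (T + m) - η / 2 ≤ κ' ^ m * |a T - η / 2| := by
    intro m
    induction m with
    | zero => simpa using le_abs_self (a T - η / 2)
    | succ m ih =>
      have := step (T + m) (by omega)
      rw [← add_assoc, pow_succ']
      calc _ ≤ κ' * (a (T + m) - η / 2) := this
        _ ≤ κ' * (κ' ^ m * |a T - η / 2|) := by gcongr
        _ = _ := by ring
  have hlim : Filter.Tendsto (fun m => κ' ^ m * |a T - η / 2|) Filter.atTop (nhds 0) := by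
    simpa using (tendsto_pow_atTop_nhds_zero_of_lt_one h2 h1).mul_const (|a T - η / 2|)
  obtain ⟨M, hM⟩ := (Metric.tendsto_atTop.mp hlim) (η / 2) (by linarith)
  refine ⟨T + M, fun t ht => ?_⟩
  obtain ⟨m, rfl⟩ : ∃ m, t = T + m := ⟨t - T, by omega⟩
  have h7 := hM m (by omega)
  rw [Real.dist_eq, sub_zero] at h7
  have := lt_of_le_of_lt (le_abs_self _) h7
  rw [Real.dist_eq, sub_zero, abs_of_nonneg (ha _)]
  linarith [it m]

set_option maxHeartbeats 2000000 in
lemma lyap (h d : ℝ) (hd0 : 0 ≤ d) (hd1 : d < 1) (hh : |h| < 1 + d) :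
    ∃ (V : ℝ → ℝ → ℝ) (c κ C : ℝ), 0 < c ∧ 0 ≤ κ ∧ κ < 1 ∧ 0 ≤ C ∧
      (∀ x y, c * (x ^ 2 + y ^ 2) ≤ V x y) ∧
      (∀ x y η, V (h * x - d * y + η) x ≤ κ * V x y + C * η ^ 2) := by
  set θ := |h| / (1 + d) with hθ
  have hθ0 : 0 ≤ θ := by positivity
  have hθ1 : θ < 1 := by rw [hθ, div_lt_one (by linarith)]; exact hh
  have hθh : |h| = θ * (1 + d) := by rw [hθ]; field_simp
  set ε := (1 - d) * (1 - θ) / 2 with hε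
  have hε0 : 0 < ε := by
    have : 0 < (1 - d) * (1 - θ) := mul_pos (by linarith) (by linarith)
    linarith
  have hε1 : ε ≤ 1 := by rw [hε]; nlinarith
  set δ := (1 - d) * (1 - θ) ^ 2 / 18 with hδ
  have hδ0 : 0 < δ := by
    have : 0 < (1 - d) * (1 - θ) ^ 2 := mul_pos (by linarith) (pow_pos (by linarith) 2)
    linarith
  have hδ1 : δ ≤ 1 := by
    have : (1 - θ) ^ 2 ≤ 1 := by nlinarith
    have : (1 - d) * (1 - θ) ^ 2 ≤ 1 * 1 := by gcongr; linarith
    linarith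
  set V : ℝ → ℝ → ℝ := fun x y => (1 + d + ε) * x ^ 2 - 2 * h * x * y + (1 + d) * y ^ 2 with hV
  have hxy : ∀ x y : ℝ, |2 * h * x * y| ≤ |h| * (x ^ 2 + y ^ 2) := by
    intro x y
    have : |2 * h * x * y| = |h| * (2 * |x| * |y|) := by
      rw [abs_mul, abs_mul, abs_mul, abs_two]; ring
    rw [this]
    gcongr
    nlinarith [sq_nonneg (|x| - |y|), sq_abs x, sq_abs y]
  have hVlow : ∀ x y, (1 + d - |h|) * (x ^ 2 + y ^ 2) ≤ V x y := by
    intro x y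
    have := le_abs_self (2 * h * x * y)
    have := hxy x y
    simp only [hV]
    nlinarith [mul_nonneg hε0.le (sq_nonneg x)]
  have hVup : ∀ x y, V x y ≤ 5 * (x ^ 2 + y ^ 2) := by
    intro x y
    have := neg_abs_le (2 * h * x * y)
    have := hxy x y
    have h2 : |h| * (x ^ 2 + y ^ 2) ≤ 2 * (x ^ 2 + y ^ 2) := by
      gcongr; linarith
    have h3 : (1 + d + ε) * x ^ 2 ≤ 3 * x ^ 2 := by gcongr; linarith
    have h4 : (1 + d) * y ^ 2 ≤ 3 * y ^ 2 := by gcongr; linarith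
    simp only [hV]
    linarith
  have hdec : ∀ x y, V (h * x - d * y) x ≤ V x y - δ * (x ^ 2 + y ^ 2) := by
    intro x y
    set w := h * x - (1 + d) * y with hw
    set x' := h * x - d * y with hx'
    have e1 : V x y - V x' x = (1 - d) * w ^ 2 + ε * (x ^ 2 - x' ^ 2) := by
      simp only [hV, hw, hx']; ring
    have e2 : x' = (h * x + d * w) / (1 + d) := by
      rw [eq_div_iff (by linarith)]; simp only [hx', hw]; ring
    have e3 : |x'| ≤ θ * |x| + |w| := by
      rw [e2, abs_div, abs_of_pos (by linarith : 0 < 1 + d), div_le_iff₀ (by linarith)]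
      calc |h * x + d * w| ≤ |h * x| + |d * w| := abs_add_le _ _
        _ = θ * (1 + d) * |x| + d * |w| := by rw [abs_mul, abs_mul, hθh, abs_of_nonneg hd0]
        _ ≤ _ := by nlinarith [abs_nonneg w]
    have e4 : (1 - θ) * x' ^ 2 ≤ (1 - θ) * θ * x ^ 2 + w ^ 2 := by
      have a1 : x' ^ 2 ≤ (θ * |x| + |w|) ^ 2 := by
        rw [← sq_abs x']; gcongr
      have a2 : (1 - θ) * (θ * |x| + |w|) ^ 2 ≤ (1 - θ) * θ * |x| ^ 2 + |w| ^ 2 := by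
        nlinarith [mul_nonneg hθ0 (sq_nonneg ((1 - θ) * |x| - |w|))]
      rw [sq_abs, sq_abs] at a2
      have : (1 - θ) * x' ^ 2 ≤ (1 - θ) * (θ * |x| + |w|) ^ 2 := by
        apply mul_le_mul_of_nonneg_left a1; linarith
      linarith
    have e5 : (1 - d) / 2 * w ^ 2 + (1 - d) / 2 * (1 - θ) ^ 2 * x ^ 2 ≤ V x y - V x' x := by
      rw [e1]
      have : ε * (x ^ 2 - x' ^ 2) = (1 - d) / 2 * ((1 - θ) * x ^ 2 - (1 - θ) * x' ^ 2) := by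
        rw [hε]; ring
      rw [this]
      have : (1 - d) / 2 * ((1 - θ) ^ 2 * x ^ 2 - w ^ 2) ≤
          (1 - d) / 2 * ((1 - θ) * x ^ 2 - (1 - θ) * x' ^ 2) := by
        apply mul_le_mul_of_nonneg_left _ (by linarith)
        nlinarith
      linarith
    have e6 : x ^ 2 + y ^ 2 ≤ 9 * x ^ 2 + 2 * w ^ 2 := by
      have b1 : (1 + d) * y = h * x - w := by simp only [hw]; ring
      have b2 : y ^ 2 ≤ ((1 + d) * y) ^ 2 := by
        rw [mul_pow]
        have : 1 ≤ (1 + d) ^ 2 := by nlinarith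
        nlinarith [sq_nonneg y]
      have b3 : h ^ 2 ≤ 4 := by
        have := abs_nonneg h
        rw [← sq_abs h]; nlinarith only [this, hh, hd1]
      rw [b1] at b2
      nlinarith [sq_nonneg (h * x + w), sq_nonneg x, mul_nonneg (sub_nonneg.mpr b3) (sq_nonneg x)]
    have e7 : δ * (x ^ 2 + y ^ 2) ≤ (1 - d) / 2 * w ^ 2 + (1 - d) / 2 * (1 - θ) ^ 2 * x ^ 2 := by
      have c1 : δ * (x ^ 2 + y ^ 2) ≤ δ * (9 * x ^ 2 + 2 * w ^ 2) := by gcongr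
      have c2 : δ * 2 ≤ (1 - d) / 2 := by
        have : (1 - d) * (1 - θ) ^ 2 ≤ (1 - d) * 1 := by
          apply mul_le_mul_of_nonneg_left _ (by linarith)
          nlinarith
        rw [hδ]; linarith
      have c3 : δ * 2 * w ^ 2 ≤ (1 - d) / 2 * w ^ 2 := by gcongr
      have c4 : δ * 9 * x ^ 2 = (1 - d) / 2 * (1 - θ) ^ 2 * x ^ 2 := by rw [hδ]; ring
      linarith
    linarith
  refine ⟨V, 1 + d - |h|, 1 - δ / 10, 3 + 400 / δ, by linarith, by linarith, by linarith,
    by positivity, hVlow, ?_⟩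
  intro x y η
  set x' := h * x - d * y with hx'
  set L := (1 + d + ε) * x' - h * x with hL
  have f1 : V (x' + η) x = V x' x + 2 * η * L + (1 + d + ε) * η ^ 2 := by
    simp only [hV, hL]; ring
  have hh2 : |h| ≤ 2 := by linarith
  have f2 : L ^ 2 ≤ 200 * (x ^ 2 + y ^ 2) := by
    have g1 : |x'| ≤ 2 * |x| + |y| := by
      calc |x'| ≤ |h * x| + |d * y| := abs_sub _ _
        _ = |h| * |x| + d * |y| := by rw [abs_mul, abs_mul, abs_of_nonneg hd0]
        _ ≤ 2 * |x| + 1 * |y| := by gcongr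
        _ = _ := by ring
    have g2 : |L| ≤ 8 * |x| + 3 * |y| := by
      calc |L| ≤ |(1 + d + ε) * x'| + |h * x| := abs_sub _ _
        _ = (1 + d + ε) * |x'| + |h| * |x| := by
          rw [abs_mul, abs_mul, abs_of_pos (by linarith : 0 < 1 + d + ε)]
        _ ≤ 3 * (2 * |x| + |y|) + 2 * |x| := by gcongr; linarith
        _ = _ := by ring
    have g3 : |L| ^ 2 ≤ (8 * |x| + 3 * |y|) ^ 2 := by gcongr
    rw [sq_abs] at g3
    nlinarith [sq_nonneg (|x| - |y|), sq_abs x, sq_abs y]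
  have f3 : 2 * η * L ≤ δ / 400 * L ^ 2 + 400 / δ * η ^ 2 := by
    have : 0 ≤ (δ / 20 * L - 20 * η) ^ 2 / δ := by positivity
    have e : (δ / 20 * L - 20 * η) ^ 2 / δ = δ / 400 * L ^ 2 + 400 / δ * η ^ 2 - 2 * η * L := by
      field_simp; ring
    linarith
  have f4 : (1 + d + ε) * η ^ 2 ≤ 3 * η ^ 2 := by gcongr; linarith
  have f5 := hdec x y
  have f6 : δ / 10 * V x y ≤ δ / 10 * (5 * (x ^ 2 + y ^ 2)) := by gcongr; exact hVup x y
  have f7 : δ / 400 * L ^ 2 ≤ δ / 400 * (200 * (x ^ 2 + y ^ 2)) := by gcongr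
  rw [f1]
  linarith only [f3, f4, f5, f6, f7]

lemma so_conv (g h d f : ℕ → ℝ) (h0 d0 f0 : ℝ)
    (hh : Filter.Tendsto h Filter.atTop (nhds h0))
    (hd : Filter.Tendsto d Filter.atTop (nhds d0))
    (hf : Filter.Tendsto f Filter.atTop (nhds f0))
    (hd0 : 0 ≤ d0) (hd1 : d0 < 1) (hh1 : |h0| < 1 + d0)
    (hrec : ∀ t, g (t + 2) = h t * g (t + 1) - d t * g t + f t) :
    ∃ l, Filter.Tendsto g Filter.atTop (nhds l) := by
  obtain ⟨V, c, κ, C, hc, hκ0, hκ1, hC, hlow, hstep⟩ := lyap h0 d0 hd0 hd1 hh1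
  have hne : 1 - h0 + d0 ≠ 0 := by
    have := le_abs_self h0
    linarith
  set l := f0 / (1 - h0 + d0) with hl
  have hl' : h0 * l - d0 * l + f0 - l = 0 := by
    rw [hl]; field_simp; ring
  set e : ℕ → ℝ := fun t => g t - l with he
  set r : ℕ → ℝ := fun t => h t * l - d t * l + f t - l with hr
  have hr0 : Filter.Tendsto r Filter.atTop (nhds 0) := by
    rw [← hl']
    exact (((hh.mul_const l).sub (hd.mul_const l)).add hf).sub_const l
  have hH : Filter.Tendsto (fun t => h t - h0) Filter.atTop (nhds 0) := by
    simpa using hh.sub_const h0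
  have hD : Filter.Tendsto (fun t => d t - d0) Filter.atTop (nhds 0) := by
    simpa using hd.sub_const d0
  set ε : ℕ → ℝ := fun t => C * 3 * ((h t - h0) ^ 2 + (d t - d0) ^ 2) / c + 3 * C * r t ^ 2 with hε
  have hε0 : Filter.Tendsto ε Filter.atTop (nhds 0) := by
    have := ((((hH.pow 2).add (hD.pow 2)).const_mul (C * 3)).div_const c).add
      ((hr0.pow 2).const_mul (3 * C))
    simpa using this
  have ha : Filter.Tendsto (fun t => V (e (t + 1)) (e t)) Filter.atTop (nhds 0) := by
    apply seq_contr _ ε κ hκ1 hκ0 _ hε0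
    · intro t
      set x := e (t + 1) with hx
      set y := e t with hy
      set η := (h t - h0) * x - (d t - d0) * y + r t with hη
      have e1 : e (t + 1 + 1) = h0 * x - d0 * y + η := by
        simp only [hη, hx, hy, he, hr, hrec t]; ring
      rw [e1]
      refine (hstep x y η).trans ?_
      have e2 : η ^ 2 ≤ 3 * ((h t - h0) ^ 2 + (d t - d0) ^ 2) * (x ^ 2 + y ^ 2) + 3 * r t ^ 2 := by
        have : η ^ 2 ≤ 3 * (((h t - h0) * x) ^ 2 + ((d t - d0) * y) ^ 2 + r t ^ 2) := by
          rw [hη]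
          generalize (h t - h0) * x = A
          generalize (d t - d0) * y = B
          generalize r t = R
          nlinarith [sq_nonneg (A + B), sq_nonneg (A - R), sq_nonneg (B + R)]
        have : 0 ≤ ((h t - h0) * y) ^ 2 + ((d t - d0) * x) ^ 2 := by positivity
        nlinarith
      have e3 : x ^ 2 + y ^ 2 ≤ V x y / c := by
        rw [le_div_iff₀ hc]; linarith [hlow x y]
      have e4 : C * η ^ 2 ≤ C * (3 * ((h t - h0) ^ 2 + (d t - d0) ^ 2) * (V x y / c)
          + 3 * r t ^ 2) := by
        apply mul_le_mul_of_nonneg_left _ hC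
        refine e2.trans ?_
        gcongr
      have e5 : 0 ≤ 3 * C * r t ^ 2 := by positivity
      have e6 : 0 ≤ V x y := le_trans (by positivity) (hlow x y)
      have e7 : 0 ≤ C * 3 * ((h t - h0) ^ 2 + (d t - d0) ^ 2) / c := by positivity
      have e8 : ε t = C * 3 * ((h t - h0) ^ 2 + (d t - d0) ^ 2) / c + 3 * C * r t ^ 2 := rfl
      have e9 : C * (3 * ((h t - h0) ^ 2 + (d t - d0) ^ 2) * (V x y / c) + 3 * r t ^ 2) =
        C * 3 * ((h t - h0) ^ 2 + (d t - d0) ^ 2) / c * V x y + 3 * C * r t ^ 2 := by ring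
      rw [e9] at e4
      rw [e8]
      have := mul_nonneg e5 e6
      linarith
    · intro t
      exact le_trans (by positivity) (hlow _ _)
  refine ⟨l, ?_⟩
  have he2 : Filter.Tendsto (fun t => e t ^ 2) Filter.atTop (nhds 0) := by
    have ha' : Filter.Tendsto (fun t => V (e (t + 1)) (e t) / c) Filter.atTop (nhds 0) := by
      simpa using ha.div_const c
    refine squeeze_zero (fun t => sq_nonneg _) (fun t => ?_) ha'
    rw [le_div_iff₀ hc]
    nlinarith [hlow (e (t + 1)) (e t), sq_nonneg (e (t + 1))]
  have he0 : Filter.Tendsto e Filter.atTop (nhds 0) := by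
    have := he2.sqrt
    simp only [Real.sqrt_sq_eq_abs, Real.sqrt_zero] at this
    exact (tendsto_zero_iff_abs_tendsto_zero e).mpr this
  have := he0.add_const l
  simpa [he] using this
end BPP

namespace BPP

noncomputable def ls (σ n k : ℝ) : ℕ → ℝ
  | 0 => 1
  | t + 1 => 1 + n / (σ ^ 2 + k / ls σ n k t)

lemma ls_ge (σ n k : ℝ) (hσ : 0 < σ) (hn : 0 ≤ n) (hk : 0 ≤ k) (t : ℕ) : 1 ≤ ls σ n k t := by
  induction t with
  | zero => simp [ls]
  | succ t ih =>
    have : 0 ≤ n / (σ ^ 2 + k / ls σ n k t) := by positivity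
    simp only [ls]; linarith

lemma ls_conv (σ n k : ℝ) (hσ : 0 < σ) (hn : 0 ≤ n) (hk : 0 ≤ k) :
    ∃ l : ℝ, 1 ≤ l ∧ Filter.Tendsto (ls σ n k) Filter.atTop (nhds l) ∧
      l = 1 + n / (σ ^ 2 + k / l) := by
  have h1 := ls_ge σ n k hσ hn hk
  have hmono : Monotone (ls σ n k) := by
    apply monotone_nat_of_le_succ
    intro t
    induction t with
    | zero => exact h1 1
    | succ t ih =>
      have hp : 0 < ls σ n k t := by linarith [h1 t]
      have hp' : 0 < ls σ n k (t + 1) := by linarith [h1 (t + 1)]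
      change 1 + n / (σ ^ 2 + k / ls σ n k t) ≤ 1 + n / (σ ^ 2 + k / ls σ n k (t + 1))
      gcongr
  have hbdd : BddAbove (Set.range (ls σ n k)) := by
    refine ⟨1 + n / σ ^ 2, ?_⟩
    rintro _ ⟨t, rfl⟩
    have hs : 0 < σ ^ 2 := by positivity
    cases t with
    | zero => simp only [ls]; have : 0 ≤ n / σ ^ 2 := by positivity
              linarith
    | succ t =>
      simp only [ls]
      have hp : 0 < ls σ n k t := by linarith [h1 t]
      have : 0 ≤ k / ls σ n k t := by positivity
      gcongr
      linarith
  have hlim := tendsto_atTop_ciSup hmono hbdd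
  set l := ⨆ i, ls σ n k i
  have hl : 1 ≤ l := ge_of_tendsto' hlim h1
  refine ⟨l, hl, hlim, ?_⟩
  have h2 : Filter.Tendsto (fun t => ls σ n k (t + 1)) Filter.atTop (nhds l) :=
    hlim.comp (Filter.tendsto_add_atTop_nat 1)
  have h3 : Filter.Tendsto (fun t => ls σ n k (t + 1)) Filter.atTop
      (nhds (1 + n / (σ ^ 2 + k / l))) := by
    simp only [ls]
    have : 0 < σ ^ 2 + k / l := by positivity
    exact tendsto_const_nhds.add (tendsto_const_nhds.div
      (tendsto_const_nhds.add (tendsto_const_nhds.div hlim (by linarith))) this.ne')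
  exact tendsto_nhds_unique h2 h3

section bp
variable {K N : ℕ} (σ : ℝ) (s : Fin K → Fin N → ℝ) (hs : ∀ i a, s i a ^ 2 = 1)
  (hK : 1 ≤ K) (hN : 1 ≤ N) (y : Fin N → ℝ)

noncomputable def nn (N : ℕ) : ℝ := (N - 1 : ℝ) / N
noncomputable def kk (K N : ℕ) : ℝ := (K - 1 : ℝ) / N
noncomputable def lt (K N : ℕ) (σ : ℝ) (t : ℕ) : ℝ := ls σ (nn N) (kk K N) t
noncomputable def lh (K N : ℕ) (σ : ℝ) (t : ℕ) : ℝ := σ ^ 2 + kk K N / lt K N σ t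

lemma lamHat_eq (hs : ∀ i a, s i a ^ 2 = 1) (hK : 1 ≤ K) (L : Fin K → Fin N → ℝ) (c : ℝ)
    (hL : ∀ i a, L i a = c) (b : Fin N) (i : Fin K) :
    BP.lamHat σ s L b i = σ ^ 2 + kk K N / c := by
  simp only [BP.lamHat, hs, hL, kk]
  simp [Nat.cast_sub hK]
  ring

lemma lam_eq (hs : ∀ i a, s i a ^ 2 = 1) (hK : 1 ≤ K) (hN : 1 ≤ N) (t : ℕ) (i : Fin K)
    (a : Fin N) : BP.lam σ s t i a = lt K N σ t := by
  induction t generalizing i a with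
  | zero => simp [BP.lam, lt, ls]
  | succ t ih =>
    have := lamHat_eq σ s hs hK (BP.lam σ s t) (lt K N σ t) ih
    simp only [BP.lam, this, hs]
    simp only [lt, ls, nn]
    simp [Nat.cast_sub hN]
    ring

lemma Lout_eq (hs : ∀ i a, s i a ^ 2 = 1) (hK : 1 ≤ K) (hN : 1 ≤ N) (t : ℕ) (i : Fin K) :
    BP.Lout σ s (t + 1) i = 1 + 1 / lh K N σ t := by
  have := lamHat_eq σ s hs hK (BP.lam σ s t) (lt K N σ t) (lam_eq σ s hs hK hN t)
  simp only [BP.Lout, this, hs]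
  have : (N : ℝ) ≠ 0 := by positivity
  simp [lh]
  field_simp

/-- full chip residual -/
noncomputable def Zt (t : ℕ) (a : Fin N) : ℝ :=
  y a - (1 / Real.sqrt N) * ∑ k, (s k a / lt K N σ t) * BP.gam σ s y t k a

lemma gamHat_eq (hs : ∀ i a, s i a ^ 2 = 1) (hK : 1 ≤ K) (hN : 1 ≤ N) (t : ℕ) (a : Fin N)
    (i : Fin K) : BP.gamHat s y (BP.lam σ s t) (BP.gam σ s y t) a i =
    Zt σ s y t a + (1 / Real.sqrt N) * ((s i a / lt K N σ t) * BP.gam σ s y t i a) := by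
  simp only [BP.gamHat, Zt, lam_eq σ s hs hK hN]
  rw [← Finset.add_sum_erase _ _ (Finset.mem_univ i)]
  ring

lemma Gout_eq (hs : ∀ i a, s i a ^ 2 = 1) (hK : 1 ≤ K) (hN : 1 ≤ N) (t : ℕ) (i : Fin K) :
    BP.Gout σ s y (t + 1) i = (1 / Real.sqrt N) * ∑ b, (s i b / lh K N σ t) *
      (Zt σ s y t b + (1 / Real.sqrt N) * ((s i b / lt K N σ t) * BP.gam σ s y t i b)) := by
  simp only [BP.Gout, gamHat_eq σ s y hs hK hN,
    lamHat_eq σ s hs hK (BP.lam σ s t) (lt K N σ t) (lam_eq σ s hs hK hN t)]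
  rfl

lemma gam_eq (hs : ∀ i a, s i a ^ 2 = 1) (hK : 1 ≤ K) (hN : 1 ≤ N) (t : ℕ) (i : Fin K)
    (a : Fin N) :
    BP.gam σ s y (t + 1) i a = BP.Gout σ s y (t + 1) i - (1 / Real.sqrt N) * ((s i a / lh K N σ t) *
      (Zt σ s y t a + (1 / Real.sqrt N) * ((s i a / lt K N σ t) * BP.gam σ s y t i a))) := by
  rw [Gout_eq σ s y hs hK hN]
  simp only [BP.gam, gamHat_eq σ s y hs hK hN,
    lamHat_eq σ s hs hK (BP.lam σ s t) (lt K N σ t) (lam_eq σ s hs hK hN t)]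
  rw [← Finset.add_sum_erase _ _ (Finset.mem_univ a)]
  simp only [lh]
  ring

lemma sum_gam (hs : ∀ i a, s i a ^ 2 = 1) (hK : 1 ≤ K) (hN : 1 ≤ N) (t : ℕ) (i : Fin K) :
    ∑ a, BP.gam σ s y t i a = (N - 1) * BP.Gout σ s y t i := by
  cases t with
  | zero => simp [BP.gam, BP.Gout]
  | succ t =>
    simp only [gam_eq σ s y hs hK hN]
    rw [Finset.sum_sub_distrib, ← Finset.mul_sum, ← Gout_eq σ s y hs hK hN]
    simp
    ring

noncomputable def sZ (t : ℕ) (i : Fin K) : ℝ := (1 / Real.sqrt N) * ∑ b, s i b * Zt σ s y t b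

lemma kk_nonneg (hK : 1 ≤ K) : 0 ≤ kk K N := by
  have : (1:ℝ) ≤ K := by exact_mod_cast hK
  unfold kk
  apply div_nonneg <;> [linarith; positivity]

lemma nn_nonneg (hN : 1 ≤ N) : 0 ≤ nn N := by
  have : (1:ℝ) ≤ N := by exact_mod_cast hN
  unfold nn
  apply div_nonneg <;> [linarith; positivity]

lemma lt_pos (hσ : 0 < σ) (hK : 1 ≤ K) (hN : 1 ≤ N) (t : ℕ) : 0 < lt K N σ t := by
  have := ls_ge σ (nn N) (kk K N) hσ (nn_nonneg hN) (kk_nonneg hK) t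
  unfold lt; linarith

lemma lh_pos (hσ : 0 < σ) (hK : 1 ≤ K) (hN : 1 ≤ N) (t : ℕ) : 0 < lh K N σ t := by
  have := lt_pos σ hσ hK hN t
  have := kk_nonneg (N := N) hK
  unfold lh; positivity

lemma G_step (hσ : 0 < σ) (hs : ∀ i a, s i a ^ 2 = 1) (hK : 1 ≤ K) (hN : 1 ≤ N) (t : ℕ)
    (i : Fin K) :
    BP.Gout σ s y (t + 1) i = sZ σ s y t i / lh K N σ t +
      nn N / (lt K N σ t * lh K N σ t) * BP.Gout σ s y t i := by
  have h1 := lt_pos σ hσ hK hN t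
  have h2 := lh_pos σ hσ hK hN t
  have hN0 : (0:ℝ) < N := by positivity
  have hr : Real.sqrt N * Real.sqrt N = N := Real.mul_self_sqrt hN0.le
  have hr0 : 0 < Real.sqrt N := Real.sqrt_pos.mpr hN0
  rw [Gout_eq σ s y hs hK hN]
  have e : ∀ b, (s i b / lh K N σ t) *
      (Zt σ s y t b + (1 / Real.sqrt N) * ((s i b / lt K N σ t) * BP.gam σ s y t i b)) =
      1 / lh K N σ t * (s i b * Zt σ s y t b) +
      1 / (lt K N σ t * lh K N σ t * Real.sqrt N) * BP.gam σ s y t i b := by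
    intro b
    have : s i b * s i b = 1 := by rw [← sq]; exact hs i b
    field_simp
    linear_combination (BP.gam σ s y t i b) * this
  simp only [e]
  rw [Finset.sum_add_distrib, ← Finset.mul_sum, ← Finset.mul_sum, sum_gam σ s y hs hK hN, sZ, nn]
  generalize ∑ b, s i b * Zt σ s y t b = A
  generalize BP.Gout σ s y t i = B
  generalize lt K N σ t = p at *
  generalize lh K N σ t = q at *
  rw [mul_add]
  congr 1
  · ring
  · generalize Real.sqrt (N:ℝ) = r at hr hr0 ⊢
    rw [← hr]; field_simp

lemma Z_step (hσ : 0 < σ) (hs : ∀ i a, s i a ^ 2 = 1) (hK : 1 ≤ K) (hN : 1 ≤ N) (t : ℕ)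
    (a : Fin N) :
    Zt σ s y (t + 1) a = (1 + 1 / (N * lh K N σ t * lt K N σ (t + 1))) * y a
      - 1 / (Real.sqrt N * lt K N σ (t + 1)) * ∑ k, s k a * BP.Gout σ s y (t + 1) k
      + kk K N / (lh K N σ t * lt K N σ (t + 1)) * Zt σ s y t a := by
  have h1 := lt_pos σ hσ hK hN t
  have h1' := lt_pos σ hσ hK hN (t + 1)
  have h2 := lh_pos σ hσ hK hN t
  have hN0 : (0:ℝ) < N := by positivity
  have hr : Real.sqrt N * Real.sqrt N = N := Real.mul_self_sqrt hN0.le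
  have hr0 : 0 < Real.sqrt N := Real.sqrt_pos.mpr hN0
  have e : ∀ k, (s k a / lt K N σ (t + 1)) * BP.gam σ s y (t + 1) k a =
      1 / lt K N σ (t + 1) * (s k a * BP.Gout σ s y (t + 1) k) -
      1 / (Real.sqrt N * lh K N σ t * lt K N σ (t + 1)) * Zt σ s y t a -
      1 / (N * lh K N σ t * lt K N σ (t + 1)) * ((s k a / lt K N σ t) * BP.gam σ s y t k a) := by
    intro k
    have : s k a * s k a = 1 := by rw [← sq]; exact hs k a
    rw [gam_eq σ s y hs hK hN]
    generalize BP.Gout σ s y (t + 1) k = B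
    generalize Zt σ s y t a = Z
    generalize BP.gam σ s y t k a = c
    generalize s k a = u at *
    generalize lt K N σ (t + 1) = p' at *
    generalize lt K N σ t = p at *
    generalize lh K N σ t = q at *
    generalize Real.sqrt (N:ℝ) = r at hr hr0 ⊢
    rw [← hr]
    field_simp
    linear_combination (-(r * Z * p + u * c)) * this
  have hY : ∑ k, (s k a / lt K N σ t) * BP.gam σ s y t k a = Real.sqrt N * (y a - Zt σ s y t a) := by
    rw [Zt]; field_simp; ring
  rw [Zt]
  simp only [e]
  rw [Finset.sum_sub_distrib, Finset.sum_sub_distrib, ← Finset.mul_sum, ← Finset.mul_sum,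
    ← Finset.mul_sum, hY]
  simp only [Finset.sum_const, Finset.card_univ, Fintype.card_fin, nsmul_eq_mul, kk]
  generalize ∑ k, s k a * BP.Gout σ s y (t + 1) k = A
  generalize Zt σ s y t a = Z
  generalize lt K N σ (t + 1) = p' at *
  generalize lh K N σ t = q at *
  generalize Real.sqrt (N:ℝ) = r at hr hr0 ⊢
  rw [← hr]
  field_simp
  ring

noncomputable def Am : Matrix (Fin K) (Fin K) ℝ := (Stilde s)ᵀ * Stilde s

lemma Am_mulVec (x : Fin K → ℝ) (i : Fin K) :
    (Am s *ᵥ x) i = (1 / Real.sqrt N) * ∑ b, s i b * ((1 / Real.sqrt N) * ∑ k, s k b * x k) := by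
  simp only [Am, ← Matrix.mulVec_mulVec]
  simp only [Stilde, Matrix.mulVec, dotProduct, Matrix.transpose_apply, Matrix.of_apply]
  rw [Finset.mul_sum]
  refine Finset.sum_congr rfl fun b _ => ?_
  have : ∑ k, s k b / √N * x k = (1 / √N) * ∑ k, s k b * x k := by
    rw [Finset.mul_sum]
    refine Finset.sum_congr rfl fun k _ => ?_
    ring
  rw [this]; ring

lemma St_mulVec (i : Fin K) :
    ((Stilde s)ᵀ *ᵥ y) i = (1 / Real.sqrt N) * ∑ b, s i b * y b := by
  simp only [Stilde, Matrix.mulVec, dotProduct, Matrix.transpose_apply, Matrix.of_apply]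
  rw [Finset.mul_sum]
  refine Finset.sum_congr rfl fun b _ => ?_
  ring

lemma G_rec (hσ : 0 < σ) (hs : ∀ i a, s i a ^ 2 = 1) (hK : 1 ≤ K) (hN : 1 ≤ N) (t : ℕ)
    (i : Fin K) :
    BP.Gout σ s y (t + 2) i =
      (nn N + kk K N) / (lt K N σ (t + 1) * lh K N σ (t + 1)) * BP.Gout σ s y (t + 1) i
      - 1 / (lt K N σ (t + 1) * lh K N σ (t + 1)) * (Am s *ᵥ (BP.Gout σ s y (t + 1))) i
      - nn N * kk K N / ((lt K N σ (t + 1) * lh K N σ (t + 1)) * (lt K N σ t * lh K N σ t))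
        * BP.Gout σ s y t i
      + (1 + 1 / (N * lh K N σ t * lt K N σ (t + 1))) / lh K N σ (t + 1)
        * ((Stilde s)ᵀ *ᵥ y) i := by
  have h1 := lt_pos σ hσ hK hN t
  have h1' := lt_pos σ hσ hK hN (t + 1)
  have h2 := lh_pos σ hσ hK hN t
  have h2' := lh_pos σ hσ hK hN (t + 1)
  have hN0 : (0:ℝ) < N := by positivity
  have hr0 : 0 < Real.sqrt N := Real.sqrt_pos.mpr hN0
  have a1 := G_step σ s y hσ hs hK hN t i
  have a2 := G_step σ s y hσ hs hK hN (t + 1) i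
  have a3 : sZ σ s y (t + 1) i = (1 + 1 / (N * lh K N σ t * lt K N σ (t + 1)))
        * ((Stilde s)ᵀ *ᵥ y) i - 1 / lt K N σ (t + 1) * (Am s *ᵥ (BP.Gout σ s y (t + 1))) i
        + kk K N / (lh K N σ t * lt K N σ (t + 1)) * sZ σ s y t i := by
    rw [Am_mulVec s, St_mulVec, sZ, sZ]
    simp only [Z_step σ s y hσ hs hK hN t]
    have : ∀ b, s i b * ((1 + 1 / (N * lh K N σ t * lt K N σ (t + 1))) * y b
      - 1 / (Real.sqrt N * lt K N σ (t + 1)) * ∑ k, s k b * BP.Gout σ s y (t + 1) k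
      + kk K N / (lh K N σ t * lt K N σ (t + 1)) * Zt σ s y t b) =
      (1 + 1 / (N * lh K N σ t * lt K N σ (t + 1))) * (s i b * y b)
      - 1 / lt K N σ (t + 1) * (s i b * (1 / Real.sqrt N * ∑ k, s k b * BP.Gout σ s y (t + 1) k))
      + kk K N / (lh K N σ t * lt K N σ (t + 1)) * (s i b * Zt σ s y t b) := by
      intro b; ring
    simp only [this]
    rw [Finset.sum_add_distrib, Finset.sum_sub_distrib, ← Finset.mul_sum, ← Finset.mul_sum,
      ← Finset.mul_sum]
    ring
  have a4 : sZ σ s y t i = lh K N σ t * BP.Gout σ s y (t + 1) i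
      - nn N / lt K N σ t * BP.Gout σ s y t i := by
    rw [a1]; field_simp; ring
  rw [a2, a3, a4]
  generalize ((Stilde s)ᵀ *ᵥ y) i = B
  generalize (Am s *ᵥ (BP.Gout σ s y (t + 1))) i = A
  generalize BP.Gout σ s y (t + 1) i = G'
  generalize BP.Gout σ s y t i = G
  generalize lt K N σ (t + 1) = p' at *
  generalize lt K N σ t = p at *
  generalize lh K N σ t = q at *
  generalize lh K N σ (t + 1) = q' at *
  field_simp
  ring
end bp
end BPP

namespace BPP

lemma det_conv {K N : ℕ} (σ : ℝ) (s : Fin K → Fin N → ℝ) (hσ : 0 < σ)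
    (hs : ∀ i a, s i a ^ 2 = 1) (hK : 1 ≤ K) (hN : 1 ≤ N)
    (hA : (Am s).IsHermitian) (hA0 : ∀ j, 0 ≤ hA.eigenvalues j)
    (hev : ∀ j, hA.eigenvalues j < 2 * (nn N + kk K N) + σ ^ 2) (y : Fin N → ℝ) (i : Fin K) :
    ∃ Linf Ginf : ℝ,
      Filter.Tendsto (fun t => BP.Lout σ s t i) Filter.atTop (nhds Linf) ∧
      Filter.Tendsto (fun t => BP.Gout σ s y t i) Filter.atTop (nhds Ginf) ∧
      Ginf / Linf = mmseEstimate σ s y i := by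
  obtain ⟨l, hl1, hlim, hleq⟩ := ls_conv σ (nn N) (kk K N) hσ (nn_nonneg hN) (kk_nonneg hK)
  have hn := nn_nonneg hN
  have hk := kk_nonneg (N := N) hK
  have hN0 : (0:ℝ) < N := by positivity
  set q := σ ^ 2 + kk K N / l with hq
  have hl0 : 0 < l := by linarith
  have hq0 : 0 < q := by positivity
  have hlt : Filter.Tendsto (lt K N σ) Filter.atTop (nhds l) := hlim
  have hlh : Filter.Tendsto (lh K N σ) Filter.atTop (nhds q) :=
    tendsto_const_nhds.add (tendsto_const_nhds.div hlt hl0.ne')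
  have hlt1 := hlt.comp (Filter.tendsto_add_atTop_nat 1)
  have hlh1 := hlh.comp (Filter.tendsto_add_atTop_nat 1)
  simp only [Function.comp_def] at hlt1 hlh1
  set n := nn N with hnd
  set k := kk K N with hkd
  set p := l * q with hp
  have hp0 : 0 < p := by positivity
  have hpn : p = q + n := by
    rw [hp]; nth_rewrite 1 [hleq]; field_simp
  have hpk : p = σ ^ 2 * l + k := by
    rw [hp, hq]; field_simp
  have hσ2 : 0 < σ ^ 2 := by positivity
  have hquad : (p - n) * (p - k) = σ ^ 2 * p := by
    rw [show p - n = q by linarith, show p - k = σ ^ 2 * l by linarith, hp]; ring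
  have hpp : Filter.Tendsto (fun t => lt K N σ t * lh K N σ t) Filter.atTop (nhds p) := hlt.mul hlh
  have hpp1 : Filter.Tendsto (fun t => lt K N σ (t + 1) * lh K N σ (t + 1)) Filter.atTop (nhds p) :=
    hlt1.mul hlh1
  set c : ℝ := (1 + 1 / (N * q * l)) / q with hc
  have hct : Filter.Tendsto (fun t => (1 + 1 / (N * lh K N σ t * lt K N σ (t + 1))) /
      lh K N σ (t + 1)) Filter.atTop (nhds c) := by
    have : (N:ℝ) * q * l ≠ 0 := by positivity
    exact (tendsto_const_nhds.add (tendsto_const_nhds.div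
      ((tendsto_const_nhds.mul hlh).mul hlt1) this)).div hlh1 hq0.ne'
  have hdt : Filter.Tendsto (fun t => n * k / ((lt K N σ (t + 1) * lh K N σ (t + 1)) *
      (lt K N σ t * lh K N σ t))) Filter.atTop (nhds (n * k / (p * p))) :=
    tendsto_const_nhds.div (hpp1.mul hpp) (by positivity)
  have hd1 : n * k / (p * p) < 1 := by
    rw [div_lt_one (by positivity)]
    nlinarith [mul_pos hσ2 hl0]
  have hd0 : 0 ≤ n * k / (p * p) := by positivity
  -- projections
  set v := hA.eigenvectorBasis with hv
  set B := (Stilde s)ᵀ *ᵥ y with hB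
  have hproj : ∀ j, ∃ g, Filter.Tendsto (fun t => ∑ x, v j x * BP.Gout σ s y t x)
      Filter.atTop (nhds g) := by
    intro j
    set τ := hA.eigenvalues j with hτ
    have hAv : ∀ G : Fin K → ℝ, ∑ x, v j x * (Am s *ᵥ G) x = τ * ∑ x, v j x * G x := by
      intro G
      have h1 : ∑ x, v j x * (Am s *ᵥ G) x = (⇑(v j) : Fin K → ℝ) ⬝ᵥ (Am s *ᵥ G) := rfl
      have h2 : (Am s)ᵀ = Am s := by simpa using hA.eq
      rw [h1, Matrix.dotProduct_mulVec, ← Matrix.mulVec_transpose, h2, hv,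
        hA.mulVec_eigenvectorBasis, smul_dotProduct]
      rfl
    apply so_conv (fun t => ∑ x, v j x * BP.Gout σ s y t x)
      (fun t => (n + k - τ) / (lt K N σ (t + 1) * lh K N σ (t + 1)))
      (fun t => n * k / ((lt K N σ (t + 1) * lh K N σ (t + 1)) * (lt K N σ t * lh K N σ t)))
      (fun t => (1 + 1 / (N * lh K N σ t * lt K N σ (t + 1))) / lh K N σ (t + 1) *
        ∑ x, v j x * B x) ((n + k - τ) / p) (n * k / (p * p)) (c * ∑ x, v j x * B x)
      (tendsto_const_nhds.div hpp1 hp0.ne') hdt (hct.mul_const _) hd0 hd1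
    · have e : 1 + n * k / (p * p) = (n + k + σ ^ 2) / p := by
        field_simp
        linarith
      rw [e, abs_div, abs_of_pos hp0]
      apply div_lt_div_of_pos_right _ hp0
      have := hA0 j
      have := hev j
      rw [abs_lt]
      constructor <;> linarith
    · intro t
      simp only [G_rec σ s y hσ hs hK hN t]
      have := hAv (BP.Gout σ s y (t + 1))
      simp only [mul_add, mul_sub, Finset.sum_add_distrib, Finset.sum_sub_distrib,
        mul_left_comm (v j _), ← Finset.mul_sum, this]
      ring
  choose g hg using hproj
  have hG : ∀ x, Filter.Tendsto (fun t => BP.Gout σ s y t x) Filter.atTop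
      (nhds (∑ j, g j * v j x)) := by
    intro x
    have : ∀ t, BP.Gout σ s y t x = ∑ j, (∑ z, v j z * BP.Gout σ s y t z) * v j x := by
      intro t
      have h := v.sum_repr' (WithLp.toLp 2 (BP.Gout σ s y t))
      have h' := congrArg (fun w : EuclideanSpace ℝ (Fin K) => w x) h
      simp only [WithLp.ofLp_sum, Finset.sum_apply, WithLp.ofLp_smul, Pi.smul_apply, smul_eq_mul] at h'
      rw [← h']
      refine Finset.sum_congr rfl fun j _ => ?_
      congr 1
      simp [PiLp.inner_apply, mul_comm]
    simp only [this]
    exact tendsto_finsetSum _ fun j _ => (hg j).mul_const _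
  set G : Fin K → ℝ := fun x => ∑ j, g j * v j x with hGd
  have hG' : ∀ x, Filter.Tendsto (fun t => BP.Gout σ s y t x) Filter.atTop (nhds (G x)) := hG
  have hG1 : ∀ x, Filter.Tendsto (fun t => BP.Gout σ s y (t + 1) x) Filter.atTop (nhds (G x)) :=
    fun x => (hG' x).comp (Filter.tendsto_add_atTop_nat 1)
  have hG2 : ∀ x, Filter.Tendsto (fun t => BP.Gout σ s y (t + 2) x) Filter.atTop (nhds (G x)) :=
    fun x => (hG' x).comp (Filter.tendsto_add_atTop_nat 2)
  have hfix : ∀ x, G x = (n + k) / p * G x - 1 / p * (Am s *ᵥ G) x - n * k / (p * p) * G x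
      + c * B x := by
    intro x
    refine tendsto_nhds_unique (hG2 x) ?_
    simp only [G_rec σ s y hσ hs hK hN]
    have hAG : Filter.Tendsto (fun t => (Am s *ᵥ BP.Gout σ s y (t + 1)) x) Filter.atTop
        (nhds ((Am s *ᵥ G) x)) := by
      simp only [Matrix.mulVec, dotProduct]
      exact tendsto_finsetSum _ fun j _ => (hG1 j).const_mul _
    exact ((((tendsto_const_nhds.div hpp1 hp0.ne').mul (hG1 x)).sub
      ((tendsto_const_nhds.div hpp1 hp0.ne').mul hAG)).sub (hdt.mul (hG' x))).add (hct.mul_const _)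
  have hLt : Filter.Tendsto (fun t => BP.Lout σ s t i) Filter.atTop (nhds (1 + 1 / q)) := by
    rw [← Filter.tendsto_add_atTop_iff_nat 1]
    simp only [Lout_eq σ s hs hK hN]
    exact tendsto_const_nhds.add (tendsto_const_nhds.div hlh hq0.ne')
  have hL0 : 0 < 1 + 1 / q := by positivity
  refine ⟨1 + 1 / q, G i, hLt, hG' i, ?_⟩
  have hcL : p * c = 1 + 1 / q := by
    have hn' : n = 1 - 1 / N := by rw [hnd, nn]; field_simp
    have : l * q = q + 1 - 1 / N := by rw [← hp, hpn, hn']; ring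
    rw [hc, hp]
    have h3 : N * (l * q) = N * q + N - 1 := by rw [this]; field_simp
    field_simp
    linarith
  have hmat : (σ ^ 2 • (1 : Matrix (Fin K) (Fin K) ℝ) + (Stilde s)ᵀ * Stilde s) *ᵥ G
      = (1 + 1 / q) • B := by
    ext x
    have h1 := hfix x
    change ((σ ^ 2 • (1 : Matrix (Fin K) (Fin K) ℝ) + Am s) *ᵥ G) x = _
    rw [Matrix.add_mulVec, Matrix.smul_mulVec, Matrix.one_mulVec]
    simp only [Pi.add_apply, Pi.smul_apply, smul_eq_mul]
    rw [← hcL]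
    have h2 : p * p * G x = p * (n + k) * G x - p * (Am s *ᵥ G) x - n * k * G x
      + p * p * c * B x := by
      nth_rewrite 1 [h1]
      field_simp
    have h3 : p * (σ ^ 2 * G x + (Am s *ᵥ G) x) = p * (p * c * B x) := by
      linear_combination h2 - (G x) * hquad
    exact mul_left_cancel₀ hp0.ne' h3
  have hpd : (σ ^ 2 • (1 : Matrix (Fin K) (Fin K) ℝ) + (Stilde s)ᵀ * Stilde s).PosDef := by
    have h1 : ((Stilde s)ᵀ * Stilde s).PosSemidef := by
      simpa using Matrix.posSemidef_conjTranspose_mul_self (Stilde s)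
    have h2 : (σ ^ 2 • (1 : Matrix (Fin K) (Fin K) ℝ)).PosDef := Matrix.PosDef.one.smul hσ2
    exact h2.add_posSemidef h1
  set M := (σ ^ 2 • (1 : Matrix (Fin K) (Fin K) ℝ) + (Stilde s)ᵀ * Stilde s) with hM
  have hu : IsUnit M.det := hpd.det_pos.ne'.isUnit
  have hGM : G = (1 + 1 / q) • (M⁻¹ *ᵥ B) := by
    rw [← Matrix.mulVec_smul, ← hmat, Matrix.mulVec_mulVec, Matrix.nonsing_inv_mul _ hu,
      Matrix.one_mulVec]
  have : G i = (1 + 1 / q) * (M⁻¹ *ᵥ B) i := by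
    have := congrFun hGM i
    simpa using this
  rw [this, mul_div_cancel_left₀ _ hL0.ne']
  rfl
end BPP

namespace BPP

lemma trace_pow_eq {n : Type*} [Fintype n] [DecidableEq n] (A : Matrix n n ℝ) (hA : A.IsHermitian)
    (q : ℕ) : (A ^ q).trace = ∑ j, hA.eigenvalues j ^ q := by
  conv_lhs => rw [hA.spectral_theorem, ← map_pow, Unitary.conjStarAlgAut_apply,
    Matrix.trace_mul_cycle, Unitary.coe_star_mul_self, one_mul, Matrix.diagonal_pow,
    Matrix.trace_diagonal]
  simp

noncomputable def Wr {K N : ℕ} (s : Fin K → Fin N → Bool) : Matrix (Fin K) (Fin K) ℝ :=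
  Matrix.of (toSign s) * (Matrix.of (toSign s))ᵀ

lemma Wr_eq {K N : ℕ} (hN : 1 ≤ N) (s : Fin K → Fin N → Bool) :
    Wr s = (N : ℝ) • Am (toSign s) := by
  have hN' : (0 : ℝ) < N := by exact_mod_cast hN
  ext i j
  simp only [Wr, Am, Stilde, Matrix.mul_apply, Matrix.transpose_apply, Matrix.of_apply,
    Matrix.smul_apply, smul_eq_mul, Finset.mul_sum]
  refine Finset.sum_congr rfl fun b _ => ?_
  rw [div_mul_div_comm, Real.mul_self_sqrt hN'.le]
  field_simp

lemma ev_trace {K N : ℕ} (s : Fin K → Fin N → Bool) (q : ℕ) :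
    ev (fun e : Fin K × Fin N => s e.1 e.2) ((Wm (Fin K) (Fin N)) ^ q).trace
      = ((Wr s) ^ q).trace := by
  have h : (ev (fun e : Fin K × Fin N => s e.1 e.2)).mapMatrix (Wm (Fin K) (Fin N)) = Wr s := by
    ext i j
    simp [Wm, Wr, Sm, Matrix.mul_apply, ev, toSign, sg]
  rw [← h, ← map_pow]
  simp [Matrix.trace]

lemma sum_trace {K N : ℕ} (q : ℕ) :
    ∑ s : Fin K → Fin N → Bool, ((Wr s) ^ q).trace = 2 ^ (K * N) * mo (Fin K) (Fin N) q := by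
  have h : mo (Fin K) (Fin N) q = (∑ s : Fin K × Fin N → Bool, ev s ((Wm (Fin K) (Fin N)) ^ q).trace)
      / 2 ^ (K * N) := by
    simp [mo, ex]
  rw [h, mul_div_cancel₀ _ (by positivity)]
  rw [← (Equiv.curry (Fin K) (Fin N) Bool).sum_comp]
  refine Finset.sum_congr rfl fun s _ => ?_
  rw [← ev_trace]
  rfl

lemma bad_bound {K N : ℕ} (σ : ℝ) (hσ : 0 < σ) (hK : 1 ≤ K) (hN : 1 ≤ N) (Q : ℕ)
    (P : (Fin K → Fin N → Bool) → Prop)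
    (hP : ∀ s, P s ↔ ∀ (y : Fin N → ℝ) (i : Fin K),
            ∃ Linf Ginf : ℝ,
              Filter.Tendsto (fun t => BP.Lout σ (toSign s) t i)
                Filter.atTop (nhds Linf) ∧
              Filter.Tendsto (fun t => BP.Gout σ (toSign s) y t i)
                Filter.atTop (nhds Ginf) ∧
              Ginf / Linf = mmseEstimate σ (toSign s) y i) :
    (2 ^ (K * N) - (Nat.card {s // P s} : ℝ)) * (2 * ((N : ℝ) + K - 2) + σ ^ 2 * N) ^ Q
      ≤ 2 ^ (K * N) * mo (Fin K) (Fin N) Q := by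
  classical
  have hN' : (0 : ℝ) < N := by exact_mod_cast hN
  have hN1 : (1 : ℝ) ≤ N := by exact_mod_cast hN
  have hK1 : (1 : ℝ) ≤ K := by exact_mod_cast hK
  set T := (2 * ((N : ℝ) + K - 2) + σ ^ 2 * N) with hT
  have hT0 : 0 ≤ T := by
    have : 0 ≤ σ ^ 2 * N := by positivity
    rw [hT]; linarith
  have hTN : T = N * (2 * (nn N + kk K N) + σ ^ 2) := by
    rw [hT, nn, kk]; field_simp; ring
  have hpsd : ∀ s : Fin K → Fin N → Bool, (Am (toSign s)).PosSemidef := fun s => by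
    simpa [Am] using Matrix.posSemidef_conjTranspose_mul_self (Stilde (toSign s))
  have htr : ∀ s : Fin K → Fin N → Bool, ((Wr s) ^ Q).trace
      = ∑ j, (N * (hpsd s).1.eigenvalues j) ^ Q := fun s => by
    rw [Wr_eq hN, smul_pow, Matrix.trace_smul, trace_pow_eq _ (hpsd s).1, smul_eq_mul,
      Finset.mul_sum]
    simp only [mul_pow]
  have hbad : ∀ s, ¬ P s → T ^ Q ≤ ((Wr s) ^ Q).trace := by
    intro s hs
    have : ∃ j, 2 * (nn N + kk K N) + σ ^ 2 ≤ (hpsd s).1.eigenvalues j := by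
      by_contra! hcon
      apply hs
      rw [hP]
      intro y i
      exact det_conv σ (toSign s) hσ (fun i a => by simp only [toSign]; split_ifs <;> norm_num)
        hK hN (hpsd s).1 (hpsd s).eigenvalues_nonneg hcon y i
    obtain ⟨j, hj⟩ := this
    rw [htr]
    calc T ^ Q ≤ (N * (hpsd s).1.eigenvalues j) ^ Q := by
          apply pow_le_pow_left₀ hT0
          rw [hTN]
          gcongr
      _ ≤ _ := Finset.single_le_sum (f := fun j => (N * (hpsd s).1.eigenvalues j) ^ Q)
          (fun j _ => pow_nonneg (mul_nonneg hN'.le ((hpsd s).eigenvalues_nonneg j)) _)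
          (Finset.mem_univ j)
  have hnn : ∀ s : Fin K → Fin N → Bool, 0 ≤ ((Wr s) ^ Q).trace := fun s => by
    rw [htr]
    exact Finset.sum_nonneg
      (fun j _ => pow_nonneg (mul_nonneg hN'.le ((hpsd s).eigenvalues_nonneg j)) _)
  have hcard : (2 ^ (K * N) - (Nat.card {s // P s} : ℝ))
      = (#{s : Fin K → Fin N → Bool | ¬ P s} : ℝ) := by
    have h1 := Finset.card_filter_add_card_filter_not
      (s := (Finset.univ : Finset (Fin K → Fin N → Bool))) P
    have h2 : (Finset.univ : Finset (Fin K → Fin N → Bool)).card = 2 ^ (K * N) := by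
      rw [Finset.card_univ]
      simp [← pow_mul, mul_comm]
    have h3 : Nat.card {s // P s} = #{s : Fin K → Fin N → Bool | P s} := by
      rw [Nat.card_eq_fintype_card, Fintype.card_subtype]
    rw [h3, sub_eq_iff_eq_add']
    rw [h2] at h1
    exact_mod_cast h1.symm
  rw [hcard, ← sum_trace]
  calc _ = ∑ s ∈ ({s : Fin K → Fin N → Bool | ¬ P s} : Finset _), T ^ Q := by
        rw [Finset.sum_const, nsmul_eq_mul]
    _ ≤ ∑ s ∈ ({s : Fin K → Fin N → Bool | ¬ P s} : Finset _), ((Wr s) ^ Q).trace :=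
        Finset.sum_le_sum fun s hs => hbad s (by simpa using hs)
    _ ≤ _ := Finset.sum_le_sum_of_subset_of_nonneg (Finset.subset_univ _) fun s _ _ => hnn s

lemma mo_bound {K N : ℕ} (hK : 1 ≤ K) (hN : 1 ≤ N) (Q : ℕ) :
    mo (Fin K) (Fin N) Q ≤ (((N : ℝ) + Q + 4 * Q ^ 3) + 3 * K) / 2 *
      (2 * (((N : ℝ) + Q + 4 * Q ^ 3) + K)) ^ Q := by
  refine rec_bound (mo (Fin K) (Fin N)) N K Q (by exact_mod_cast hN) (by exact_mod_cast hK)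
    mo_nonneg (by simpa using mo_zero (I := Fin K) (J := Fin N)) (fun q => ?_) _ rfl Q le_rfl
  simpa using mo_rec (I := Fin K) (J := Fin N) q

lemma log_ev (c ε : ℝ) (hc : 0 < c) (hε : 0 < ε) : ∃ N0 : ℕ, 1 ≤ N0 ∧ ∀ N : ℕ, N0 ≤ N →
    (⌈c * Real.log N⌉₊ : ℝ) + 4 * (⌈c * Real.log N⌉₊ : ℝ) ^ 3 + 2 ≤ ε * N := by
  have h1 := (Real.isLittleO_pow_log_id_atTop (n := 3)).def
    (show 0 < ε / (7 * (c + 1) ^ 3) by positivity)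
  have h2 := tendsto_natCast_atTop_atTop (R := ℝ) |>.eventually h1
  have h3 := (Real.tendsto_log_atTop.comp (tendsto_natCast_atTop_atTop (R := ℝ))).eventually
    (Filter.eventually_ge_atTop 1)
  obtain ⟨M, hM⟩ := Filter.eventually_atTop.1 (h2.and h3)
  refine ⟨M + 1, by omega, fun N hN => ?_⟩
  obtain ⟨h4, h5⟩ := hM N (by omega)
  simp only [Function.comp, id] at h4 h5
  have hl : 0 ≤ Real.log N := by linarith
  rw [Real.norm_of_nonneg (by positivity), Real.norm_of_nonneg (by positivity)] at h4
  set q : ℝ := (⌈c * Real.log N⌉₊ : ℝ) with hq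
  have hq0 : 0 ≤ q := by positivity
  have hq1 : q ≤ (c + 1) * Real.log N := by
    have := (Nat.ceil_lt_add_one (show 0 ≤ c * Real.log N by positivity)).le
    rw [hq]; linarith
  set r := (c + 1) * Real.log N with hr
  have hr1 : 1 ≤ r := by rw [hr]; nlinarith
  have hr3 : r ^ 3 * 7 ≤ ε * N := by
    rw [hr, mul_pow]
    calc _ ≤ (c + 1) ^ 3 * (ε / (7 * (c + 1) ^ 3) * N) * 7 := by gcongr
      _ = _ := by field_simp
  have h6 : q ^ 3 ≤ r ^ 3 := by gcongr
  have h7 : r ≤ r ^ 3 := le_self_pow₀ hr1 (by norm_num)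
  linarith

lemma asym (σ α a : ℝ) (hσ : 0 < σ) (hα : 0 < α) (ha : 0 < a) :
    ∃ C₁ : ℝ, 0 < C₁ ∧ ∃ N0 : ℕ, ∀ N : ℕ, 1 ≤ N → N0 ≤ N → ∀ K : ℕ, (K : ℝ) ≤ α * N + 1 →
      1 ≤ K → ∃ Q : ℕ,
      0 < (2 * ((N : ℝ) + K - 2) + σ ^ 2 * N) ∧
      (((N : ℝ) + Q + 4 * Q ^ 3) + 3 * K) / 2 * (2 * (((N : ℝ) + Q + 4 * Q ^ 3) + K)) ^ Q
      ≤ C₁ * (N : ℝ) ^ (-a) * (2 * ((N : ℝ) + K - 2) + σ ^ 2 * N) ^ Q := by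
  set ε := σ ^ 2 / 4 with hε
  have hε0 : 0 < ε := by positivity
  set M := 2 * (1 + ε + α + 1) with hM
  have hM0 : 0 < M := by positivity
  set δ := σ ^ 2 / 2 / M with hδ
  have hδ0 : 0 < δ := by positivity
  have hlog : 0 < Real.log (1 + δ) := Real.log_pos (by linarith)
  set c := (a + 1) / Real.log (1 + δ) with hc
  have hc0 : 0 < c := by positivity
  obtain ⟨N0, -, hN0⟩ := log_ev c ε hc0 hε0
  refine ⟨(1 + ε + 3 * α + 3) / 2, by positivity, N0, fun N hN hNN K hK hK1 => ?_⟩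
  have hb := hN0 N hNN
  have hN1 : (1 : ℝ) ≤ N := by exact_mod_cast hN
  have hK1' : (1 : ℝ) ≤ K := by exact_mod_cast hK1
  refine ⟨⌈c * Real.log N⌉₊, ?_, ?_⟩
  · have : 0 < σ ^ 2 * N := by positivity
    linarith
  have hceil := Nat.le_ceil (c * Real.log N)
  set Q := ⌈c * Real.log N⌉₊
  set X := (N : ℝ) + Q + 4 * Q ^ 3 with hX
  set T := 2 * ((N : ℝ) + K - 2) + σ ^ 2 * N with hT
  have hX0 : 0 < X := by positivity
  have hXle : X ≤ (1 + ε) * N := by rw [hX]; linarith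
  have hKle : (K : ℝ) ≤ (α + 1) * N := by linarith
  have hT2 : 2 * (X + K) + σ ^ 2 / 2 * N ≤ T := by
    rw [hX, hT]; rw [hε] at hb; linarith
  have hMN : 2 * (X + K) ≤ M * N := by rw [hM]; linarith
  have hT3 : (1 + δ) * (2 * (X + K)) ≤ T := by
    have : δ * (2 * (X + K)) ≤ δ * (M * N) := by gcongr
    have h2 : δ * (M * N) = σ ^ 2 / 2 * N := by rw [hδ]; field_simp
    linarith
  have hpow : (N : ℝ) ^ (a + 1) ≤ (1 + δ) ^ Q := by
    rw [← Real.rpow_natCast (1 + δ) Q, Real.rpow_def_of_pos (by linarith),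
      Real.rpow_def_of_pos (by linarith)]
    apply Real.exp_le_exp.2
    calc Real.log N * (a + 1) = Real.log (1 + δ) * (c * Real.log N) := by rw [hc]; field_simp
      _ ≤ _ := by gcongr
  have hTQ : (N : ℝ) ^ (a + 1) * (2 * (X + K)) ^ Q ≤ T ^ Q := by
    calc _ ≤ (1 + δ) ^ Q * (2 * (X + K)) ^ Q := by gcongr
      _ = ((1 + δ) * (2 * (X + K))) ^ Q := (mul_pow _ _ _).symm
      _ ≤ _ := by gcongr
  have hNa : (N : ℝ) ^ (-a) * (N : ℝ) ^ (a + 1) = N := by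
    rw [← Real.rpow_add (by linarith)]; simp
  calc (X + 3 * K) / 2 * (2 * (X + K)) ^ Q
      ≤ ((1 + ε + 3 * α + 3) / 2 * N) * (2 * (X + K)) ^ Q := by
        gcongr; linarith
    _ = (1 + ε + 3 * α + 3) / 2 * (N : ℝ) ^ (-a) * ((N : ℝ) ^ (a + 1) * (2 * (X + K)) ^ Q) := by
        nth_rewrite 1 [← hNa]; ring
    _ ≤ _ := by gcongr

end BPP

theorem bp_convergence_and_correctness (σ α a : ℝ) (hσ : 0 < σ) (hα : 0 < α) (ha : 0 < a) :
    ∃ C : ℝ, 0 < C ∧ ∀ N : ℕ, 1 ≤ N →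
      (1 - C * (N : ℝ) ^ (-a)) * 2 ^ (⌈α * (N : ℝ)⌉₊ * N) ≤
        (Nat.card {s : Fin ⌈α * (N : ℝ)⌉₊ → Fin N → Bool //
          ∀ (y : Fin N → ℝ) (i : Fin ⌈α * (N : ℝ)⌉₊),
            ∃ Linf Ginf : ℝ,
              Filter.Tendsto (fun t => BP.Lout σ (toSign s) t i)
                Filter.atTop (nhds Linf) ∧
              Filter.Tendsto (fun t => BP.Gout σ (toSign s) y t i)
                Filter.atTop (nhds Ginf) ∧
              Ginf / Linf = mmseEstimate σ (toSign s) y i} : ℝ) := by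
  obtain ⟨C₁, hC₁, N0, h⟩ := BPP.asym σ α a hσ hα ha
  refine ⟨max C₁ ((N0 : ℝ) ^ a), lt_max_of_lt_left hC₁, fun N hN => ?_⟩
  have hN1 : (1 : ℝ) ≤ N := by exact_mod_cast hN
  have hNa : 0 < (N : ℝ) ^ (-a) := Real.rpow_pos_of_pos (by linarith) _
  rcases le_or_gt N0 N with hNN | hNN
  · have hK1 : 1 ≤ ⌈α * (N : ℝ)⌉₊ := Nat.one_le_ceil_iff.2 (by positivity)
    have hK2 := (Nat.ceil_lt_add_one (show 0 ≤ α * (N : ℝ) by positivity)).le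
    generalize ⌈α * (N : ℝ)⌉₊ = K at *
    obtain ⟨Q, hT, hQ⟩ := h N hN hNN K hK2 hK1
    have hb := BPP.bad_bound σ hσ hK1 hN Q _ (fun s => Iff.rfl)
    have hm := BPP.mo_bound hK1 hN Q
    have h2 : (0 : ℝ) < 2 ^ (K * N) := by positivity
    have h3 := hb.trans (mul_le_mul_of_nonneg_left (hm.trans hQ) h2.le)
    have h4 := le_of_mul_le_mul_right (h3.trans_eq (mul_assoc _ _ _).symm) (pow_pos hT Q)
    have h5 : C₁ * (N : ℝ) ^ (-a) * 2 ^ (K * N)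
        ≤ max C₁ ((N0 : ℝ) ^ a) * (N : ℝ) ^ (-a) * 2 ^ (K * N) := by
      gcongr; exact le_max_left _ _
    linarith
  · have h1 : 1 ≤ max C₁ ((N0 : ℝ) ^ a) * (N : ℝ) ^ (-a) := by
      have hle : (N : ℝ) ^ a ≤ max C₁ ((N0 : ℝ) ^ a) :=
        le_trans (Real.rpow_le_rpow (by linarith) (by exact_mod_cast hNN.le) ha.le)
          (le_max_right _ _)
      calc (1 : ℝ) = (N : ℝ) ^ a * (N : ℝ) ^ (-a) := by
            rw [← Real.rpow_add (by linarith)]; simp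
        _ ≤ _ := by gcongr
    have h2 : (0 : ℝ) ≤ 2 ^ (⌈α * (N : ℝ)⌉₊ * N) := by positivity
    refine le_trans (mul_nonpos_of_nonpos_of_nonneg (by linarith) h2) (Nat.cast_nonneg _)
end

section
/- For each α > 0 and each κ > 1 there exist a positive integer N₀ = N₀(α, κ) and a constant C(α, κ) > 0, both independent of N and t, such that for all integers N > N₀, all integers K with 1 ≤ K ≤ αN, and all integers t with 1 ≤ t ≤ (N/1000)^{1/6}: E Tr[(Ωᵗ)ᵀ·Ωᵗ] ≤ N^{2t+2}·α^{t+1}·(1 + C(α, κ)·t⁶·κᵗ/N), where the expectation is over the i.i.d. uniform ±1 entries s_{ia} of the signature matrix. -/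
open Matrix

/-- The NK×NK matrix Ω with Ω_{(i,a),(k,b)} = 0 if i = k or a = b, and
Ω_{(i,a),(k,b)} = s_{ib}·s_{kb} otherwise. -/
def Omega {K N : ℕ} (s : Fin K → Fin N → ℝ) :
    Matrix (Fin K × Fin N) (Fin K × Fin N) ℝ :=
  Matrix.of fun p q =>
    if p.1 = q.1 ∨ p.2 = q.2 then 0 else s p.1 q.2 * s q.1 q.2

set_option linter.unusedSectionVars false

structure SideOK {J P : Type} (e : J → P) (τ : J → J) : Prop where
  surj : Function.Surjective e
  eτ : ∀ j, e (τ j) = e j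
  ne : ∀ j, τ j ≠ j
  fib : ∀ j k, e j = e k → k = j ∨ k = τ j

structure AdmS {J P : Type} (e : J → P) (τ : J → J) (p0 : P) (π : J → J) : Prop where
  inv : ∀ j, π (π j) = j
  fpf : ∀ j, π j ≠ j
  nb : ∀ j, e j ≠ p0 → π j ≠ τ j

def glue {J P : Type} (e : J → P) (π : J → J) : Setoid P :=
  Relation.EqvGen.setoid (fun p q => ∃ j, e j = p ∧ e (π j) = q)

open Classical in
noncomputable def cls {J P : Type} [Fintype P] (e : J → P) (π : J → J) (p : P) : Finset P :=
  Finset.univ.filter (fun q => (glue e π).r p q)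

def BadP {J P : Type} [Fintype P] (e : J → P) (p0 : P) (π : J → J) (p : P) : Prop :=
  (glue e π).r p p0 ∨ 3 ≤ (cls e π p).card

section Side
variable {J P : Type} [Fintype P] {e : J → P} {τ : J → J} {p0 : P} {π : J → J}

lemma glue_step (j : J) : (glue e π).r (e j) (e (π j)) :=
  Relation.EqvGen.rel _ _ ⟨j, rfl, rfl⟩

lemma mem_cls {p q : P} : q ∈ cls e π p ↔ (glue e π).r p q := by
  simp [cls]

lemma cls_congr {p q : P} (h : (glue e π).r p q) : cls e π p = cls e π q := by
  ext x
  rw [mem_cls, mem_cls]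
  exact ⟨fun hx => (glue e π).trans' ((glue e π).symm' h) hx, fun hx => (glue e π).trans' h hx⟩

lemma badP_congr {p q : P} (h : (glue e π).r p q) : BadP e p0 π p ↔ BadP e p0 π q := by
  unfold BadP
  rw [cls_congr h]
  have : (glue e π).r p p0 ↔ (glue e π).r q p0 :=
    ⟨fun hx => (glue e π).trans' ((glue e π).symm' h) hx, fun hx => (glue e π).trans' h hx⟩
  rw [this]

lemma badP_p0 : BadP e p0 π p0 := Or.inl ((glue e π).refl' _)

lemma ne_step (hs : SideOK e τ) (ha : AdmS e τ p0 π) (j : J) (h : e j ≠ p0) : e (π j) ≠ e j := by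
  intro h1
  rcases hs.fib j (π j) h1.symm with h2 | h2
  · exact ha.fpf j h2
  · exact ha.nb j h h2

lemma good_comm (hs : SideOK e τ) (ha : AdmS e τ p0 π) (j : J) (h : ¬ BadP e p0 π (e j)) :
    π (τ j) = τ (π j) ∧ e (π j) ≠ p0 := by
  classical
  unfold BadP at h
  push Not at h
  obtain ⟨h1, h2⟩ := h
  have hj : e j ≠ p0 := by
    intro hh; apply h1; rw [hh]
  have a1 := glue_step (e := e) (π := π) j
  have a2 := glue_step (e := e) (π := π) (τ j)
  rw [hs.eτ] at a2
  have n1 := ne_step hs ha j hj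
  have n2 := ne_step hs ha (τ j) (by rwa [hs.eτ])
  rw [hs.eτ] at n2
  refine ⟨?_, fun hh => h1 (hh ▸ a1)⟩
  have heq : e (π j) = e (π (τ j)) := by
    by_contra hne
    have hsub : ({e j, e (π j), e (π (τ j))} : Finset P) ⊆ cls e π (e j) := by
      intro x hx
      simp only [Finset.mem_insert, Finset.mem_singleton] at hx
      rw [mem_cls]
      rcases hx with rfl | rfl | rfl
      · exact (glue e π).refl' _
      · exact a1
      · exact a2
    have := Finset.card_le_card hsub
    rw [Finset.card_eq_three.mpr ⟨_, _, _, n1.symm, n2.symm, hne, rfl⟩] at this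
    omega
  rcases hs.fib _ _ heq with h3 | h3
  · have := congrArg π h3
    rw [ha.inv, ha.inv] at this
    exact absurd this (hs.ne j)
  · exact h3

lemma two_le_cls (hs : SideOK e τ) (ha : AdmS e τ p0 π) (p : P) (h : p ≠ p0) :
    2 ≤ (cls e π p).card := by
  classical
  obtain ⟨j, rfl⟩ := hs.surj p
  have n1 := ne_step hs ha j h
  have hsub : ({e j, e (π j)} : Finset P) ⊆ cls e π (e j) := by
    intro x hx
    simp only [Finset.mem_insert, Finset.mem_singleton] at hx
    rw [mem_cls]
    rcases hx with rfl | rfl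
    · exact (glue e π).refl' _
    · exact glue_step j
  have := Finset.card_le_card hsub
  rwa [Finset.card_pair n1.symm] at this

open Classical in
lemma class_bound (hs : SideOK e τ) (ha : AdmS e τ p0 π) :
    6 * Nat.card (Quotient (glue e π)) + (Finset.univ.filter (fun p => BadP e p0 π p)).card
      ≤ 3 * Fintype.card P + 4 := by
  let _ : Fintype (Quotient (glue e π)) := Fintype.ofFinite _
  rw [Nat.card_eq_fintype_card]
  let w : P → ℕ := fun p => if p = p0 then 6 else if BadP e p0 π p then 2 else 3
  have key : ∀ q : Quotient (glue e π), 6 ≤ ∑ p with Quotient.mk (glue e π) p = q, w p := by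
    intro q
    induction q using Quotient.inductionOn with
    | h p =>
    have hc : (Finset.univ.filter (fun p' => Quotient.mk (glue e π) p' = Quotient.mk (glue e π) p))
        = cls e π p := by
      ext x
      simp only [Finset.mem_filter, Finset.mem_univ, true_and, mem_cls]
      rw [Quotient.eq]
      exact ⟨fun h => (glue e π).symm' h, fun h => (glue e π).symm' h⟩
    rw [hc]
    by_cases h0 : (glue e π).r p p0
    · calc 6 = w p0 := by simp [w]
        _ ≤ _ := Finset.single_le_sum (f := w) (fun _ _ => Nat.zero_le _) (mem_cls.mpr h0)
    · have hne : ∀ x ∈ cls e π p, x ≠ p0 := by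
        intro x hx hh
        rw [mem_cls] at hx
        exact h0 (hh ▸ hx)
      by_cases hb : BadP e p0 π p
      · have h3 : 3 ≤ (cls e π p).card := hb.resolve_left h0
        have : (cls e π p).card • 2 ≤ ∑ x ∈ cls e π p, w x := by
          apply Finset.card_nsmul_le_sum
          intro x hx
          simp only [w, if_neg (hne x hx)]
          split_ifs <;> omega
        rw [smul_eq_mul] at this
        omega
      · have h3 := two_le_cls hs ha p (hne p (mem_cls.mpr ((glue e π).refl' _)))
        have : (cls e π p).card • 3 ≤ ∑ x ∈ cls e π p, w x := by
          apply Finset.card_nsmul_le_sum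
          intro x hx
          have : ¬ BadP e p0 π x := by rwa [← badP_congr (mem_cls.mp hx)]
          simp only [w, if_neg (hne x hx), if_neg this]
          omega
        rw [smul_eq_mul] at this
        omega
  have h1 : Fintype.card (Quotient (glue e π)) * 6 ≤ ∑ p, w p := by
    rw [← Finset.sum_fiberwise (s := Finset.univ) (g := fun p => Quotient.mk (glue e π) p) (f := w)]
    have := Finset.card_nsmul_le_sum (Finset.univ : Finset (Quotient (glue e π))) _ 6
      (fun q _ => key q)
    simpa using this
  have h2 : ∑ p, w p + (Finset.univ.filter (fun p => BadP e p0 π p)).card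
      = 3 * Fintype.card P + 4 := by
    rw [Finset.card_filter, ← Finset.sum_add_distrib]
    have : ∀ p, w p + (if BadP e p0 π p then 1 else 0) = 3 + if p = p0 then 4 else 0 := by
      intro p
      simp only [w]
      by_cases hp : p = p0
      · subst hp; simp [badP_p0]
      · simp only [if_neg hp]; split_ifs <;> rfl
    rw [Finset.sum_congr rfl (fun p _ => this p), Finset.sum_add_distrib]
    simp [Finset.card_univ, mul_comm]
  omega

lemma count_inv [Finite J] (n : ℕ) :
    Nat.card {x : P → Fin n // ∀ j, x (e j) = x (e (π j))} ≤ n ^ Nat.card (Quotient (glue e π)) := by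
  have : Nat.card (Quotient (glue e π) → Fin n) = n ^ Nat.card (Quotient (glue e π)) := by
    rw [Nat.card_fun]; simp
  rw [← this]
  have hl : ∀ x : {x : P → Fin n // ∀ j, x (e j) = x (e (π j))}, ∀ a b,
      (glue e π).r a b → x.1 a = x.1 b := by
    intro x a b h
    induction h with
    | rel a b h => obtain ⟨j, rfl, rfl⟩ := h; exact x.2 j
    | refl a => rfl
    | symm a b _ ih => exact ih.symm
    | trans a b c _ _ i1 i2 => exact i1.trans i2
  refine Nat.card_le_card_of_injective (fun x => Quotient.lift x.1 (hl x)) ?_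
  intro x y h
  apply Subtype.ext
  funext p
  exact congrFun h (Quotient.mk _ p)
end Side

def ev (h : ℕ) (j : Fin (4 * h + 2)) : Fin (2 * h + 1) :=
  ⟨if j.1 = 4 * h + 1 then 0 else (j.1 + 1) / 2, by split_ifs <;> omega⟩
def od (h : ℕ) (j : Fin (4 * h + 2)) : Fin (2 * h + 1) := ⟨j.1 / 2, by omega⟩
def te (h : ℕ) (j : Fin (4 * h + 2)) : Fin (4 * h + 2) :=
  ⟨if j.1 % 2 = 0 then (if j.1 = 0 then 4 * h + 1 else j.1 - 1)
    else (if j.1 = 4 * h + 1 then 0 else j.1 + 1), by split_ifs <;> omega⟩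
def tq (h : ℕ) (j : Fin (4 * h + 2)) : Fin (4 * h + 2) :=
  ⟨if j.1 % 2 = 0 then j.1 + 1 else j.1 - 1, by split_ifs <;> omega⟩

lemma side_e (h : ℕ) : SideOK (ev h) (te h) where
  surj := by
    intro p
    refine ⟨⟨2 * p.1, by omega⟩, ?_⟩
    apply Fin.ext; simp only [ev]; split_ifs <;> omega
  eτ := by intro j; apply Fin.ext; simp only [ev, te]; split_ifs <;> omega
  ne := by
    intro j hj
    have := congrArg Fin.val hj
    simp only [te] at this; split_ifs at this <;> omega
  fib := by
    intro j k hjk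
    have := congrArg Fin.val hjk
    simp only [ev] at this
    rw [Fin.ext_iff, Fin.ext_iff]
    simp only [te]; split_ifs at this ⊢ <;> omega

lemma side_o (h : ℕ) : SideOK (od h) (tq h) where
  surj := by
    intro p
    refine ⟨⟨2 * p.1, by omega⟩, ?_⟩
    apply Fin.ext; simp only [od]; omega
  eτ := by intro j; apply Fin.ext; simp only [od, tq]; split_ifs <;> omega
  ne := by
    intro j hj
    have := congrArg Fin.val hj
    simp only [tq] at this; split_ifs at this <;> omega
  fib := by
    intro j k hjk
    have := congrArg Fin.val hjk
    simp only [od] at this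
    rw [Fin.ext_iff, Fin.ext_iff]
    simp only [tq]; split_ifs at this ⊢ <;> omega

def hO (h : ℕ) : Fin (2 * h + 1) := ⟨h, by omega⟩

def Adm (h : ℕ) (π : Fin (4 * h + 2) → Fin (4 * h + 2)) : Prop :=
  AdmS (ev h) (te h) 0 π ∧ AdmS (od h) (tq h) (hO h) π

def badS (h : ℕ) (π : Fin (4 * h + 2) → Fin (4 * h + 2)) (j : Fin (4 * h + 2)) : Prop :=
  if j.1 % 2 = 0 then BadP (ev h) 0 π (ev h j) else BadP (od h) (hO h) π (od h j)

open Classical in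
noncomputable def Dset (h : ℕ) (π : Fin (4 * h + 2) → Fin (4 * h + 2)) : Finset (Fin (4 * h + 2)) :=
  Finset.univ.filter (badS h π)

def mL (h : ℕ) : Fin (4 * h + 2) := ⟨2 * h + 1, by omega⟩

section Spec
variable {h : ℕ} {π : Fin (4 * h + 2) → Fin (4 * h + 2)}

lemma mem_D {j} : j ∈ Dset h π ↔ badS h π j := by simp [Dset]

lemma zero_mem_D : (0 : Fin (4 * h + 2)) ∈ Dset h π := by
  rw [mem_D]
  simp only [badS, Fin.val_zero, Nat.zero_mod, if_true]
  have : ev h 0 = 0 := by apply Fin.ext; simp [ev]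
  rw [this]; exact badP_p0

lemma mL_mem_D : mL h ∈ Dset h π := by
  rw [mem_D]
  have : od h (mL h) = hO h := by apply Fin.ext; simp only [od, mL, hO]; omega
  have h2 : ¬ (mL h).1 % 2 = 0 := by simp only [mL]; omega
  simp only [badS, if_neg h2, this]; exact badP_p0

lemma prop_D (ha : Adm h π) {j : Fin (4 * h + 2)} (hj : j ∉ Dset h π) :
    ∃ i : Fin (4 * h + 2), i.1 + 1 = j.1 ∧
      π j = (if j.1 % 2 = 0 then te h (π i) else tq h (π i)) ∧
      ((π j).1 = (π i).1 + 1 ∨ (π i).1 = (π j).1 + 1) ∧ π i ≠ j ∧ π j ≠ i := by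
  have hj0 : j ≠ 0 := fun hh => hj (hh ▸ zero_mem_D)
  have hj0' : j.1 ≠ 0 := fun hh => hj0 (Fin.ext hh)
  refine ⟨⟨j.1 - 1, by omega⟩, by simp only; omega, ?_⟩
  set i : Fin (4 * h + 2) := ⟨j.1 - 1, by omega⟩ with hi
  rw [mem_D, badS] at hj
  split_ifs at hj ⊢ with hp
  · have hti : te h i = j := by
      apply Fin.ext; simp only [te, hi]; split_ifs <;> omega
    have hei : ev h j = ev h i := by rw [← hti, (side_e h).eτ]
    rw [hei] at hj
    obtain ⟨c1, c2⟩ := good_comm (side_e h) ha.1 i hj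
    have hi0 : ev h i ≠ 0 := fun hh => hj (by rw [hh]; exact badP_p0)
    have n1 := ha.1.nb i hi0
    rw [hti] at c1 n1
    refine ⟨c1, ?_, n1, ?_⟩
    · rw [c1]
      have : (π i).1 ≠ 0 := by
        intro hh; apply c2; apply Fin.ext; simp [ev, hh]
      have : (π i).1 ≠ 4 * h + 1 := by
        intro hh; apply c2; apply Fin.ext; simp [ev, hh]
      simp only [te]; split_ifs <;> omega
    · intro hh; apply n1; rw [← hh, ha.1.inv]
  · have hti : tq h i = j := by
      apply Fin.ext; simp only [tq, hi]; split_ifs <;> omega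
    have hei : od h j = od h i := by rw [← hti, (side_o h).eτ]
    rw [hei] at hj
    obtain ⟨c1, c2⟩ := good_comm (side_o h) ha.2 i hj
    have hi0 : od h i ≠ hO h := fun hh => hj (by rw [hh]; exact badP_p0)
    have n1 := ha.2.nb i hi0
    rw [hti] at c1 n1
    refine ⟨c1, ?_, n1, ?_⟩
    · rw [c1]
      simp only [tq]; split_ifs <;> omega
    · intro hh; apply n1; rw [← hh, ha.1.inv]

lemma closed_D {j : Fin (4 * h + 2)} (hj : j ∈ Dset h π) :
    π j ∈ Dset h π ∨ te h (π j) ∈ Dset h π ∨ tq h (π j) ∈ Dset h π := by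
  simp only [mem_D, badS] at hj ⊢
  by_cases hp : j.1 % 2 = 0
  · rw [if_pos hp, badP_congr (glue_step j)] at hj
    by_cases hq : (π j).1 % 2 = 0
    · left; rwa [if_pos hq]
    · right; left
      have : (te h (π j)).1 % 2 = 0 := by simp only [te]; split_ifs <;> omega
      rw [if_pos this, (side_e h).eτ]; exact hj
  · rw [if_neg hp, badP_congr (glue_step j)] at hj
    by_cases hq : (π j).1 % 2 = 0
    · right; right
      have : ¬ (tq h (π j)).1 % 2 = 0 := by simp only [tq]; split_ifs <;> omega
      rw [if_neg this, (side_o h).eτ]; exact hj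
    · left; rwa [if_neg hq]

noncomputable def cE (h : ℕ) (π : Fin (4 * h + 2) → Fin (4 * h + 2)) : ℕ :=
  Nat.card (Quotient (glue (ev h) π))
noncomputable def cO (h : ℕ) (π : Fin (4 * h + 2) → Fin (4 * h + 2)) : ℕ :=
  Nat.card (Quotient (glue (od h) π))

lemma card_bounds (ha : Adm h π) :
    cE h π ≤ h + 1 ∧ cO h π ≤ h + 1 ∧ 6 * (cE h π + cO h π) + (Dset h π).card ≤ 12 * h + 14 := by
  classical
  have b1 := class_bound (side_e h) ha.1
  have b2 := class_bound (side_o h) ha.2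
  rw [Fintype.card_fin] at b1 b2
  have p1 : 1 ≤ (Finset.univ.filter (fun p => BadP (ev h) 0 π p)).card :=
    Finset.card_pos.mpr ⟨0, by simp [badP_p0]⟩
  have p2 : 1 ≤ (Finset.univ.filter (fun p => BadP (od h) (hO h) π p)).card :=
    Finset.card_pos.mpr ⟨hO h, by simp [badP_p0]⟩
  have e1 : ((Dset h π).filter (fun j => j.1 % 2 = 0)).card ≤
      (Finset.univ.filter (fun p => BadP (ev h) 0 π p)).card := by
    apply Finset.card_le_card_of_injOn (ev h)
    · intro j hj
      simp only [Finset.coe_filter, mem_D, badS, Set.mem_ofPred_eq, Finset.mem_univ, true_and] at hj ⊢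
      rw [if_pos hj.2] at hj; exact hj.1
    · intro j hj k hk hjk
      simp only [Finset.coe_filter, Set.mem_ofPred_eq] at hj hk
      have := congrArg Fin.val hjk
      simp only [ev] at this
      apply Fin.ext
      split_ifs at this <;> omega
  have e2 : ((Dset h π).filter (fun j => ¬ j.1 % 2 = 0)).card ≤
      (Finset.univ.filter (fun p => BadP (od h) (hO h) π p)).card := by
    apply Finset.card_le_card_of_injOn (od h)
    · intro j hj
      simp only [Finset.coe_filter, mem_D, badS, Set.mem_ofPred_eq, Finset.mem_univ, true_and] at hj ⊢
      rw [if_neg hj.2] at hj; exact hj.1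
    · intro j hj k hk hjk
      simp only [Finset.coe_filter, Set.mem_ofPred_eq] at hj hk
      have := congrArg Fin.val hjk
      simp only [od] at this
      apply Fin.ext
      omega
  have e3 := Finset.card_filter_add_card_filter_not (s := Dset h π) (fun j => j.1 % 2 = 0)
  unfold cE cO
  omega

lemma status_step (ha : Adm h π) {i j : Fin (4 * h + 2)} (hij : i.1 + 1 = j.1)
    (h1 : (π j).1 = (π i).1 + 1 ∨ (π i).1 = (π j).1 + 1) (h2 : π i ≠ j) (h3 : π j ≠ i) :
    (π j < j ↔ π i < i) := by
  have f1 := ha.1.fpf i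
  have f2 := ha.1.fpf j
  rw [Ne, Fin.ext_iff] at f1 f2 h2 h3
  rw [Fin.lt_def, Fin.lt_def]
  omega

lemma status_eq {π' : Fin (4 * h + 2) → Fin (4 * h + 2)} (ha : Adm h π) (ha' : Adm h π')
    (hD : Dset h π = Dset h π') (hS : ∀ j ∈ Dset h π, (π j < j ↔ π' j < j)) :
    ∀ n, ∀ j : Fin (4 * h + 2), j.1 = n → (π j < j ↔ π' j < j) := by
  intro n
  induction n with
  | zero => intro j hj; exact hS j (by rw [show j = 0 from Fin.ext hj]; exact zero_mem_D)
  | succ n ih =>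
    intro j hj
    by_cases hjD : j ∈ Dset h π
    · exact hS j hjD
    · obtain ⟨i, a1, a2, a3, a4, a5⟩ := prop_D ha hjD
      obtain ⟨i', b1, b2, b3, b4, b5⟩ := prop_D ha' (hD ▸ hjD)
      have : i' = i := Fin.ext (by omega)
      subst this
      rw [status_step ha a1 a3 a4 a5, status_step ha' b1 b3 b4 b5]
      exact ih i' (by omega)

lemma val_eq {π' : Fin (4 * h + 2) → Fin (4 * h + 2)} (ha : Adm h π) (ha' : Adm h π')
    (hD : Dset h π = Dset h π') (hS : ∀ j ∈ Dset h π, (π j < j ↔ π' j < j)) (c : Prop)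
    (hv : ∀ j ∈ Dset h π, (π j < j ↔ c) → π j = π' j) :
    ∀ n, ∀ j : Fin (4 * h + 2), j.1 = n → (π j < j ↔ c) → π j = π' j := by
  intro n
  induction n with
  | zero => intro j hj; exact hv j (by rw [show j = 0 from Fin.ext hj]; exact zero_mem_D)
  | succ n ih =>
    intro j hj hc
    by_cases hjD : j ∈ Dset h π
    · exact hv j hjD hc
    · obtain ⟨i, a1, a2, a3, a4, a5⟩ := prop_D ha hjD
      obtain ⟨i', b1, b2, b3, b4, b5⟩ := prop_D ha' (hD ▸ hjD)
      have : i' = i := Fin.ext (by omega)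
      subst this
      rw [status_step ha a1 a3 a4 a5] at hc
      rw [a2, b2, ih i' (by omega) hc]

lemma det_eq {π' : Fin (4 * h + 2) → Fin (4 * h + 2)} (ha : Adm h π) (ha' : Adm h π')
    (hD : Dset h π = Dset h π') (hS : ∀ j ∈ Dset h π, (π j < j ↔ π' j < j)) (c : Prop)
    (hv : ∀ j ∈ Dset h π, (π j < j ↔ c) → π j = π' j) : π = π' := by
  funext j
  by_cases hc : (π j < j ↔ c)
  · exact val_eq ha ha' hD hS c hv _ j rfl hc
  · have hk : (π (π j) < π j ↔ c) := by
      rw [ha.1.inv]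
      have := ha.1.fpf j
      rcases lt_or_gt_of_ne this with h1 | h1
      · have : ¬ (j < π j) := not_lt.mpr h1.le
        tauto
      · have : ¬ (π j < j) := not_lt.mpr h1.le
        tauto
    have := val_eq ha ha' hD hS c hv _ (π j) rfl hk
    rw [ha.1.inv] at this
    conv_rhs => rw [this, ha'.1.inv]

open Classical in
lemma count_DS (D S : Finset (Fin (4 * h + 2))) (hS : S ⊆ D) :
    (Finset.univ.filter (fun π => Adm h π ∧ Dset h π = D ∧ D.filter (fun j => π j < j) = S)).card
      ≤ (3 * D.card) ^ (D.card / 2) := by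
  set X := Finset.univ.filter
    (fun π => Adm h π ∧ Dset h π = D ∧ D.filter (fun j => π j < j) = S) with hX
  set E : Finset (Fin (4 * h + 2)) := Finset.univ.filter
    (fun k => k ∈ D ∨ te h k ∈ D ∨ tq h k ∈ D) with hE
  have te_inv : Function.Injective (te h) := by
    intro a b hab
    have := congrArg Fin.val hab
    apply Fin.ext; simp only [te] at this; split_ifs at this <;> omega
  have to_inv : Function.Injective (tq h) := by
    intro a b hab
    have := congrArg Fin.val hab
    apply Fin.ext; simp only [tq] at this; split_ifs at this <;> omega
  have hEc : E.card ≤ 3 * D.card := by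
    rw [hE, Finset.filter_or, Finset.filter_or]
    refine (Finset.card_union_le _ _).trans ?_
    have h1 : (Finset.univ.filter (Membership.mem D)).card ≤ D.card :=
      Finset.card_le_card (by intro x; simp)
    have h2 : (Finset.univ.filter (fun k => te h k ∈ D)).card ≤ D.card :=
      Finset.card_le_card_of_injOn (te h) (by intro x; simp) te_inv.injOn
    have h3 : (Finset.univ.filter (fun k => tq h k ∈ D)).card ≤ D.card :=
      Finset.card_le_card_of_injOn (tq h) (by intro x; simp) to_inv.injOn
    have := Finset.card_union_le (Finset.univ.filter (fun k => te h k ∈ D))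
      (Finset.univ.filter (fun k => tq h k ∈ D))
    omega
  have gen : ∀ (c : Prop) (U : Finset (Fin (4 * h + 2))), U ⊆ D →
      (∀ π ∈ X, ∀ j ∈ D, (π j < j ↔ c) → j ∈ U) → X.card ≤ (3 * D.card) ^ U.card := by
    intro c U hU hc
    have : X.card ≤ (U.pi (fun _ => E)).card := by
      apply Finset.card_le_card_of_injOn (fun π => fun j _ => π j)
      · intro π hπ
        have hπ' := (Finset.mem_filter.mp (Finset.mem_coe.mp hπ)).2
        rw [Finset.mem_coe, Finset.mem_pi]
        intro j hj
        rw [hE, Finset.mem_filter]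
        refine ⟨Finset.mem_univ _, ?_⟩
        have := closed_D (h := h) (π := π) (j := j) (by rw [hπ'.2.1]; exact hU hj)
        rwa [hπ'.2.1] at this
      · intro π hπ π' hπ' heq
        have a := (Finset.mem_filter.mp (Finset.mem_coe.mp hπ)).2
        have a' := (Finset.mem_filter.mp (Finset.mem_coe.mp hπ')).2
        apply det_eq a.1 a'.1 (a.2.1.trans a'.2.1.symm) _ c
        · intro j hj hjc
          rw [a.2.1] at hj
          have hjU := hc π hπ j hj hjc
          exact congrFun (congrFun heq j) hjU
        · intro j hj
          rw [a.2.1] at hj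
          have := a.2.2.trans a'.2.2.symm
          have := Finset.ext_iff.mp this j
          simpa [hj] using this
    rw [Finset.card_pi, Finset.prod_const] at this
    exact this.trans (Nat.pow_le_pow_left hEc _)
  have hmem : ∀ π ∈ X, ∀ j ∈ D, (π j < j ↔ j ∈ S) := by
    intro π hπ j hj
    have a := (Finset.mem_filter.mp hπ).2
    rw [← a.2.2, Finset.mem_filter]; tauto
  have g1 := gen True S hS (by
    intro π hπ j hj hc
    exact (hmem π hπ j hj).mp (by tauto))
  have g2 := gen False (D \ S) Finset.sdiff_subset (by
    intro π hπ j hj hc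
    rw [Finset.mem_sdiff]
    refine ⟨hj, fun hh => ?_⟩
    have := (hmem π hπ j hj).mpr hh
    tauto)
  have hc := Finset.card_sdiff_add_card_eq_card hS
  rcases Nat.eq_zero_or_pos D.card with h0 | h0
  · have : S.card = 0 := by omega
    rw [this] at g1; rw [h0]; simpa using g1
  by_cases hh : S.card ≤ D.card / 2
  · exact g1.trans (Nat.pow_le_pow_right (by omega) hh)
  · exact g2.trans (Nat.pow_le_pow_right (by omega) (by omega))

open Classical in
lemma count_D (D : Finset (Fin (4 * h + 2))) :
    (Finset.univ.filter (fun π => Adm h π ∧ Dset h π = D)).card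
      ≤ 2 ^ D.card * (3 * D.card) ^ (D.card / 2) := by
  have : (Finset.univ.filter (fun π => Adm h π ∧ Dset h π = D)) ⊆
      D.powerset.biUnion (fun S => Finset.univ.filter
        (fun π => Adm h π ∧ Dset h π = D ∧ D.filter (fun j => π j < j) = S)) := by
    intro π hπ
    rw [Finset.mem_biUnion]
    refine ⟨D.filter (fun j => π j < j), ?_, ?_⟩
    · simp
    · simp only [Finset.mem_filter, Finset.mem_univ, true_and] at hπ ⊢
      exact ⟨hπ.1, hπ.2, trivial⟩
  refine (Finset.card_le_card this).trans (Finset.card_biUnion_le.trans ?_)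
  have hb := Finset.sum_le_card_nsmul D.powerset (fun S => (Finset.univ.filter
        (fun π => Adm h π ∧ Dset h π = D ∧ D.filter (fun j => π j < j) = S)).card)
        ((3 * D.card) ^ (D.card / 2)) (fun S hS => count_DS D S (Finset.mem_powerset.mp hS))
  rw [Finset.card_powerset D, smul_eq_mul] at hb
  exact hb

lemma mL_val (ha : Adm h π) (hD : Dset h π = {0, mL h}) : (π (mL h)).1 = 2 * h := by
  have h1 : BadP (od h) (hO h) π (od h (π (mL h))) := by
    rw [← badP_congr (glue_step (mL h))]
    have : od h (mL h) = hO h := by apply Fin.ext; simp only [od, mL, hO]; omega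
    rw [this]; exact badP_p0
  set k := π (mL h) with hk
  have hf := ha.1.fpf (mL h)
  rw [← hk, Ne, Fin.ext_iff] at hf
  have fin : ∀ m : Fin (4 * h + 2), ¬ m.1 % 2 = 0 → od h m = od h k → m.1 = 2 * h + 1 := by
    intro m hm hmk
    have : m ∈ Dset h π := by rw [mem_D, badS, if_neg hm, hmk]; exact h1
    rw [hD] at this
    simp only [Finset.mem_insert, Finset.mem_singleton] at this
    rcases this with h | h
    · rw [h] at hm; simp at hm
    · rw [h]; rfl
  simp only [mL] at hf
  by_cases hp : k.1 % 2 = 0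
  · have := fin (tq h k) (by simp only [tq]; split_ifs; omega) ((side_o h).eτ k)
    simp only [tq] at this; split_ifs at this; omega
  · have := fin k hp rfl
    omega

lemma uniq_main {π' : Fin (4 * h + 2) → Fin (4 * h + 2)} (ha : Adm h π) (ha' : Adm h π')
    (hD : Dset h π = {0, mL h}) (hD' : Dset h π' = {0, mL h}) : π = π' := by
  have e1 := mL_val ha hD
  have e2 := mL_val ha' hD'
  apply det_eq ha ha' (hD.trans hD'.symm) _ True
  · intro j hj hc
    rw [hD] at hj
    simp only [Finset.mem_insert, Finset.mem_singleton] at hj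
    rcases hj with rfl | rfl
    · simp at hc
    · apply Fin.ext; omega
  · intro j hj
    rw [hD] at hj
    simp only [Finset.mem_insert, Finset.mem_singleton] at hj
    rcases hj with rfl | rfl
    · simp
    · rw [Fin.lt_def, Fin.lt_def, e1, e2]
end Spec

lemma exists_inv (A : Type) [Fintype A] (hA : Even (Fintype.card A)) :
    ∃ ρ : A → A, (∀ a, ρ (ρ a) = a) ∧ ∀ a, ρ a ≠ a := by
  obtain ⟨k, hk⟩ := hA
  have e : A ≃ Fin k × Bool := Fintype.equivOfCardEq (by simp [hk]; ring)
  refine ⟨fun a => e.symm ((e a).1, !(e a).2), ?_, ?_⟩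
  · intro a; simp
  · intro a ha
    have := congrArg e ha
    simp [Prod.ext_iff] at this

lemma exists_pairing {J T : Type} [Fintype J] [DecidableEq T] (f : J → T)
    (he : ∀ y, Even (Finset.univ.filter (fun j => f j = y)).card) :
    ∃ π : J → J, (∀ j, π (π j) = j) ∧ (∀ j, π j ≠ j) ∧ ∀ j, f (π j) = f j := by
  have : ∀ y, ∃ ρ : {j // f j = y} → {j // f j = y}, (∀ a, ρ (ρ a) = a) ∧ ∀ a, ρ a ≠ a := by
    intro y
    apply exists_inv
    rw [Fintype.card_subtype]; exact he y
  choose ρ h1 h2 using this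
  have key : ∀ (k : J) (y : T) (hy : f k = y), (ρ (f k) ⟨k, rfl⟩).1 = (ρ y ⟨k, hy⟩).1 := by
    intro k y hy; subst hy; rfl
  refine ⟨fun j => (ρ (f j) ⟨j, rfl⟩).1, ?_, ?_, ?_⟩
  · intro j
    simp only
    rw [key _ (f j) (ρ (f j) ⟨j, rfl⟩).2]
    have := h1 (f j) ⟨j, rfl⟩
    exact congrArg Subtype.val this
  · intro j hj
    exact h2 (f j) ⟨j, rfl⟩ (Subtype.ext hj)
  · intro j; exact (ρ (f j) ⟨j, rfl⟩).2

structure IsW (h K N : ℕ) (x : (Fin (2 * h + 1) → Fin K) × (Fin (2 * h + 1) → Fin N)) : Prop where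
  n1 : ∀ j, ev h j ≠ 0 → x.2 (od h (te h j)) ≠ x.2 (od h j)
  n2 : ∀ j, od h j ≠ hO h → x.1 (ev h (tq h j)) ≠ x.1 (ev h j)
  evn : ∀ y, Even (Finset.univ.filter (fun j => (x.1 (ev h j), x.2 (od h j)) = y)).card

open Classical in
noncomputable def WS (h K N : ℕ) :
    Finset ((Fin (2 * h + 1) → Fin K) × (Fin (2 * h + 1) → Fin N)) :=
  Finset.univ.filter (IsW h K N)

open Classical in
lemma card_W (h K N : ℕ) : (WS h K N).card ≤
    ∑ π ∈ Finset.univ.filter (Adm h), K ^ cE h π * N ^ cO h π := by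
  have hsub : WS h K N ⊆ (Finset.univ.filter (Adm h)).biUnion (fun π =>
      (Finset.univ.filter (fun x : Fin (2 * h + 1) → Fin K =>
          ∀ j, x (ev h j) = x (ev h (π j)))) ×ˢ
        (Finset.univ.filter (fun x : Fin (2 * h + 1) → Fin N =>
          ∀ j, x (od h j) = x (od h (π j))))) := by
    intro x hx
    have hx := (Finset.mem_filter.mp hx).2
    obtain ⟨π, p1, p2, p3⟩ := exists_pairing _ hx.evn
    simp only [Prod.mk.injEq] at p3
    simp only [Finset.mem_biUnion, Finset.mem_product, Finset.mem_filter, Finset.mem_univ, true_and]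
    refine ⟨π, ⟨⟨p1, p2, ?_⟩, ⟨p1, p2, ?_⟩⟩, fun j => (p3 j).1.symm, fun j => (p3 j).2.symm⟩
    · intro j hj hh
      apply hx.n1 j hj; rw [← hh]; exact (p3 j).2
    · intro j hj hh
      apply hx.n2 j hj; rw [← hh]; exact (p3 j).1
  refine (Finset.card_le_card hsub).trans (Finset.card_biUnion_le.trans ?_)
  apply Finset.sum_le_sum
  intro π _
  rw [Finset.card_product]
  have c1 := count_inv (e := ev h) (π := π) K
  have c2 := count_inv (e := od h) (π := π) N
  rw [Nat.card_eq_fintype_card, Fintype.card_subtype] at c1 c2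
  exact Nat.mul_le_mul c1 c2

lemma pow_path {V : Type} [Fintype V] [DecidableEq V] (A : Matrix V V ℝ) (t : ℕ) :
    ∀ p q, (A ^ t) p q = ∑ f : Fin (t + 1) → V, if f 0 = p ∧ f (Fin.last t) = q then
      ∏ r : Fin t, A (f r.castSucc) (f r.succ) else 0 := by
  induction t with
  | zero =>
    intro p q
    rw [← (Equiv.funUnique (Fin 1) V).symm.sum_comp]
    simp [Matrix.one_apply, Equiv.funUnique]
    by_cases hpq : p = q
    · subst hpq
      simp only [and_self, if_true]
      rw [eq_comm, Nat.cast_eq_one, Finset.card_eq_one]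
      exact ⟨p, by ext; simp⟩
    · rw [if_neg hpq, eq_comm, Nat.cast_eq_zero, Finset.card_eq_zero, Finset.filter_eq_empty_iff]
      rintro x _ ⟨rfl, rfl⟩
      exact hpq rfl
  | succ t ih =>
    intro p q
    rw [pow_succ', Matrix.mul_apply]
    rw [← (Fin.consEquiv (fun _ : Fin (t + 2) => V)).sum_comp, Fintype.sum_prod_type]
    symm
    rw [Finset.sum_eq_single p]
    · simp_rw [ih, Finset.mul_sum]
      rw [Finset.sum_comm]
      apply Finset.sum_congr rfl
      intro g _
      rw [Finset.sum_eq_single (g 0)]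
      · simp only [Fin.consEquiv, Equiv.coe_fn_mk, Fin.cons_zero, true_and]
        rw [← Fin.succ_last, Fin.cons_succ]
        rw [Fin.prod_univ_succ]
        simp only [← Fin.succ_castSucc, Fin.cons_succ, Fin.castSucc_zero, Fin.cons_zero]
        by_cases hq : g (Fin.last t) = q
        · simp [hq]
        · simp [hq]
      · intro b _ hb
        rw [if_neg, mul_zero]; rintro ⟨h1, _⟩; exact hb h1.symm
      · intro hh; exact absurd (Finset.mem_univ _) hh
    · intro b _ hb
      apply Finset.sum_eq_zero
      intro g _
      rw [if_neg]; rintro ⟨h1, _⟩; exact hb h1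
    · intro hh; exact absurd (Finset.mem_univ _) hh

lemma sign_sum_le {J : Type} [Fintype J] {K N : ℕ} (ed : J → Fin K × Fin N) :
    (∑ s : Fin K → Fin N → Bool, ∏ j, toSign s (ed j).1 (ed j).2) ≤
      if (∀ y, Even (Finset.univ.filter (fun j => ed j = y)).card) then (2 : ℝ) ^ (K * N) else 0 := by
  split_ifs with he
  · have : ∀ s ∈ (Finset.univ : Finset (Fin K → Fin N → Bool)),
        ∏ j, toSign s (ed j).1 (ed j).2 ≤ (1 : ℝ) := by
      intro s _
      refine (le_abs_self _).trans ?_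
      rw [Finset.abs_prod]
      apply le_of_eq
      apply Finset.prod_eq_one
      intro j _
      unfold toSign; split_ifs <;> simp
    refine (Finset.sum_le_card_nsmul _ _ _ this).trans ?_
    simp [Finset.card_univ, ← pow_mul, mul_comm]
  · push Not at he
    obtain ⟨y, hy⟩ := he
    rw [Nat.not_even_iff_odd] at hy
    let fl : (Fin K → Fin N → Bool) → (Fin K → Fin N → Bool) :=
      fun s i a => if (i, a) = y then !(s i a) else s i a
    have hfl : Function.Involutive fl := by
      intro s; funext i a; simp only [fl]; split_ifs <;> simp
    have h1 := Equiv.sum_comp (Function.Involutive.toPerm fl hfl) (fun s : Fin K → Fin N → Bool => ∏ j, toSign s (ed j).1 (ed j).2)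
    have h2 : ∀ s, ∏ j, toSign (Function.Involutive.toPerm fl hfl s) (ed j).1 (ed j).2
        = - ∏ j, toSign s (ed j).1 (ed j).2 := by
      intro s
      have : ∀ j, toSign (Function.Involutive.toPerm fl hfl s) (ed j).1 (ed j).2 =
          (if ed j = y then (-1 : ℝ) else 1) * toSign s (ed j).1 (ed j).2 := by
        intro j
        simp only [Function.Involutive.coe_toPerm, fl, toSign, Prod.mk.eta]
        by_cases hj : ed j = y
        · simp only [hj, if_true]
          cases s y.1 y.2 <;> simp
        · simp [hj]
      rw [Finset.prod_congr rfl (fun j _ => this j), Finset.prod_mul_distrib, Finset.prod_ite]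
      simp only [Finset.prod_const, one_pow, mul_one]
      rw [hy.neg_one_pow]; ring
    simp_rw [h2] at h1
    rw [Finset.sum_neg_distrib] at h1
    linarith

def xKn {K N : ℕ} (h : ℕ) (F G : ℕ → Fin K × Fin N) (m : ℕ) : Fin K :=
  if m ≤ h then (F m).1 else (G (2 * h + 1 - m)).1
def xNn {K N : ℕ} (h : ℕ) (F G : ℕ → Fin K × Fin N) (m : ℕ) : Fin N :=
  if m ≤ h then (F (m + 1)).2 else (G (2 * h + 1 - m)).2

def NBp {K N : ℕ} (h : ℕ) (F : ℕ → Fin K × Fin N) : Prop :=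
  ∀ r, r ≤ h → (F r).1 ≠ (F (r + 1)).1 ∧ (F r).2 ≠ (F (r + 1)).2

lemma xK_ev {K N : ℕ} {h : ℕ} {F G : ℕ → Fin K × Fin N} (h0 : F 0 = G 0) (j : Fin (4 * h + 2)) :
    xKn h F G (ev h j).1 = xKn h F G ((j.1 + 1) / 2) := by
  simp only [ev]
  split_ifs with hj
  · rw [hj]
    have : (4 * h + 1 + 1) / 2 = 2 * h + 1 := by omega
    rw [this]
    simp [xKn, h0]
    intro hh; omega
  · rfl

lemma nb_isW_n1 {K N : ℕ} {h : ℕ} {F G : ℕ → Fin K × Fin N}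
    (hl : F (h + 1) = G (h + 1)) (hF : NBp h F) (hG : NBp h G) (m : ℕ) (h1 : 1 ≤ m)
    (h2 : m ≤ 2 * h) : xNn h F G (m - 1) ≠ xNn h F G m := by
  unfold xNn
  by_cases a : m ≤ h
  · rw [if_pos (by omega), if_pos a, Nat.sub_add_cancel h1]
    exact (hF m a).2
  · by_cases b : m = h + 1
    · subst b
      rw [if_pos (by omega), if_neg a]
      have e1 : h + 1 - 1 + 1 = h + 1 := by omega
      have e2 : 2 * h + 1 - (h + 1) = h := by omega
      rw [e1, e2, hl]
      exact (hG h le_rfl).2.symm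
    · rw [if_neg (by omega), if_neg a]
      have e1 : 2 * h + 1 - (m - 1) = (2 * h + 1 - m) + 1 := by omega
      rw [e1]
      exact (hG _ (by omega)).2.symm

lemma nb_isW_n2 {K N : ℕ} {h : ℕ} {F G : ℕ → Fin K × Fin N}
    (hF : NBp h F) (hG : NBp h G) (m : ℕ) (h1 : m ≠ h)
    (h2 : m ≤ 2 * h) : xKn h F G m ≠ xKn h F G (m + 1) := by
  unfold xKn
  by_cases a : m < h
  · rw [if_pos (by omega), if_pos (by omega)]
    exact (hF m a.le).1
  · rw [if_neg (by omega), if_neg (by omega)]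
    have e1 : 2 * h + 1 - m = (2 * h + 1 - (m + 1)) + 1 := by omega
    rw [e1]
    exact (hG _ (by omega)).1.symm

lemma isW_of {K N : ℕ} {h : ℕ} {F G : ℕ → Fin K × Fin N} (h0 : F 0 = G 0)
    (hl : F (h + 1) = G (h + 1)) (hF : NBp h F) (hG : NBp h G)
    (he : ∀ y, Even (Finset.univ.filter (fun j : Fin (4 * h + 2) =>
      (xKn h F G ((j.1 + 1) / 2), xNn h F G (j.1 / 2)) = y)).card) :
    IsW h K N (fun m => xKn h F G m.1, fun m => xNn h F G m.1) where
  n1 := by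
    intro j hj
    have hj' : (ev h j).1 ≠ 0 := fun hh => hj (Fin.ext hh)
    have key := nb_isW_n1 hl hF hG (ev h j).1 (by omega) (by omega)
    have hne : j.1 ≠ 4 * h + 1 := by
      intro hh; apply hj'; simp only [ev]; rw [if_pos hh]
    have hn0 : j.1 ≠ 0 := by
      intro hh; apply hj'; simp only [ev]; rw [if_neg hne]; simp [hh]
    have hev : (ev h j).1 = (j.1 + 1) / 2 := by simp only [ev]; rw [if_neg hne]
    rw [hev] at key
    by_cases hp : j.1 % 2 = 0
    · have q1 : (od h (te h j)).1 = (j.1 + 1) / 2 - 1 := by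
        simp only [od, te]; split_ifs <;> first | omega | (simp only []; omega)
      have q2 : (od h j).1 = (j.1 + 1) / 2 := by simp only [od]; omega
      simp only [q1, q2]
      first | exact key | exact key.symm
    · have q1 : (od h (te h j)).1 = (j.1 + 1) / 2 := by
        simp only [od, te]; split_ifs <;> first | omega | (simp only []; omega)
      have q2 : (od h j).1 = (j.1 + 1) / 2 - 1 := by simp only [od]; omega
      simp only [q1, q2]
      first | exact key | exact key.symm
  n2 := by
    intro j hj
    have hj' : (od h j).1 ≠ h := fun hh => hj (Fin.ext hh)
    have key := nb_isW_n2 hF hG (od h j).1 hj' (by omega)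
    simp only
    rw [xK_ev h0, xK_ev h0]
    simp only [od, tq] at *
    split_ifs with a
    · have e1 : (j.1 + 1 + 1) / 2 = j.1 / 2 + 1 := by omega
      have e2 : (j.1 + 1) / 2 = j.1 / 2 := by omega
      rw [e1, e2]; exact key.symm
    · have e1 : (j.1 - 1 + 1) / 2 = j.1 / 2 := by omega
      have e2 : (j.1 + 1) / 2 = j.1 / 2 + 1 := by omega
      rw [e1, e2]; exact key
  evn := by
    intro y
    have := he y
    simp only [xK_ev h0, od]
    exact this

lemma prod_range_double (φ : ℕ → ℝ) (n : ℕ) :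
    ∏ j ∈ Finset.range (2 * n), φ j = ∏ m ∈ Finset.range n, (φ (2 * m) * φ (2 * m + 1)) := by
  induction n with
  | zero => simp
  | succ n ih =>
    rw [Finset.prod_range_succ _ n, ← ih, show 2 * (n + 1) = 2 * n + 1 + 1 by ring,
      Finset.prod_range_succ, Finset.prod_range_succ]
    ring

lemma prod_edges {K N : ℕ} {h : ℕ} {F G : ℕ → Fin K × Fin N}
    (hl : F (h + 1) = G (h + 1)) (s : Fin K → Fin N → ℝ) (hs : ∀ i a, s i a * s i a = 1) :
    (∏ r ∈ Finset.range (h + 1), (s (F r).1 (F (r + 1)).2 * s (F (r + 1)).1 (F (r + 1)).2)) *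
    (∏ r ∈ Finset.range (h + 1), (s (G r).1 (G (r + 1)).2 * s (G (r + 1)).1 (G (r + 1)).2)) =
    ∏ j : Fin (4 * h + 2), s (xKn h F G ((j.1 + 1) / 2)) (xNn h F G (j.1 / 2)) := by
  have e0 : ∏ j : Fin (4 * h + 2), s (xKn h F G ((j.1 + 1) / 2)) (xNn h F G (j.1 / 2))
    = ∏ j ∈ Finset.range (4 * h + 2), s (xKn h F G ((j + 1) / 2)) (xNn h F G (j / 2)) :=
    Fin.prod_univ_eq_prod_range (fun j => s (xKn h F G ((j + 1) / 2)) (xNn h F G (j / 2))) _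
  rw [e0, show 4 * h + 2 = 2 * (h + 1 + h) by ring, prod_range_double, Finset.prod_range_add _ (h + 1) h,
    Finset.prod_range_succ _ h, Finset.prod_range_succ _ h, Finset.prod_range_succ _ h]
  have e1 : ∀ m, (2 * m + 1) / 2 = m := by intro m; omega
  have e2 : ∀ m, 2 * m / 2 = m := by intro m; omega
  have e3 : ∀ m, (2 * m + 1 + 1) / 2 = m + 1 := by intro m; omega
  simp only [e1, e2, e3]
  have a1 : ∏ m ∈ Finset.range h, (s (xKn h F G m) (xNn h F G m) * s (xKn h F G (m + 1)) (xNn h F G m))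
     = ∏ r ∈ Finset.range h, (s (F r).1 (F (r + 1)).2 * s (F (r + 1)).1 (F (r + 1)).2) := by
    apply Finset.prod_congr rfl
    intro m hm
    have hm := Finset.mem_range.mp hm
    simp only [xKn, xNn, if_pos hm.le, if_pos (show m + 1 ≤ h by omega)]
  have a2 : ∏ m ∈ Finset.range h, (s (xKn h F G (h + 1 + m)) (xNn h F G (h + 1 + m)) *
        s (xKn h F G (h + 1 + m + 1)) (xNn h F G (h + 1 + m)))
     = ∏ r ∈ Finset.range h, (s (G r).1 (G (r + 1)).2 * s (G (r + 1)).1 (G (r + 1)).2) := by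
    rw [← Finset.prod_range_reflect]
    apply Finset.prod_congr rfl
    intro m hm
    have hm := Finset.mem_range.mp hm
    simp only [xKn, xNn]
    rw [if_neg (by omega), if_neg (by omega), if_neg (by omega)]
    have f1 : 2 * h + 1 - (h + 1 + (h - 1 - m)) = m + 1 := by omega
    have f2 : 2 * h + 1 - (h + 1 + (h - 1 - m) + 1) = m := by omega
    rw [f1, f2]; ring
  rw [a1, a2]
  have f1 : xKn h F G h = (F h).1 := by simp [xKn]
  have f2 : xNn h F G h = (G (h + 1)).2 := by simp [xNn, hl]
  have f3 : xKn h F G (h + 1) = (G h).1 := by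
    simp only [xKn]; rw [if_neg (by omega)]; congr 2; omega
  rw [f1, f2, f3, hl]
  have := hs (G (h + 1)).1 (G (h + 1)).2
  linear_combination (∏ r ∈ Finset.range h, (s (F r).1 (F (r + 1)).2 * s (F (r + 1)).1 (F (r + 1)).2)) *
    (∏ r ∈ Finset.range h, (s (G r).1 (G (r + 1)).2 * s (G (r + 1)).1 (G (r + 1)).2)) *
    s (F h).1 (G (h + 1)).2 * s (G h).1 (G (h + 1)).2 * this

def extN {V : Type} {h : ℕ} (f : Fin (h + 2) → V) (n : ℕ) : V :=
  if hn : n < h + 2 then f ⟨n, hn⟩ else f 0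

lemma omega_prod {K N h : ℕ} (s : Fin K → Fin N → ℝ) (f : Fin (h + 2) → Fin K × Fin N) :
    ∏ r : Fin (h + 1), Omega s (f r.castSucc) (f r.succ) =
    ∏ r ∈ Finset.range (h + 1), Omega s (extN f r) (extN f (r + 1)) := by
  rw [← Fin.prod_univ_eq_prod_range (fun r => Omega s (extN f r) (extN f (r + 1)))]
  apply Finset.prod_congr rfl
  intro r _
  have h1 : extN f r.1 = f r.castSucc := by
    simp only [extN]; rw [dif_pos (by omega)]; rfl
  have h2 : extN f (r.1 + 1) = f r.succ := by
    simp only [extN]; rw [dif_pos (by omega)]; rfl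
  rw [h1, h2]

lemma omega_nb {K N h : ℕ} (s : Fin K → Fin N → ℝ) (F : ℕ → Fin K × Fin N) (hF : NBp h F) :
    ∏ r ∈ Finset.range (h + 1), Omega s (F r) (F (r + 1)) =
    ∏ r ∈ Finset.range (h + 1), (s (F r).1 (F (r + 1)).2 * s (F (r + 1)).1 (F (r + 1)).2) := by
  apply Finset.prod_congr rfl
  intro r hr
  have := hF r (by have := Finset.mem_range.mp hr; omega)
  simp only [Omega, Matrix.of_apply]
  rw [if_neg]; tauto

lemma omega_not_nb {K N h : ℕ} (s : Fin K → Fin N → ℝ) (F : ℕ → Fin K × Fin N) (hF : ¬ NBp h F) :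
    ∏ r ∈ Finset.range (h + 1), Omega s (F r) (F (r + 1)) = 0 := by
  unfold NBp at hF
  push Not at hF
  obtain ⟨r, hr, hh⟩ := hF
  apply Finset.prod_eq_zero (Finset.mem_range.mpr (show r < h + 1 by omega))
  simp only [Omega, Matrix.of_apply]
  rw [if_pos]; tauto

open Classical in
lemma pair_bound {K N h : ℕ} (F G : ℕ → Fin K × Fin N) (h0 : F 0 = G 0)
    (hl : F (h + 1) = G (h + 1)) :
    ∑ s : Fin K → Fin N → Bool,
      (∏ r ∈ Finset.range (h + 1), Omega (toSign s) (F r) (F (r + 1))) *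
      (∏ r ∈ Finset.range (h + 1), Omega (toSign s) (G r) (G (r + 1))) ≤
    if ((fun m => xKn h F G m.1, fun m => xNn h F G m.1) ∈ WS h K N)
      then (2 : ℝ) ^ (K * N) else 0 := by
  have pos : (0 : ℝ) ≤ if ((fun m => xKn h F G m.1, fun m => xNn h F G m.1) ∈ WS h K N)
      then (2 : ℝ) ^ (K * N) else 0 := by split_ifs <;> positivity
  by_cases hF : NBp h F
  swap
  · simp only [omega_not_nb _ F hF, zero_mul, Finset.sum_const_zero]; exact pos
  by_cases hG : NBp h G
  swap
  · simp only [omega_not_nb _ G hG, mul_zero, Finset.sum_const_zero]; exact pos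
  have : ∀ s : Fin K → Fin N → Bool, ∀ i a, toSign s i a * toSign s i a = 1 := by
    intro s i a; unfold toSign; split_ifs <;> simp
  simp_rw [omega_nb _ F hF, omega_nb _ G hG]
  rw [Finset.sum_congr rfl (fun s _ => prod_edges hl (toSign s) (this s))]
  have := sign_sum_le (fun j : Fin (4 * h + 2) =>
    ((xKn h F G ((j.1 + 1) / 2), xNn h F G (j.1 / 2)) : Fin K × Fin N))
  refine this.trans ?_
  split_ifs with a b b
  · exact le_rfl
  · exfalso; apply b
    simp only [WS, Finset.mem_filter, Finset.mem_univ, true_and]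
    exact isW_of h0 hl hF hG a
  · positivity
  · exact le_rfl

def TupOK {K N : ℕ} (h : ℕ) (z : ((Fin K × Fin N) × (Fin K × Fin N)) ×
    ((Fin (h + 2) → Fin K × Fin N) × (Fin (h + 2) → Fin K × Fin N))) : Prop :=
  (z.2.1 0 = z.1.1 ∧ z.2.1 (Fin.last _) = z.1.2) ∧ (z.2.2 0 = z.1.1 ∧ z.2.2 (Fin.last _) = z.1.2) ∧
  ((fun m => xKn h (extN z.2.1) (extN z.2.2) m.1, fun m => xNn h (extN z.2.1) (extN z.2.2) m.1)
    ∈ WS h K N)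

lemma ext_zero {V : Type} {h : ℕ} (f : Fin (h + 2) → V) : extN f 0 = f 0 := by
  simp only [extN]; rw [dif_pos (by omega)]; rfl
lemma ext_last {V : Type} {h : ℕ} (f : Fin (h + 2) → V) : extN f (h + 1) = f (Fin.last _) := by
  simp only [extN]; rw [dif_pos (by omega)]; rfl

open Classical in
lemma tup_card (h K N : ℕ) :
    (Finset.univ.filter (TupOK (K := K) (N := N) h)).card ≤ N * K * (WS h K N).card := by
  have e : N * K * (WS h K N).card =
      (((Finset.univ : Finset (Fin N)) ×ˢ (Finset.univ : Finset (Fin K))) ×ˢ (WS h K N)).card := by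
    simp [Finset.card_product]
  rw [e]
  apply Finset.card_le_card_of_injOn (fun z => ((z.1.1.2, z.1.2.1),
    ((fun m => xKn h (extN z.2.1) (extN z.2.2) m.1, fun m => xNn h (extN z.2.1) (extN z.2.2) m.1))))
  · intro z hz
    have := (Finset.mem_filter.mp (Finset.mem_coe.mp hz)).2
    simp only [Finset.coe_product, Set.mem_prod, Finset.mem_coe, Finset.mem_univ, true_and]
    exact this.2.2
  · rintro ⟨⟨p, q⟩, f, g⟩ hz ⟨⟨p', q'⟩, f', g'⟩ hz' heq
    obtain ⟨⟨a1, a2⟩, ⟨a3, a4⟩, _⟩ := (Finset.mem_filter.mp (Finset.mem_coe.mp hz)).2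
    obtain ⟨⟨b1, b2⟩, ⟨b3, b4⟩, _⟩ := (Finset.mem_filter.mp (Finset.mem_coe.mp hz')).2
    simp only [Prod.mk.injEq] at heq a1 a2 a3 a4 b1 b2 b3 b4
    obtain ⟨⟨c1, c2⟩, c3, c4⟩ := heq
    have d3 : ∀ m, m < 2 * h + 1 → xKn h (extN f) (extN g) m = xKn h (extN f') (extN g') m :=
      fun m hm => congrFun c3 ⟨m, hm⟩
    have d4 : ∀ m, m < 2 * h + 1 → xNn h (extN f) (extN g) m = xNn h (extN f') (extN g') m :=
      fun m hm => congrFun c4 ⟨m, hm⟩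
    have hp : p = p' := by
      refine Prod.ext ?_ c1
      have := d3 0 (by omega)
      simp only [xKn, Nat.zero_le, if_true, ext_zero] at this
      rwa [a1, b1] at this
    have hq : q = q' := by
      refine Prod.ext c2 ?_
      have := d4 h (by omega)
      simp only [xNn, le_refl, if_true, ext_last] at this
      rwa [a2, b2] at this
    have ext_v : ∀ (f : Fin (h + 2) → Fin K × Fin N) (n : Fin (h + 2)), f n = extN f n.1 := by
      intro f n; simp only [extN]; rw [dif_pos n.2]
    have hf : f = f' := by
      funext n
      by_cases h1 : n.1 = 0
      · rw [show n = 0 from Fin.ext h1, a1, b1, hp]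
      by_cases h2 : n.1 = h + 1
      · rw [show n = Fin.last _ from Fin.ext h2, a2, b2, hq]
      rw [ext_v f n, ext_v f' n]
      have hn := n.2
      have u1 := d3 n.1 (by omega)
      have u2 := d4 (n.1 - 1) (by omega)
      simp only [xKn, xNn, if_pos (show n.1 ≤ h by omega), if_pos (show n.1 - 1 ≤ h by omega),
        Nat.sub_add_cancel (show 1 ≤ n.1 by omega)] at u1 u2
      exact Prod.ext u1 u2
    have hg : g = g' := by
      funext n
      by_cases h1 : n.1 = 0
      · rw [show n = 0 from Fin.ext h1, a3, b3, hp]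
      by_cases h2 : n.1 = h + 1
      · rw [show n = Fin.last _ from Fin.ext h2, a4, b4, hq]
      rw [ext_v g n, ext_v g' n]
      have hn := n.2
      have u1 := d3 (2 * h + 1 - n.1) (by omega)
      have u2 := d4 (2 * h + 1 - n.1) (by omega)
      simp only [xKn, xNn, if_neg (show ¬ (2 * h + 1 - n.1 ≤ h) by omega),
        show 2 * h + 1 - (2 * h + 1 - n.1) = n.1 by omega] at u1 u2
      exact Prod.ext u1 u2
    rw [hp, hq, hf, hg]

lemma trace_le (h K N : ℕ) :
    (∑ s : Fin K → Fin N → Bool,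
      (((Omega (toSign s)) ^ (h + 1))ᵀ * (Omega (toSign s)) ^ (h + 1)).trace) ≤
    (N * K * (WS h K N).card : ℕ) * (2 : ℝ) ^ (K * N) := by
  classical
  have e1 : ∀ s : Fin K → Fin N → Bool,
      (((Omega (toSign s)) ^ (h + 1))ᵀ * (Omega (toSign s)) ^ (h + 1)).trace =
      ∑ z : ((Fin K × Fin N) × (Fin K × Fin N)) ×
        ((Fin (h + 2) → Fin K × Fin N) × (Fin (h + 2) → Fin K × Fin N)),
        if (z.2.1 0 = z.1.1 ∧ z.2.1 (Fin.last _) = z.1.2) ∧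
          (z.2.2 0 = z.1.1 ∧ z.2.2 (Fin.last _) = z.1.2) then
        (∏ r ∈ Finset.range (h + 1),
          Omega (toSign s) (extN z.2.1 r) (extN z.2.1 (r + 1))) *
        (∏ r ∈ Finset.range (h + 1),
          Omega (toSign s) (extN z.2.2 r) (extN z.2.2 (r + 1))) else 0 := by
    intro s
    rw [Fintype.sum_prod_type, Fintype.sum_prod_type]
    simp only [Matrix.trace, Matrix.diag, Matrix.mul_apply, Matrix.transpose_apply]
    rw [Finset.sum_comm]
    apply Finset.sum_congr rfl
    intro p _
    apply Finset.sum_congr rfl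
    intro q _
    rw [pow_path, Finset.sum_mul_sum, Fintype.sum_prod_type]
    apply Finset.sum_congr rfl
    intro f _
    apply Finset.sum_congr rfl
    intro g _
    rw [omega_prod, omega_prod]
    simp only [ite_and, ite_mul, mul_ite, zero_mul, mul_zero]
    split_ifs <;> rfl
  rw [Finset.sum_congr rfl (fun s _ => e1 s), Finset.sum_comm]
  have e2 : ∀ z ∈ (Finset.univ : Finset (((Fin K × Fin N) × (Fin K × Fin N)) ×
        ((Fin (h + 2) → Fin K × Fin N) × (Fin (h + 2) → Fin K × Fin N)))),
      (∑ s : Fin K → Fin N → Bool, if (z.2.1 0 = z.1.1 ∧ z.2.1 (Fin.last _) = z.1.2) ∧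
          (z.2.2 0 = z.1.1 ∧ z.2.2 (Fin.last _) = z.1.2) then
        (∏ r ∈ Finset.range (h + 1),
          Omega (toSign s) (extN z.2.1 r) (extN z.2.1 (r + 1))) *
        (∏ r ∈ Finset.range (h + 1),
          Omega (toSign s) (extN z.2.2 r) (extN z.2.2 (r + 1))) else 0) ≤
      if TupOK h z then (2 : ℝ) ^ (K * N) else 0 := by
    intro z _
    by_cases hz : (z.2.1 0 = z.1.1 ∧ z.2.1 (Fin.last _) = z.1.2) ∧
          (z.2.2 0 = z.1.1 ∧ z.2.2 (Fin.last _) = z.1.2)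
    · simp only [if_pos hz]
      refine (pair_bound _ _ ?_ ?_).trans ?_
      · rw [ext_zero, ext_zero, hz.1.1, hz.2.1]
      · rw [ext_last, ext_last, hz.1.2, hz.2.2]
      · unfold TupOK
        split_ifs with a b b
        · exact le_rfl
        · exact absurd ⟨hz.1, hz.2, a⟩ b
        · positivity
        · exact le_rfl
    · simp only [if_neg hz, Finset.sum_const_zero]
      split_ifs <;> positivity
  refine (Finset.sum_le_sum e2).trans ?_
  rw [← Finset.sum_filter, Finset.sum_const, nsmul_eq_mul]
  gcongr
  exact tup_card h K N

noncomputable def aSeq (β : ℝ) (B : ℕ) : ℝ :=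
  (4 / β) ^ B * (2 ^ (B + 2) * (3 * ((B : ℝ) + 2)) ^ ((B + 2) / 2)) / (B.factorial : ℝ)

lemma aSeq_nonneg {β : ℝ} (hβ : 0 < β) (B : ℕ) : 0 ≤ aSeq β B := by
  unfold aSeq; positivity

lemma aSeq_sq {β : ℝ} (hβ : 0 < β) (B : ℕ) :
    aSeq β B ^ 2 ≤ 32 * Real.exp 6 * ((4 * (8 / β) ^ 2 * Real.exp 3) ^ B / (B.factorial : ℝ)) := by
  have hf : (0 : ℝ) < (B.factorial : ℝ) := by exact_mod_cast B.factorial_pos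
  have hq : ((3 * ((B : ℝ) + 2)) ^ ((B + 2) / 2)) ^ 2 ≤
      ((B : ℝ) + 2) * ((B : ℝ) + 1) * (B.factorial : ℝ) * (Real.exp 6 * Real.exp 3 ^ B) := by
    have h1 : ((3 * ((B : ℝ) + 2)) ^ ((B + 2) / 2)) ^ 2 ≤ (3 * ((B : ℝ) + 2)) ^ (B + 2) := by
      rw [← pow_mul]
      apply pow_le_pow_right₀
      · have : (0 : ℝ) ≤ B := Nat.cast_nonneg B
        linarith
      · omega
    have h2 := Real.pow_div_factorial_le_exp (3 * ((B : ℝ) + 2)) (by positivity) (B + 2)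
    rw [div_le_iff₀ (by positivity)] at h2
    have h3 : Real.exp (3 * ((B : ℝ) + 2)) = Real.exp 6 * Real.exp 3 ^ B := by
      rw [← Real.exp_nat_mul, ← Real.exp_add]; congr 1; ring
    have h4 : (((B + 2).factorial : ℕ) : ℝ) = ((B : ℝ) + 2) * ((B : ℝ) + 1) * (B.factorial : ℝ) := by
      rw [Nat.factorial_succ, Nat.factorial_succ]; push_cast; ring
    rw [h3, h4] at h2
    linarith
  have hB : ((B : ℝ) + 2) * ((B : ℝ) + 1) ≤ 2 * 4 ^ B := by
    have h1 : (B : ℝ) + 1 ≤ 2 ^ B := by exact_mod_cast Nat.lt_two_pow_self (n := B)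
    have h2 : (B : ℝ) + 2 ≤ 2 * 2 ^ B := by
      have : (1 : ℝ) ≤ 2 ^ B := one_le_pow₀ (by norm_num)
      linarith
    calc ((B : ℝ) + 2) * ((B : ℝ) + 1) ≤ (2 * 2 ^ B) * 2 ^ B := by gcongr
      _ = 2 * 4 ^ B := by
        rw [show (4 : ℝ) = 2 * 2 by norm_num, mul_pow]; ring
  have e : aSeq β B ^ 2 = 16 * ((8 / β) ^ 2) ^ B *
      ((3 * ((B : ℝ) + 2)) ^ ((B + 2) / 2)) ^ 2 / (B.factorial : ℝ) ^ 2 := by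
    unfold aSeq
    generalize (3 * ((B : ℝ) + 2)) ^ ((B + 2) / 2) = q
    have e8 : ((8 / β) ^ 2) ^ B = ((4 / β) ^ B) ^ 2 * (2 ^ B) ^ 2 := by
      rw [show (8 / β) = (4 / β) * 2 by ring, ← pow_mul, mul_comm 2 B, pow_mul, mul_pow, mul_pow]
    rw [e8, pow_add]
    generalize (4 / β) ^ B = r
    ring
  rw [e, div_le_iff₀ (by positivity)]
  calc 16 * ((8 / β) ^ 2) ^ B * ((3 * ((B : ℝ) + 2)) ^ ((B + 2) / 2)) ^ 2
      ≤ 16 * ((8 / β) ^ 2) ^ B * ((2 * 4 ^ B) * (B.factorial : ℝ) * (Real.exp 6 * Real.exp 3 ^ B)) := by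
        gcongr
        refine hq.trans ?_
        gcongr
    _ = _ := by
        rw [mul_pow, mul_pow]
        field_simp
        ring

lemma aSeq_summable {β : ℝ} (hβ : 0 < β) : Summable (aSeq β) := by
  have s1 : Summable (fun B : ℕ => ((1 : ℝ) / 2) ^ B) := summable_geometric_two
  have s2 := (Real.summable_pow_div_factorial (2 * (4 * (8 / β) ^ 2 * Real.exp 3))).mul_left
    (32 * Real.exp 6)
  refine Summable.of_nonneg_of_le (aSeq_nonneg hβ) (fun B => ?_) (s1.add s2)
  have h := aSeq_sq hβ B
  have h0 := aSeq_nonneg hβ B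
  have hp : (0 : ℝ) < 2 ^ B := by positivity
  have e : 32 * Real.exp 6 * ((2 * (4 * (8 / β) ^ 2 * Real.exp 3)) ^ B / (B.factorial : ℝ)) =
    2 ^ B * (32 * Real.exp 6 * ((4 * (8 / β) ^ 2 * Real.exp 3) ^ B / (B.factorial : ℝ))) := by
    rw [mul_pow 2]; ring
  rw [e]
  have h2 : 2 ^ B * aSeq β B ^ 2 ≤ 
    2 ^ B * (32 * Real.exp 6 * ((4 * (8 / β) ^ 2 * Real.exp 3) ^ B / (B.factorial : ℝ))) := by
    gcongr
  refine le_trans ?_ (add_le_add_right h2 _)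
  have e3 : ((1 : ℝ) / 2) ^ B = (2 ^ B)⁻¹ := by rw [one_div, inv_pow]
  rw [e3]
  have h5 : 0 ≤ (2 ^ B : ℝ)⁻¹ * (2 ^ B * aSeq β B - 1) ^ 2 + aSeq β B := by positivity
  have h6 : (2 ^ B : ℝ)⁻¹ * (2 ^ B * aSeq β B - 1) ^ 2 = 
     2 ^ B * aSeq β B ^ 2 - 2 * aSeq β B + (2 ^ B)⁻¹ := by
    field_simp
    ring
  linarith

lemma pow_aux {β N t : ℝ} {B m : ℕ} (hβ : 0 < β) (hβ1 : β ≤ 1) (hx : 1 ≤ β * N) (ht : 1 ≤ t)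
    (hN : t ^ 6 ≤ N) (hB : 1 ≤ B) (hm : B ≤ 6 * m) :
    (t * β) ^ B * N ≤ t ^ 6 * (β * N) ^ m := by
  obtain ⟨p, hp⟩ : ∃ p, (B + 5) / 6 = p + 1 := ⟨(B + 5) / 6 - 1, by omega⟩
  have hN0 : 0 < N := by
    have : (0 : ℝ) < t ^ 6 := by positivity
    linarith
  have h1 : (β * N) ^ (p + 1) ≤ (β * N) ^ m := pow_le_pow_right₀ hx (by omega)
  have h2 : β ^ B ≤ β ^ (p + 1) := pow_le_pow_of_le_one hβ.le hβ1 (by omega)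
  have h3 : t ^ B ≤ t ^ 6 * (t ^ 6) ^ p := by
    rw [← pow_succ', ← pow_mul]; exact pow_le_pow_right₀ ht (by omega)
  calc (t * β) ^ B * N = t ^ B * β ^ B * N := by rw [mul_pow]
    _ ≤ (t ^ 6 * (t ^ 6) ^ p) * β ^ (p + 1) * N := by gcongr
    _ ≤ (t ^ 6 * N ^ p) * β ^ (p + 1) * N := by gcongr
    _ = t ^ 6 * (β * N) ^ (p + 1) := by rw [mul_pow]; ring
    _ ≤ _ := by gcongr

lemma wt_aux {α β N K : ℝ} {t a b : ℕ} (hβ : 0 < β) (hβ1 : β ≤ 1) (hβα : β ≤ α) (hK0 : 0 ≤ K)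
    (hN : 0 ≤ N) (hK : K ≤ α * N) (ha : a ≤ t) (hb : b ≤ t) :
    K ^ a * N ^ b * (β * N) ^ (2 * t - a - b) ≤ α ^ t * N ^ (2 * t) := by
  have e : 2 * t - a - b = (t - a) + (t - b) := by omega
  rw [e, pow_add]
  have hα : 0 ≤ α := hβ.le.trans hβα
  calc K ^ a * N ^ b * ((β * N) ^ (t - a) * (β * N) ^ (t - b))
      ≤ (α * N) ^ a * N ^ b * ((α * N) ^ (t - a) * (1 * N) ^ (t - b)) := by gcongr
    _ = (α * N) ^ (a + (t - a)) * N ^ (b + (t - b)) := by rw [pow_add, pow_add, one_mul]; ring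
    _ = _ := by
      rw [Nat.add_sub_of_le ha, Nat.add_sub_of_le hb, mul_pow, two_mul, pow_add]; ring

open Classical in
lemma WS_bound {α β : ℝ} {h K N : ℕ} (hβ : 0 < β) (hβ1 : β ≤ 1) (hβα : β ≤ α)
    (hK : (K : ℝ) ≤ α * N) (hx : 1 ≤ β * (N : ℝ)) (ht : ((h : ℝ) + 1) ^ 6 ≤ N) :
    ((WS h K N).card : ℝ) ≤ α ^ (h + 1) * (N : ℝ) ^ (2 * (h + 1)) *
      (1 + ((h : ℝ) + 1) ^ 6 / N * ∑' B, aSeq β B) := by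
  have hN0 : (0 : ℝ) < N := by
    have : (0 : ℝ) < ((h : ℝ) + 1) ^ 6 := by positivity
    linarith
  have hα : 0 < α := hβ.trans_le hβα
  set M : ℝ := α ^ (h + 1) * (N : ℝ) ^ (2 * (h + 1)) with hM
  have hM0 : 0 < M := by positivity
  set T : ℝ := (h : ℝ) + 1 with hT
  have hT1 : 1 ≤ T := by rw [hT]; have : (0 : ℝ) ≤ h := Nat.cast_nonneg h; linarith
  set w : (Fin (4 * h + 2) → Fin (4 * h + 2)) → ℝ := 
    fun π => (K : ℝ) ^ cE h π * (N : ℝ) ^ cO h π with hw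
  set A := Finset.univ.filter (Adm h) with hA
  have hne : (0 : Fin (4 * h + 2)) ≠ mL h := by
    intro hh; have := congrArg Fin.val hh; simp [mL] at this
  have hcard2 : ({0, mL h} : Finset (Fin (4 * h + 2))).card = 2 := Finset.card_pair hne
  have hsub2 : ∀ π, ({0, mL h} : Finset (Fin (4 * h + 2))) ⊆ Dset h π := by
    intro π x hx
    rcases Finset.mem_insert.mp hx with rfl | hx
    · exact zero_mem_D
    · rw [Finset.mem_singleton.mp hx]; exact mL_mem_D
  set S : (Fin (4 * h + 2) → Fin (4 * h + 2)) → Finset (Fin (4 * h + 2)) :=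
    fun π => Dset h π \ {0, mL h} with hS
  have hScard : ∀ π, (Dset h π).card = (S π).card + 2 := by
    intro π
    have := Finset.card_sdiff_add_card_eq_card (hsub2 π)
    rw [hcard2] at this
    exact this.symm
  have hSD : ∀ π, Dset h π = S π ∪ {0, mL h} := fun π =>
    (Finset.sdiff_union_of_subset (hsub2 π)).symm
  set g : ℕ → ℝ := fun B => M * (T ^ 6 / N) / (T * β) ^ B with hg
  have hg0 : ∀ B, 0 ≤ g B := by intro B; rw [hg]; positivity
  have hw1 : ∀ π ∈ A, w π ≤ M := by
    intro π hπ
    obtain ⟨b1, b2, b3⟩ := card_bounds (Finset.mem_filter.mp hπ).2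
    have := wt_aux hβ hβ1 hβα (Nat.cast_nonneg K) hN0.le hK b1 b2
    refine le_trans ?_ this
    have h1 : 1 ≤ (β * (N : ℝ)) ^ (2 * (h + 1) - cE h π - cO h π) := one_le_pow₀ hx
    exact le_mul_of_one_le_right (by positivity) h1
  have hw2 : ∀ π ∈ A, 1 ≤ (S π).card → w π ≤ g (S π).card := by
    intro π hπ h1
    obtain ⟨b1, b2, b3⟩ := card_bounds (Finset.mem_filter.mp hπ).2
    have u := wt_aux hβ hβ1 hβα (Nat.cast_nonneg K) hN0.le hK b1 b2
    have v := pow_aux (B := (S π).card) (m := 2 * (h + 1) - cE h π - cO h π) hβ hβ1 hx hT1 ht h1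
      (by have := hScard π; omega)
    simp only [hg]
    rw [le_div_iff₀ (by positivity), ← mul_div_assoc, le_div_iff₀ hN0]
    have hw0 : 0 ≤ w π := by simp only [hw]; positivity
    calc w π * (T * β) ^ (S π).card * N = w π * ((T * β) ^ (S π).card * N) := by ring
      _ ≤ w π * (T ^ 6 * (β * N) ^ (2 * (h + 1) - cE h π - cO h π)) := by gcongr
      _ = (w π * (β * N) ^ (2 * (h + 1) - cE h π - cO h π)) * T ^ 6 := by ring
      _ ≤ M * T ^ 6 := by gcongr
  have hstart : ((WS h K N).card : ℝ) ≤ ∑ π ∈ A, w π := by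
    have := card_W h K N
    calc ((WS h K N).card : ℝ) ≤ ((∑ π ∈ A, K ^ cE h π * N ^ cO h π : ℕ) : ℝ) := by
          exact_mod_cast this
      _ = _ := by push_cast; rfl
  rw [← Finset.sum_filter_add_sum_filter_not A (fun π => S π = ∅)] at hstart
  have p1 : ∑ π ∈ A.filter (fun π => S π = ∅), w π ≤ M := by
    have c1 : (A.filter (fun π => S π = ∅)).card ≤ 1 := by
      rw [Finset.card_le_one]
      intro π hπ π' hπ'
      obtain ⟨a1, a2⟩ := Finset.mem_filter.mp hπ
      obtain ⟨a1', a2'⟩ := Finset.mem_filter.mp hπ'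
      apply uniq_main (Finset.mem_filter.mp a1).2 (Finset.mem_filter.mp a1').2
      · rw [hSD π, a2, Finset.empty_union]
      · rw [hSD π', a2', Finset.empty_union]
    calc ∑ π ∈ A.filter (fun π => S π = ∅), w π ≤ ∑ π ∈ A.filter (fun π => S π = ∅), M :=
          Finset.sum_le_sum (fun π hπ => hw1 π (Finset.mem_filter.mp hπ).1)
      _ = ((A.filter (fun π => S π = ∅)).card : ℝ) * M := by rw [Finset.sum_const, nsmul_eq_mul]
      _ ≤ 1 * M := by
          gcongr
          exact_mod_cast c1
      _ = M := one_mul M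
  have p2 : ∑ π ∈ A.filter (fun π => ¬ S π = ∅), w π ≤ M * (T ^ 6 / N) * ∑' B, aSeq β B := by
    set F : ℕ → ℝ := fun B => (2 ^ (B + 2) * (3 * ((B : ℝ) + 2)) ^ ((B + 2) / 2)) * g B with hF
    have q1 : ∑ π ∈ A.filter (fun π => ¬ S π = ∅), w π ≤
        ∑ R : Finset (Fin (4 * h + 2)), F R.card := by
      rw [← Finset.sum_fiberwise_of_maps_to (g := S) (t := Finset.univ)
        (fun _ _ => Finset.mem_univ _)]
      apply Finset.sum_le_sum
      intro R _
      calc ∑ π ∈ (A.filter (fun π => ¬ S π = ∅)).filter (fun π => S π = R), w π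
          ≤ ∑ π ∈ (A.filter (fun π => ¬ S π = ∅)).filter (fun π => S π = R), g R.card := by
            apply Finset.sum_le_sum
            intro π hπ
            obtain ⟨a1, a2⟩ := Finset.mem_filter.mp hπ
            obtain ⟨a3, a4⟩ := Finset.mem_filter.mp a1
            rw [← a2]
            exact hw2 π a3 (Finset.card_pos.mpr (Finset.nonempty_iff_ne_empty.mpr a4))
        _ = (((A.filter (fun π => ¬ S π = ∅)).filter (fun π => S π = R)).card : ℝ) * g R.card := by
            rw [Finset.sum_const, nsmul_eq_mul]
        _ ≤ F R.card := by
            simp only [hF]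
            apply mul_le_mul_of_nonneg_right _ (hg0 _)
            have hle : ((A.filter (fun π => ¬ S π = ∅)).filter (fun π => S π = R)).card ≤
                2 ^ (R.card + 2) * (3 * (R.card + 2)) ^ ((R.card + 2) / 2) := by
              have hD2 : (R ∪ {0, mL h}).card ≤ R.card + 2 := by
                have := Finset.card_union_le R {0, mL h}
                rwa [hcard2] at this
              calc _ ≤ (Finset.univ.filter
                    (fun π => Adm h π ∧ Dset h π = R ∪ {0, mL h})).card := by
                    apply Finset.card_le_card
                    intro π hπ
                    obtain ⟨a1, a2⟩ := Finset.mem_filter.mp hπ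
                    obtain ⟨a3, a4⟩ := Finset.mem_filter.mp a1
                    refine Finset.mem_filter.mpr ⟨Finset.mem_univ _, (Finset.mem_filter.mp a3).2, ?_⟩
                    rw [hSD π, a2]
                _ ≤ _ := count_D _
                _ ≤ 2 ^ (R.card + 2) * (3 * (R.card + 2)) ^ ((R ∪ {0, mL h}).card / 2) := by
                    gcongr
                    norm_num
                _ ≤ _ := by
                    apply Nat.mul_le_mul_left
                    apply Nat.pow_le_pow_right (by omega)
                    exact Nat.div_le_div_right hD2
            exact_mod_cast hle
    have q2 : ∑ R : Finset (Fin (4 * h + 2)), F R.card =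
        ∑ B ∈ Finset.range (4 * h + 3), ((4 * h + 2).choose B : ℝ) * F B := by
      rw [← Finset.powerset_univ, Finset.sum_powerset_apply_card]
      simp [nsmul_eq_mul]
    have q3 : ∀ B, ((4 * h + 2).choose B : ℝ) * F B ≤ M * (T ^ 6 / N) * aSeq β B := by
      intro B
      have c := Nat.choose_le_pow_div (α := ℝ) B (4 * h + 2)
      have c2 : ((4 * h + 2).choose B : ℝ) ≤ (4 * T) ^ B / (B.factorial : ℝ) := by
        refine c.trans ?_
        gcongr
        push_cast; rw [hT]; linarith
      have hF0 : 0 ≤ F B := by simp only [hF]; have := hg0 B; positivity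
      refine (mul_le_mul_of_nonneg_right c2 hF0).trans (le_of_eq ?_)
      simp only [hF, hg, aSeq, mul_pow, div_pow]
      have : T ≠ 0 := by positivity
      field_simp
    rw [q2] at q1
    refine q1.trans ((Finset.sum_le_sum (fun B _ => q3 B)).trans ?_)
    rw [← Finset.mul_sum]
    gcongr
    exact (aSeq_summable hβ).sum_le_tsum _ (fun B _ => aSeq_nonneg hβ B)
  calc _ ≤ _ := hstart
    _ ≤ M + M * (T ^ 6 / N) * ∑' B, aSeq β B := add_le_add p1 p2
    _ = _ := by ring

/-- **Lemma 2.** For each α > 0 and κ > 1 there exist N₀ and C(α,κ) > 0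
such that for N > N₀, 1 ≤ K ≤ αN and 1 ≤ t ≤ (N/1000)^{1/6},
E Tr[(Ωᵗ)ᵀ Ωᵗ] ≤ N^{2t+2} α^{t+1} (1 + C t⁶ κᵗ / N), the expectation being the uniform
average over the 2^{KN} sign matrices. -/
theorem trace_moment_bound (α κ : ℝ) (hα : 0 < α) (hκ : 1 < κ) :
    ∃ N₀ : ℕ, 0 < N₀ ∧ ∃ C : ℝ, 0 < C ∧
      ∀ N K t : ℕ, N₀ < N → 1 ≤ K → (K : ℝ) ≤ α * N → 1 ≤ t →
        (t : ℝ) ≤ ((N : ℝ) / 1000) ^ ((1 : ℝ) / 6) →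
        (∑ s : Fin K → Fin N → Bool,
            (((Omega (toSign s)) ^ t)ᵀ * (Omega (toSign s)) ^ t).trace) / 2 ^ (K * N) ≤
          (N : ℝ) ^ (2 * t + 2) * α ^ (t + 1) *
            (1 + C * (t : ℝ) ^ 6 * κ ^ t / N) := by
  have hβ : 0 < min 1 α := lt_min one_pos hα
  set β := min 1 α with hβd
  have hβ1 : β ≤ 1 := min_le_left _ _
  have hβα : β ≤ α := min_le_right _ _
  obtain ⟨n, hn⟩ := exists_nat_ge (1 / β)
  have hs0 : 0 ≤ ∑' B, aSeq β B := tsum_nonneg (aSeq_nonneg hβ)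
  refine ⟨n + 1, by omega, (∑' B, aSeq β B) + 1, by linarith, ?_⟩
  intro N K t hN hK1 hK ht1 ht
  obtain ⟨h, rfl⟩ : ∃ h, t = h + 1 := ⟨t - 1, by omega⟩
  have hN0 : (0 : ℝ) < N := by
    have : 0 < N := by omega
    exact_mod_cast this
  have hx : 1 ≤ β * (N : ℝ) := by
    have h1 : (n : ℝ) ≤ N := by
      have : n ≤ N := by omega
      exact_mod_cast this
    have h2 := hn.trans h1
    rwa [div_le_iff₀' hβ] at h2
  have ht6 : ((h : ℝ) + 1) ^ 6 ≤ N := by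
    have h0 : (0 : ℝ) ≤ (N : ℝ) / 1000 := by positivity
    push_cast at ht
    have h1 : ((h : ℝ) + 1) ^ 6 ≤ (((N : ℝ) / 1000) ^ ((1 : ℝ) / 6)) ^ 6 :=
      pow_le_pow_left₀ (by positivity) ht 6
    rw [← Real.rpow_natCast (((N : ℝ) / 1000) ^ ((1 : ℝ) / 6)) 6, ← Real.rpow_mul h0] at h1
    norm_num at h1
    linarith
  have hW := WS_bound (h := h) hβ hβ1 hβα hK hx ht6
  have htr := trace_le h K N
  rw [div_le_iff₀ (by positivity)]
  refine htr.trans ?_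
  gcongr
  push_cast
  have hκt : 1 ≤ κ ^ (h + 1) := one_le_pow₀ hκ.le
  calc (N : ℝ) * K * ((WS h K N).card : ℝ) ≤ N * (α * N) * (α ^ (h + 1) * (N : ℝ) ^ (2 * (h + 1)) *
      (1 + ((h : ℝ) + 1) ^ 6 / N * ∑' B, aSeq β B)) := by gcongr
    _ = (N : ℝ) ^ (2 * (h + 1) + 2) * α ^ (h + 1 + 1) * 
        (1 + (∑' B, aSeq β B) * ((h : ℝ) + 1) ^ 6 * 1 / N) := by ring
    _ ≤ _ := by
        gcongr
        linarith
end

section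
/- Fix σ > 0 and α > 0. For each integer N ≥ 2 set K = ⌈αN⌉, and let the entries s_{ia} (i ∈ [K], a ∈ [N]) be i.i.d. uniform on {+1, −1}. Let λ*_N > 1 be the unique positive fixed point of λ ↦ 1 + ((N−1)/N)/(σ² + ((K−1)/N)/λ), set λ̂*_N = σ² + ((K−1)/N)/λ*_N and L^{(∞)}_N = 1 + 1/λ̂*_N. Define δ_i = 1/L^{(∞)}_N − [(I_K + σ^{−2}·S̃ᵀS̃)⁻¹]_{ii} and D = (1/K)·Σ_{i=1}^K δ_i². Then D → 0 in probability as N → ∞; that is, for every ε > 0, P(D > ε) → 0 as N → ∞. -/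
open Matrix

/-- The finite-size BP variance fixed-point map λ ↦ 1 + ((N−1)/N)/(σ² + ((K−1)/N)/λ). -/
noncomputable def bpVarMap (σ : ℝ) (K N : ℕ) (l : ℝ) : ℝ :=
  1 + (((N : ℝ) - 1) / (N : ℝ)) / (σ ^ 2 + (((K : ℝ) - 1) / (N : ℝ)) / l)

/-- λ̂*_N = σ² + ((K−1)/N)/λ*_N. -/
noncomputable def lamHatStar (σ : ℝ) (K N : ℕ) (lamStar : ℝ) : ℝ :=
  σ ^ 2 + (((K : ℝ) - 1) / (N : ℝ)) / lamStar


def Gd {n : ℕ} (A : Matrix (Fin n) (Fin n) ℝ) : Prop :=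
  Aᵀ = A ∧ ∀ v, v ⬝ᵥ v ≤ v ⬝ᵥ (A *ᵥ v)

lemma dot_self_nonneg {n : ℕ} (v : Fin n → ℝ) : 0 ≤ v ⬝ᵥ v :=
  Finset.sum_nonneg fun i _ => mul_self_nonneg (v i)

lemma Gd.det {n : ℕ} {A : Matrix (Fin n) (Fin n) ℝ} (h : Gd A) : IsUnit A.det := by
  rw [← Matrix.isUnit_iff_isUnit_det, ← Matrix.mulVec_injective_iff_isUnit]
  intro x y hxy
  have h1 : A *ᵥ (x - y) = 0 := by
    rw [Matrix.mulVec_sub]; exact sub_eq_zero.mpr hxy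
  have h2 := h.2 (x - y)
  rw [h1, dotProduct_zero] at h2
  have h3 : (x - y) ⬝ᵥ (x - y) = 0 := le_antisymm h2 (dot_self_nonneg _)
  exact sub_eq_zero.mp (dotProduct_self_eq_zero.mp h3)

lemma Gd.quad {n : ℕ} {A : Matrix (Fin n) (Fin n) ℝ} (h : Gd A) (b : Fin n → ℝ) :
    (A⁻¹ *ᵥ b) ⬝ᵥ (A⁻¹ *ᵥ b) ≤ b ⬝ᵥ (A⁻¹ *ᵥ b) := by
  have h2 := h.2 (A⁻¹ *ᵥ b)
  rw [Matrix.mulVec_mulVec, Matrix.mul_nonsing_inv _ h.det, Matrix.one_mulVec,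
    dotProduct_comm _ b] at h2
  exact h2

lemma Gd.inv_symm {n : ℕ} {A : Matrix (Fin n) (Fin n) ℝ} (h : Gd A) : (A⁻¹)ᵀ = A⁻¹ := by
  rw [Matrix.transpose_nonsing_inv, h.1]

lemma Gd.row {n : ℕ} {A : Matrix (Fin n) (Fin n) ℝ} (h : Gd A) (b : Fin n) :
    ∑ a, (A⁻¹ a b) ^ 2 ≤ A⁻¹ b b := by
  have := h.quad (Pi.single b 1)
  simp only [Matrix.mulVec_single_one, single_one_dotProduct] at this
  simpa [dotProduct, pow_two, Matrix.col] using this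

lemma Gd.diag_nonneg {n : ℕ} {A : Matrix (Fin n) (Fin n) ℝ} (h : Gd A) (b : Fin n) :
    0 ≤ A⁻¹ b b := (Finset.sum_nonneg fun a _ => sq_nonneg (A⁻¹ a b)).trans (h.row b)

lemma Gd.diag_le {n : ℕ} {A : Matrix (Fin n) (Fin n) ℝ} (h : Gd A) (b : Fin n) :
    A⁻¹ b b ≤ 1 := by
  have h1 : (A⁻¹ b b) ^ 2 ≤ ∑ a, (A⁻¹ a b) ^ 2 :=
    Finset.single_le_sum (f := fun a => (A⁻¹ a b) ^ 2) (fun a _ => sq_nonneg _) (Finset.mem_univ b)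
  have h2 := h.row b
  nlinarith

lemma Gd.frob {n : ℕ} {A : Matrix (Fin n) (Fin n) ℝ} (h : Gd A) :
    ∑ a, ∑ b, (A⁻¹ a b) ^ 2 ≤ n := by
  rw [Finset.sum_comm]
  calc _ ≤ ∑ b : Fin n, (1 : ℝ) := Finset.sum_le_sum fun b _ => (h.row b).trans (h.diag_le b)
    _ = n := by simp

lemma Gd.trace_nonneg {n : ℕ} {A : Matrix (Fin n) (Fin n) ℝ} (h : Gd A) :
    0 ≤ (A⁻¹).trace := Finset.sum_nonneg fun a _ => h.diag_nonneg a

lemma rankone {n : ℕ} {A A0 : Matrix (Fin n) (Fin n) ℝ} (h : Gd A) (h0 : Gd A0) (c : ℝ)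
    (hc : 0 < c) (u : Fin n → ℝ) (hA : A = A0 + c • Matrix.vecMulVec u u) :
    0 ≤ u ⬝ᵥ (A0⁻¹ *ᵥ u) ∧
    u ⬝ᵥ (A⁻¹ *ᵥ u) = (u ⬝ᵥ (A0⁻¹ *ᵥ u)) / (1 + c * (u ⬝ᵥ (A0⁻¹ *ᵥ u))) ∧
    0 ≤ (A0⁻¹).trace - (A⁻¹).trace ∧ (A0⁻¹).trace - (A⁻¹).trace ≤ 1 := by
  set v := A0⁻¹ *ᵥ u with hv
  set q := u ⬝ᵥ v with hq
  have hvq : v ⬝ᵥ v ≤ q := h0.quad u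
  have hv0 := dot_self_nonneg v
  have hq0 : 0 ≤ q := hv0.trans hvq
  have hp : 0 < 1 + c * q := by positivity
  have hAv : A *ᵥ v = (1 + c * q) • u := by
    rw [hA, Matrix.add_mulVec, hv, Matrix.mulVec_mulVec, Matrix.mul_nonsing_inv _ h0.det,
      Matrix.one_mulVec, ← hv, Matrix.smul_mulVec, Matrix.vecMulVec_mulVec, ← hq]
    ext a
    simp
    ring
  have hRu : A⁻¹ *ᵥ u = (1 + c * q)⁻¹ • v := by
    have : A⁻¹ *ᵥ (A *ᵥ v) = v := by
      rw [Matrix.mulVec_mulVec, Matrix.nonsing_inv_mul _ h.det, Matrix.one_mulVec]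
    rw [hAv, Matrix.mulVec_smul] at this
    rw [← this, smul_smul, inv_mul_cancel₀ hp.ne', one_smul]
  have hdiff : A0⁻¹ - A⁻¹ = (c * (1 + c * q)⁻¹) • Matrix.vecMulVec v v := by
    have h1 : A0⁻¹ - A⁻¹ = A⁻¹ * (A - A0) * A0⁻¹ := by
      rw [Matrix.mul_sub, Matrix.sub_mul, Matrix.nonsing_inv_mul _ h.det, Matrix.one_mul,
        Matrix.mul_assoc, Matrix.mul_nonsing_inv _ h0.det, Matrix.mul_one]
    have h2 : u ᵥ* A0⁻¹ = v := by
      rw [hv, ← Matrix.mulVec_transpose, h0.inv_symm]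
    rw [h1, hA, add_sub_cancel_left, ← hA, Matrix.mul_smul, Matrix.smul_mul,
      Matrix.mul_vecMulVec, Matrix.vecMulVec_mul, h2, hRu, Matrix.smul_vecMulVec, smul_smul]
  have htr : (A0⁻¹).trace - (A⁻¹).trace = (c * (1 + c * q)⁻¹) * (v ⬝ᵥ v) := by
    rw [← Matrix.trace_sub, hdiff, Matrix.trace_smul, Matrix.trace_vecMulVec, smul_eq_mul]
  refine ⟨hq0, ?_, ?_, ?_⟩
  · rw [hRu, dotProduct_smul, smul_eq_mul, ← hq]; field_simp
  · rw [htr]; positivity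
  · rw [htr, mul_assoc, mul_comm _ (v ⬝ᵥ v), ← mul_assoc, ← div_eq_mul_inv, div_le_one hp]
    nlinarith

lemma woodbury {n k : ℕ} (B : Matrix (Fin n) (Fin k) ℝ) (c : ℝ)
    (h : IsUnit (1 + c • (B * Bᵀ)).det) :
    (1 + c • (Bᵀ * B))⁻¹ = 1 - c • (Bᵀ * (1 + c • (B * Bᵀ))⁻¹ * B) := by
  apply Matrix.inv_eq_right_inv
  set A := 1 + c • (B * Bᵀ) with hA
  have h1 : (1 + c • (Bᵀ * B)) * Bᵀ = Bᵀ * A := by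
    simp [hA, Matrix.add_mul, Matrix.mul_add, Matrix.mul_assoc]
  calc (1 + c • (Bᵀ * B)) * (1 - c • (Bᵀ * A⁻¹ * B))
      = (1 + c • (Bᵀ * B)) - c • (((1 + c • (Bᵀ * B)) * Bᵀ) * A⁻¹ * B) := by
        simp only [Matrix.mul_sub, Matrix.mul_one, Matrix.mul_smul, Matrix.mul_assoc]
    _ = (1 + c • (Bᵀ * B)) - c • (Bᵀ * (A * A⁻¹) * B) := by
        rw [h1]; simp only [Matrix.mul_assoc]
    _ = 1 := by rw [Matrix.mul_nonsing_inv _ h]; simp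

noncomputable def sg (b : Bool) : ℝ := if b then 1 else -1

lemma sum_cons {n : ℕ} (F : (Fin (n + 1) → Bool) → ℝ) :
    ∑ x, F x = ∑ y : Fin n → Bool, (F (Fin.cons true y) + F (Fin.cons false y)) := by
  rw [← (Fin.consEquiv (fun _ : Fin (n + 1) => Bool)).sum_comp, Fintype.sum_prod_type_right]
  simp [Fin.consEquiv]

lemma lin_moment {n : ℕ} (m : Fin n → ℝ) :
    ∑ x : Fin n → Bool, (∑ a, m a * sg (x a)) ^ 2 = 2 ^ n * ∑ a, m a ^ 2 := by
  induction n with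
  | zero => simp
  | succ n ih =>
    rw [sum_cons, Fin.sum_univ_succ, mul_add, pow_succ (2 : ℝ), mul_right_comm _ (2 : ℝ) (∑ _, _),
      ← ih, Finset.sum_mul]
    have : (2 : ℝ) ^ n * 2 * m 0 ^ 2 = ∑ y : Fin n → Bool, 2 * m 0 ^ 2 := by
      simp; ring
    rw [this, ← Finset.sum_add_distrib]
    refine Finset.sum_congr rfl fun y _ => ?_
    simp only [Fin.sum_univ_succ, Fin.cons_zero, Fin.cons_succ, sg]
    simp
    ring

lemma quad_moment {n : ℕ} (M : Fin n → Fin n → ℝ) (hM : ∀ a b, M a b = M b a) :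
    ∑ x : Fin n → Bool, (∑ a, ∑ b, M a b * sg (x a) * sg (x b) - ∑ a, M a a) ^ 2
      ≤ 2 ^ n * (2 * ∑ a, ∑ b, M a b ^ 2) := by
  induction n with
  | zero => simp
  | succ n ih =>
    have ih' := ih (fun a b => M a.succ b.succ) (fun a b => hM _ _)
    have hl := lin_moment (fun a => M 0 (Fin.succ a))
    have key : ∑ x : Fin (n + 1) → Bool,
        (∑ a, ∑ b, M a b * sg (x a) * sg (x b) - ∑ a, M a a) ^ 2 =
        2 * ∑ x : Fin n → Bool, (∑ a, ∑ b, M (Fin.succ a) (Fin.succ b) * sg (x a) * sg (x b)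
          - ∑ a : Fin n, M a.succ a.succ) ^ 2
        + 8 * ∑ x : Fin n → Bool, (∑ a, M 0 (Fin.succ a) * sg (x a)) ^ 2 := by
      rw [sum_cons, Finset.mul_sum, Finset.mul_sum, ← Finset.sum_add_distrib]
      refine Finset.sum_congr rfl fun y _ => ?_
      have e : ∀ (z : ℝ), z * z = 1 →
        (M 0 0 * z * z + ∑ b : Fin n, M 0 b.succ * z * sg (y b)) +
          ∑ a : Fin n, (M a.succ 0 * sg (y a) * z +
            ∑ b : Fin n, M a.succ b.succ * sg (y a) * sg (y b)) - (M 0 0 + ∑ a : Fin n, M a.succ a.succ)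
        = (∑ a : Fin n, ∑ b : Fin n, M a.succ b.succ * sg (y a) * sg (y b)
          - ∑ a : Fin n, M a.succ a.succ) + 2 * z * ∑ a, M 0 (Fin.succ a) * sg (y a) := by
        intro z hz
        have e1 : ∑ b : Fin n, M 0 b.succ * z * sg (y b) = z * ∑ a, M 0 (Fin.succ a) * sg (y a) := by
          rw [Finset.mul_sum]; exact Finset.sum_congr rfl fun _ _ => by ring
        have e2 : ∑ a : Fin n, M a.succ 0 * sg (y a) * z = z * ∑ a, M 0 (Fin.succ a) * sg (y a) := by
          rw [Finset.mul_sum]; exact Finset.sum_congr rfl fun _ _ => by rw [hM]; ring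
        rw [Finset.sum_add_distrib, e1, e2, mul_assoc, hz]; ring
      simp only [Fin.sum_univ_succ, Fin.cons_zero, Fin.cons_succ]
      rw [e _ (by simp [sg]), e _ (by simp [sg])]
      simp only [sg]
      simp
      ring
    rw [key, hl]
    have s1 : ∑ a : Fin (n + 1), ∑ b, M a b ^ 2 = M 0 0 ^ 2 + 2 * ∑ a : Fin n, M 0 a.succ ^ 2
        + ∑ a : Fin n, ∑ b : Fin n, M a.succ b.succ ^ 2 := by
      simp only [Fin.sum_univ_succ, Finset.sum_add_distrib]
      simp only [hM (Fin.succ _) 0]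
      ring
    rw [s1, pow_succ]
    have : 0 ≤ (2 : ℝ) ^ n * M 0 0 ^ 2 := by positivity
    nlinarith

noncomputable def uv {n : ℕ} (x : Fin n → Bool) : Fin n → ℝ := fun a => sg (x a) / Real.sqrt n

noncomputable def Am {ι : Type} [Fintype ι] {n : ℕ} (c : ℝ) (s : ι → Fin n → Bool) :
    Matrix (Fin n) (Fin n) ℝ := 1 + c • ∑ j, Matrix.vecMulVec (uv (s j)) (uv (s j))

lemma Am_gd {ι : Type} [Fintype ι] {n : ℕ} (c : ℝ) (hc : 0 < c) (s : ι → Fin n → Bool) :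
    Gd (Am c s) := by
  constructor
  · simp [Am, Matrix.transpose_sum, Matrix.transpose_vecMulVec]
  · intro v
    have : v ⬝ᵥ (Am c s *ᵥ v) = v ⬝ᵥ v + c * ∑ j, (uv (s j) ⬝ᵥ v) ^ 2 := by
      rw [Am, Matrix.add_mulVec, Matrix.one_mulVec, dotProduct_add, Matrix.smul_mulVec,
        dotProduct_smul, Matrix.sum_mulVec, dotProduct_sum, smul_eq_mul]
      congr 2
      refine Finset.sum_congr rfl fun j _ => ?_
      rw [Matrix.vecMulVec_mulVec]
      simp [dotProduct_comm v, pow_two]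
    rw [this]
    have : 0 ≤ ∑ j, (uv (s j) ⬝ᵥ v) ^ 2 := Finset.sum_nonneg fun _ _ => sq_nonneg _
    nlinarith [mul_nonneg hc.le this]

lemma Am_split {k n : ℕ} (c : ℝ) (s : Fin k → Fin n → Bool) (i : Fin k) :
    Am c s = Am c (fun j : {j // j ≠ i} => s j) + c • Matrix.vecMulVec (uv (s i)) (uv (s i)) := by
  rw [Am, Am, Fintype.sum_eq_add_sum_subtype_ne _ i, smul_add]
  abel

lemma Am_eq {k n : ℕ} (c : ℝ) (s : Fin k → Fin n → Bool) :
    Am c s = 1 + c • (Stilde (toSign s) * (Stilde (toSign s))ᵀ) := by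
  rw [Am]
  congr 2
  ext a b
  simp [Matrix.sum_apply, Matrix.mul_apply, Matrix.vecMulVec_apply, uv, Stilde, toSign, sg]

/-- leave-one-out quadratic form -/
noncomputable def qf {k n : ℕ} (c : ℝ) (s : Fin k → Fin n → Bool) (i : Fin k) : ℝ :=
  uv (s i) ⬝ᵥ ((Am c (fun j : {j // j ≠ i} => s j))⁻¹ *ᵥ uv (s i))

noncomputable def tf {k n : ℕ} (c : ℝ) (s : Fin k → Fin n → Bool) (i : Fin k) : ℝ :=
  ((Am c (fun j : {j // j ≠ i} => s j))⁻¹).trace / n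

lemma G_diag {k n : ℕ} (c : ℝ) (hc : 0 < c) (s : Fin k → Fin n → Bool) (i : Fin k) :
    0 ≤ qf c s i ∧
    (1 + c • ((Stilde (toSign s))ᵀ * Stilde (toSign s)) : Matrix (Fin k) (Fin k) ℝ)⁻¹ i i = 1 / (1 + c * qf c s i) ∧
    |tf c s i - ((Am c s)⁻¹).trace / n| ≤ 1 / n := by
  obtain ⟨h1, h2, h3, h4⟩ := rankone (Am_gd c hc s) (Am_gd c hc (fun j : {j // j ≠ i} => s j)) c hc
    (uv (s i)) (Am_split c s i)
  refine ⟨h1, ?_, ?_⟩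
  · rw [woodbury _ _ (by rw [← Am_eq]; exact (Am_gd c hc s).det), ← Am_eq]
    have : ((Stilde (toSign s))ᵀ * (Am c s)⁻¹ * Stilde (toSign s)) i i
        = uv (s i) ⬝ᵥ ((Am c s)⁻¹ *ᵥ uv (s i)) := by
      rw [Matrix.mul_assoc, Matrix.mul_apply]
      rfl
    rw [Matrix.sub_apply, Matrix.smul_apply, this, h2, Matrix.one_apply_eq, smul_eq_mul]
    change 1 - c * (qf c s i / (1 + c * qf c s i)) = _
    have : 0 < 1 + c * qf c s i := by
      have : 0 ≤ qf c s i := h1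
      positivity
    field_simp
    ring
  · rw [tf, ← sub_div, abs_div, abs_of_nonneg h3, Nat.abs_cast]
    gcongr

lemma G_trace {k n : ℕ} (c : ℝ) (hc : 0 < c) (s : Fin k → Fin n → Bool) :
    ∑ i, (1 + c • ((Stilde (toSign s))ᵀ * Stilde (toSign s)) : Matrix (Fin k) (Fin k) ℝ)⁻¹ i i
      = k - n + ((Am c s)⁻¹).trace := by
  change Matrix.trace _ = _
  have hd := (Am_gd c hc s).det
  rw [woodbury _ _ (by rw [← Am_eq]; exact hd), ← Am_eq, Matrix.trace_sub, Matrix.trace_smul,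
    Matrix.mul_assoc, Matrix.trace_mul_comm, Matrix.mul_assoc, ← Matrix.trace_smul,
    ← Matrix.mul_smul]
  have : c • (Stilde (toSign s) * (Stilde (toSign s))ᵀ) = Am c s - 1 := by
    rw [Am_eq]; simp
  rw [this, Matrix.mul_sub, Matrix.nonsing_inv_mul _ hd, Matrix.trace_sub]
  simp
  ring

lemma qf_moment {k n : ℕ} (hn : 0 < n) (c : ℝ) (hc : 0 < c) (i : Fin k) :
    ∑ s : Fin k → Fin n → Bool, (qf c s i - tf c s i) ^ 2 ≤ 2 ^ (k * n) * (2 / n) := by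
  have hn' : (0 : ℝ) < n := by exact_mod_cast hn
  rw [← (Equiv.funSplitAt i (Fin n → Bool)).symm.sum_comp, Fintype.sum_prod_type_right]
  have hk : 0 < k := i.pos
  have hcard : (Fintype.card ({j // j ≠ i} → Fin n → Bool) : ℝ) * 2 ^ n = 2 ^ (k * n) := by
    have h1 := Fintype.card_congr (Equiv.funSplitAt i (Fin n → Bool))
    rw [Fintype.card_prod] at h1
    have h2 : Fintype.card (Fin n → Bool) = 2 ^ n := by simp
    have h3 : Fintype.card (Fin k → Fin n → Bool) = 2 ^ (k * n) := by
      simp [← pow_mul, mul_comm]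
    rw [h2, h3] at h1
    rw [mul_comm]; exact_mod_cast h1.symm
  have main : ∀ r : {j // j ≠ i} → Fin n → Bool, ∑ x : Fin n → Bool,
      (qf c ((Equiv.funSplitAt i (Fin n → Bool)).symm (x, r)) i
        - tf c ((Equiv.funSplitAt i (Fin n → Bool)).symm (x, r)) i) ^ 2 ≤ 2 ^ n * (2 / n) := by
    intro r
    have hg := Am_gd c hc r
    have e1 : ∀ x, (fun j : {j // j ≠ i} => (Equiv.funSplitAt i (Fin n → Bool)).symm (x, r) j) = r := by
      intro x; funext j; simp [Equiv.funSplitAt, Equiv.piSplitAt, j.2]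
    have e2 : ∀ x, (Equiv.funSplitAt i (Fin n → Bool)).symm (x, r) i = x := by
      intro x; simp [Equiv.funSplitAt, Equiv.piSplitAt]
    have e3 : ∀ x, (qf c ((Equiv.funSplitAt i (Fin n → Bool)).symm (x, r)) i
        - tf c ((Equiv.funSplitAt i (Fin n → Bool)).symm (x, r)) i) ^ 2
        = (∑ a, ∑ b, (Am c r)⁻¹ a b * sg (x a) * sg (x b) - ∑ a, (Am c r)⁻¹ a a) ^ 2 / n ^ 2 := by
      intro x
      rw [qf, tf, e1, e2, ← div_pow, sub_div]
      congr 2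
      simp only [dotProduct, Matrix.mulVec, uv, Finset.mul_sum, Finset.sum_div]
      refine Finset.sum_congr rfl fun a _ => Finset.sum_congr rfl fun b _ => ?_
      have := Real.mul_self_sqrt hn'.le
      have h0 := (Real.sqrt_pos.mpr hn').ne'
      calc _ = (Am c r)⁻¹ a b * sg (x a) * sg (x b) / (√n * √n) := by field_simp
        _ = _ := by rw [this]
    simp only [e3]
    rw [← Finset.sum_div, div_le_iff₀ (by positivity)]
    refine (quad_moment (fun a b => (Am c r)⁻¹ a b) (fun a b => ?_)).trans ?_
    · exact congrFun (congrFun hg.inv_symm.symm a) b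
    · have := hg.frob
      have e : (2 : ℝ) ^ n * (2 / n) * n ^ 2 = 2 ^ n * (2 * n) := by field_simp
      rw [e]
      gcongr
  calc _ ≤ ∑ r : {j // j ≠ i} → Fin n → Bool, (2 : ℝ) ^ n * (2 / n) :=
        Finset.sum_le_sum fun r _ => main r
    _ = _ := by
      rw [Finset.sum_const, nsmul_eq_mul, ← mul_assoc, Finset.card_univ, hcard]

lemma lip {w x y : ℝ} (hw : 0 < w) (hx : 0 ≤ x) (hy : 0 ≤ y) :
    |w / (w + x) - w / (w + y)| ≤ |x - y| / w := by
  have e : w / (w + x) - w / (w + y) = w * (y - x) / ((w + x) * (w + y)) := by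
    have : w + x ≠ 0 := by positivity
    have : w + y ≠ 0 := by positivity
    field_simp
    ring
  have h1 : (0 : ℝ) < (w + x) * (w + y) := by positivity
  rw [e, abs_div, abs_mul, abs_of_pos hw, abs_of_pos h1, abs_sub_comm, div_le_div_iff₀ h1 hw]
  have h2 : w * w ≤ (w + x) * (w + y) := by nlinarith [mul_nonneg hx hy]
  nlinarith [mul_le_mul_of_nonneg_left h2 (abs_nonneg (x - y))]

lemma lip_sq {w x y : ℝ} (hw : 0 < w) (hx : 0 ≤ x) (hy : 0 ≤ y) :
    (w / (w + x) - w / (w + y)) ^ 2 ≤ (x - y) ^ 2 / w ^ 2 := by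
  rw [← div_pow, ← sq_abs, ← sq_abs ((x - y) / w), abs_div, abs_of_pos hw]
  have := lip hw hx hy
  gcongr

lemma det_bound {k n : ℕ} (hk : 0 < k) (hn : 0 < n) (w t t' : ℝ) (hw : 0 < w) (ht : 0 ≤ t)
    (ht' : 0 ≤ t') (q : Fin k → ℝ) (hq : ∀ i, 0 ≤ q i)
    (htr : ∑ i, w / (w + q i) = k - n + n * t)
    (hf : |t' - 1 + ((k : ℝ) / n) * (t' / (w + t'))| ≤ 1 / n) :
    (1 / (k : ℝ)) * ∑ i, (w / (w + t') - w / (w + q i)) ^ 2 ≤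
      (2 / w ^ 2) * ((1 + 2 * ((k : ℝ) / n) ^ 2 / w ^ 2) * ((1 / (k : ℝ)) * ∑ i, (q i - t) ^ 2)
        + 2 / n ^ 2) := by
  have hn' : (0 : ℝ) < n := by exact_mod_cast hn
  have hk' : (0 : ℝ) < k := by exact_mod_cast hk
  set E := ∑ i, (q i - t) ^ 2 with hE
  set f := t - 1 + ((k : ℝ) / n) * (t / (w + t)) with hfdef
  set f' := t' - 1 + ((k : ℝ) / n) * (t' / (w + t')) with hfdef'
  have hft : f = (∑ i, (w / (w + q i) - w / (w + t))) / n := by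
    rw [Finset.sum_sub_distrib, htr, hfdef]
    have : w + t ≠ 0 := by positivity
    simp
    field_simp
    ring
  have hf2 : f ^ 2 ≤ (k * (E / w ^ 2)) / n ^ 2 := by
    rw [hft, div_pow]
    gcongr
    refine (sq_sum_le_card_mul_sum_sq).trans ?_
    simp only [Finset.card_univ, Fintype.card_fin]
    rw [hE, Finset.sum_div]
    gcongr with i _
    exact lip_sq hw (hq i) ht
  have hmono : |t - t'| ≤ |f - f'| := by
    have e : f - f' = (t - t') * (1 + (k : ℝ) / n * (w / ((w + t) * (w + t')))) := by
      have : w + t ≠ 0 := by positivity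
      have : w + t' ≠ 0 := by positivity
      rw [hfdef, hfdef']
      field_simp
      ring
    have hp : 0 ≤ (k : ℝ) / n * (w / ((w + t) * (w + t'))) := by positivity
    rw [e, abs_mul, abs_of_nonneg (by linarith : 0 ≤ 1 + (k : ℝ) / n * (w / ((w + t) * (w + t'))))]
    nlinarith [mul_nonneg (abs_nonneg (t - t')) hp]
  have htt : (t - t') ^ 2 ≤ 2 * (k * (E / w ^ 2) / n ^ 2) + 2 * (1 / n ^ 2) := by
    have h1 : (t - t') ^ 2 ≤ (f - f') ^ 2 := sq_le_sq.mpr hmono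
    have h2 : f' ^ 2 ≤ (1 / n : ℝ) ^ 2 := by
      rw [← sq_abs]; gcongr
    rw [div_pow, one_pow] at h2
    nlinarith [sq_nonneg (f + f')]
  have hterm : ∀ i, (w / (w + t') - w / (w + q i)) ^ 2 ≤
      (2 * (q i - t) ^ 2 + 2 * (t - t') ^ 2) / w ^ 2 := by
    intro i
    refine (lip_sq hw ht' (hq i)).trans ?_
    gcongr
    nlinarith [sq_nonneg ((q i - t) - (t - t'))]
  calc (1 / (k : ℝ)) * ∑ i, (w / (w + t') - w / (w + q i)) ^ 2
      ≤ (1 / (k : ℝ)) * ∑ i, (2 * (q i - t) ^ 2 + 2 * (t - t') ^ 2) / w ^ 2 := by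
        gcongr with i _
        exact hterm i
    _ = (2 / w ^ 2) * ((1 / (k : ℝ)) * E + (t - t') ^ 2) := by
        rw [← Finset.sum_div, Finset.sum_add_distrib, ← Finset.mul_sum, ← hE]
        simp
        field_simp
    _ ≤ (2 / w ^ 2) * ((1 / (k : ℝ)) * E +
          (2 * (k * (E / w ^ 2) / n ^ 2) + 2 * (1 / n ^ 2))) := by gcongr
    _ = _ := by field_simp; ring

lemma fix_bound {k n : ℕ} (hk : 0 < k) (hn : 2 ≤ n) (σ l : ℝ) (hσ : 0 < σ) (hl : 1 < l)
    (hfix : bpVarMap σ k n l = l) :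
    ∃ t' : ℝ, 0 ≤ t' ∧ 1 / (1 + 1 / lamHatStar σ k n l) = σ ^ 2 / (σ ^ 2 + t') ∧
      |t' - 1 + ((k : ℝ) / n) * (t' / (σ ^ 2 + t'))| ≤ 1 / (n : ℝ) := by
  have hn' : (2 : ℝ) ≤ n := by exact_mod_cast hn
  have hk' : (1 : ℝ) ≤ k := by exact_mod_cast hk
  have hn0 : (0 : ℝ) < n := by linarith
  have hl0 : 0 < l := by linarith
  set w := σ ^ 2 with hw
  have hw0 : 0 < w := by positivity
  set h := lamHatStar σ k n l with hh
  have hhd : h = w + (((k : ℝ) - 1) / n) / l := rfl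
  have hb : 0 ≤ ((k : ℝ) - 1) / n := div_nonneg (by linarith) hn0.le
  have hh0 : 0 < h := by
    rw [hhd]; have := div_nonneg hb hl0.le; linarith
  have hle : 1 + (((n : ℝ) - 1) / n) / h = l := hfix
  set t := w / h with ht
  have ht0 : 0 < t := by positivity
  have hth : h = w / t := by rw [ht]; field_simp
  set p := ((n : ℝ) - 1) / n with hp
  have hp1 : p = 1 - 1 / n := by rw [hp]; field_simp
  have hp0 : 0 ≤ p := div_nonneg (by linarith) hn0.le
  set b := ((k : ℝ) - 1) / n with hbd
  have hden : 0 < w + p * t := by positivity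
  have hle' : l = (w + p * t) / w := by
    rw [← hle, hth]; field_simp
  have hteq : b * t / (w + p * t) = 1 - t := by
    have : w / t = w + b / ((w + p * t) / w) := by rw [← hth, ← hle']; exact hhd
    field_simp at this
    field_simp
    linarith
  refine ⟨t, ht0.le, ?_, ?_⟩
  · rw [hth]; field_simp
  · have hkn : (k : ℝ) / n = b + 1 / n := by rw [hbd]; field_simp; ring
    have e : t - 1 + (k : ℝ) / n * (t / (w + t)) =
        1 / n * (t / (w + t)) - (b * t / (w + p * t)) * (1 / n * (t / (w + t))) := by
      have e1 : t - 1 = - (b * t / (w + p * t)) := by rw [hteq]; ring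
      rw [e1, hkn]
      have e2 : w + t = w + p * t + (1 / n) * t := by rw [hp1]; ring
      have : b * (t / (w + t)) = (b * t / (w + p * t)) * ((w + p * t) / (w + t)) := by field_simp
      have e3 : (w + p * t) / (w + t) = 1 - 1 / n * (t / (w + t)) := by
        rw [hp1]; field_simp; ring
      rw [add_mul, this, e3]
      ring
    have hx0 : 0 ≤ t / (w + t) := by positivity
    have hx1 : t / (w + t) ≤ 1 := by rw [div_le_one (by positivity)]; linarith
    rw [e, hteq]
    have hr : 1 / (n : ℝ) * (t / (w + t)) - (1 - t) * (1 / n * (t / (w + t)))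
      = 1 / n * (t * (t / (w + t))) := by ring
    have hle1 : t ≤ 1 := by
      have : 0 ≤ b * t / (w + p * t) := by positivity
      linarith
    rw [hr, abs_of_nonneg (by positivity)]
    have : t * (t / (w + t)) ≤ 1 := by nlinarith
    calc _ ≤ 1 / (n : ℝ) * 1 := by gcongr
      _ = _ := by ring

lemma expect_bound {k n : ℕ} (hk : 0 < k) (hn : 2 ≤ n) (σ l β : ℝ) (hσ : 0 < σ) (hl : 1 < l)
    (hfix : bpVarMap σ k n l = l) (hβ : (k : ℝ) / n ≤ β) :
    ∑ s : Fin k → Fin n → Bool, ((1 / (k : ℝ)) * ∑ i : Fin k,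
      (1 / (1 + 1 / lamHatStar σ k n l) -
        (1 + (σ ^ 2)⁻¹ • ((Stilde (toSign s))ᵀ * Stilde (toSign s)) :
          Matrix (Fin k) (Fin k) ℝ)⁻¹ i i) ^ 2)
      ≤ 2 ^ (k * n) * (((2 / (σ ^ 2) ^ 2) * ((1 + 2 * β ^ 2 / (σ ^ 2) ^ 2) * 6 + 2)) / n) := by
  obtain ⟨t', ht', hL, hf⟩ := fix_bound hk hn σ l hσ hl hfix
  have hn' : (2 : ℝ) ≤ n := by exact_mod_cast hn
  have hn0 : (0 : ℝ) < n := by linarith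
  have hk' : (0 : ℝ) < k := by exact_mod_cast hk
  set w := σ ^ 2 with hw
  have hw0 : 0 < w := by positivity
  have hc : 0 < w⁻¹ := by positivity
  set C := 1 + 2 * β ^ 2 / w ^ 2 with hC
  have hC0 : 0 ≤ C := by positivity
  have hnn : (1 : ℝ) / n ^ 2 ≤ 1 / n := by
    apply one_div_le_one_div_of_le hn0; nlinarith
  have pt : ∀ s : Fin k → Fin n → Bool, ((1 / (k : ℝ)) * ∑ i : Fin k,
      (1 / (1 + 1 / lamHatStar σ k n l) -
        (1 + w⁻¹ • ((Stilde (toSign s))ᵀ * Stilde (toSign s)) :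
          Matrix (Fin k) (Fin k) ℝ)⁻¹ i i) ^ 2) ≤
      (2 / w ^ 2) * (C * ((1 / (k : ℝ)) *
        ∑ i, (2 * (qf w⁻¹ s i - tf w⁻¹ s i) ^ 2 + 2 * (1 / n))) + 2 * (1 / n)) := by
    intro s
    have hG : ∀ i, (1 + w⁻¹ • ((Stilde (toSign s))ᵀ * Stilde (toSign s)) :
          Matrix (Fin k) (Fin k) ℝ)⁻¹ i i = w / (w + qf w⁻¹ s i) := by
      intro i
      obtain ⟨h1, h2, -⟩ := G_diag w⁻¹ hc s i
      rw [h2]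
      field_simp
    have htr := G_trace w⁻¹ hc s
    simp only [hG] at htr ⊢
    rw [hL]
    set t := ((Am w⁻¹ s)⁻¹).trace / n with ht
    have ht0 : 0 ≤ t := div_nonneg (Am_gd w⁻¹ hc s).trace_nonneg hn0.le
    refine (det_bound hk (by omega) w t t' hw0 ht0 ht' (qf w⁻¹ s)
      (fun i => (G_diag w⁻¹ hc s i).1) ?_ hf).trans ?_
    · rw [htr, ht]; field_simp
    · have hs : ∑ i, (qf w⁻¹ s i - t) ^ 2 ≤
          ∑ i, (2 * (qf w⁻¹ s i - tf w⁻¹ s i) ^ 2 + 2 * (1 / (n : ℝ))) := by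
        refine Finset.sum_le_sum fun i _ => ?_
        have h3 := (G_diag w⁻¹ hc s i).2.2
        have h4 : (tf w⁻¹ s i - t) ^ 2 ≤ (1 / n : ℝ) ^ 2 := by
          rw [← sq_abs]; gcongr
        rw [div_pow, one_pow] at h4
        nlinarith [sq_nonneg ((qf w⁻¹ s i - tf w⁻¹ s i) - (tf w⁻¹ s i - t))]
      have h2 : (2 : ℝ) / n ^ 2 ≤ 2 * (1 / n) := by
        rw [← mul_one_div]; linarith
      have hCle : 1 + 2 * ((k : ℝ) / n) ^ 2 / w ^ 2 ≤ C := by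
        rw [hC]; gcongr
      have hs0 : 0 ≤ ∑ i, (qf w⁻¹ s i - t) ^ 2 := Finset.sum_nonneg fun _ _ => sq_nonneg _
      gcongr
  refine (Finset.sum_le_sum fun s _ => pt s).trans ?_
  have hcard : ((Finset.univ : Finset (Fin k → Fin n → Bool)).card : ℝ) = 2 ^ (k * n) := by
    simp [← pow_mul, mul_comm]
  have hmom : ∑ i : Fin k, ∑ s : Fin k → Fin n → Bool, (qf w⁻¹ s i - tf w⁻¹ s i) ^ 2
      ≤ k * (2 ^ (k * n) * (2 / n)) := by
    calc _ ≤ ∑ i : Fin k, (2 : ℝ) ^ (k * n) * (2 / n) :=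
          Finset.sum_le_sum fun i _ => qf_moment (by omega) w⁻¹ hc i
      _ = _ := by simp
  rw [← Finset.mul_sum, Finset.sum_add_distrib, ← Finset.mul_sum, ← Finset.mul_sum,
    Finset.sum_comm]
  simp only [Finset.sum_add_distrib, ← Finset.mul_sum, Finset.sum_const, nsmul_eq_mul]
  rw [hcard, Finset.card_univ, Fintype.card_fin]
  calc _ ≤ (2 / w ^ 2) * (C * ((1 / (k : ℝ)) * (2 * (k * (2 ^ (k * n) * (2 / n)))
        + 2 * (2 ^ (k * n) * (k * (1 / (n : ℝ)))))) + 2 * (2 ^ (k * n) * (1 / n))) := by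
        gcongr
    _ = _ := by field_simp; ring

lemma markov_count {T : Type} [Fintype T] (D : T → ℝ) (hD0 : ∀ s, 0 ≤ D s) (ε B : ℝ) (hε : 0 < ε)
    (hE : ∑ s, D s ≤ B) : (Nat.card {s // ε < D s} : ℝ) ≤ B / ε := by
  classical
  rw [Nat.card_eq_fintype_card, Fintype.card_subtype]
  have hm : ((Finset.univ.filter fun s => ε < D s).card : ℝ) * ε ≤ ∑ s, D s := by
    calc _ = ∑ s ∈ Finset.univ.filter (fun s => ε < D s), ε := by simp
      _ ≤ ∑ s ∈ Finset.univ.filter (fun s => ε < D s), D s :=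
        Finset.sum_le_sum fun s hs => (Finset.mem_filter.mp hs).2.le
      _ ≤ ∑ s, D s := Finset.sum_le_sum_of_subset_of_nonneg (Finset.filter_subset _ _)
        fun s _ _ => hD0 s
  rw [le_div_iff₀ hε]
  exact hm.trans hE

/-- **Theorem 3.** With K = ⌈αN⌉ and i.i.d. uniform ±1 signatures, the
mean square discrepancy D = (1/K)Σᵢ(1/L^{(∞)}_N − [(I + σ⁻²S̃ᵀS̃)⁻¹]ᵢᵢ)² between the BP
precision estimate L^{(∞)}_N = 1 + 1/λ̂*_N and the exact posterior variances tends to 0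
in probability as N → ∞. -/
theorem bp_variance_estimate_consistency (σ α : ℝ) (hσ : 0 < σ) (hα : 0 < α)
    (lamStar : ℕ → ℝ)
    (hfix : ∀ N : ℕ, 2 ≤ N →
      1 < lamStar N ∧
      bpVarMap σ ⌈α * (N : ℝ)⌉₊ N (lamStar N) = lamStar N ∧
      (∀ l : ℝ, 0 < l → bpVarMap σ ⌈α * (N : ℝ)⌉₊ N l = l → l = lamStar N)) :
    ∀ ε : ℝ, 0 < ε →
      Filter.Tendsto
        (fun N : ℕ =>
          (Nat.card {s : Fin ⌈α * (N : ℝ)⌉₊ → Fin N → Bool //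
            ε < (1 / (⌈α * (N : ℝ)⌉₊ : ℝ)) * ∑ i : Fin ⌈α * (N : ℝ)⌉₊,
              (1 / (1 + 1 / lamHatStar σ ⌈α * (N : ℝ)⌉₊ N (lamStar N)) -
                (((1 + (σ ^ 2)⁻¹ • ((Stilde (toSign s))ᵀ * Stilde (toSign s)) :
                    Matrix (Fin ⌈α * (N : ℝ)⌉₊) (Fin ⌈α * (N : ℝ)⌉₊) ℝ))⁻¹ i i)) ^ 2} : ℝ) /
            2 ^ (⌈α * (N : ℝ)⌉₊ * N))
        Filter.atTop (nhds 0) := by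
  intro ε hε
  set C : ℝ := (2 / (σ ^ 2) ^ 2) * ((1 + 2 * (α + 1) ^ 2 / (σ ^ 2) ^ 2) * 6 + 2) with hC
  have hlim : Filter.Tendsto (fun N : ℕ => (C / ε) / (N : ℝ)) Filter.atTop (nhds 0) :=
    tendsto_const_div_atTop_nhds_zero_nat _
  refine tendsto_of_tendsto_of_tendsto_of_le_of_le' tendsto_const_nhds hlim
    (Filter.Eventually.of_forall fun N => by positivity) ?_
  filter_upwards [Filter.eventually_ge_atTop 2] with N hN
  obtain ⟨h1, h2, -⟩ := hfix N hN
  have hN' : (2 : ℝ) ≤ N := by exact_mod_cast hN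
  have hN0 : (0 : ℝ) < N := by linarith
  have hk : 0 < ⌈α * (N : ℝ)⌉₊ := Nat.ceil_pos.mpr (by positivity)
  have hβ : ((⌈α * (N : ℝ)⌉₊ : ℕ) : ℝ) / N ≤ α + 1 := by
    rw [div_le_iff₀ hN0]
    have := (Nat.ceil_lt_add_one (by positivity : 0 ≤ α * (N : ℝ))).le
    linarith
  have hE := expect_bound hk hN σ (lamStar N) (α + 1) hσ h1 h2 hβ
  rw [← hC] at hE
  have hfin := markov_count _ (fun s => mul_nonneg (by positivity)
    (Finset.sum_nonneg fun _ _ => sq_nonneg _)) ε _ hε hE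
  rw [div_le_iff₀ (by positivity)]
  refine hfin.trans (le_of_eq ?_)
  field_simp
end
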